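/- Let (Δ_1,…,Δ_d) be pairwise disjoint closed intervals and (μ_1,…,μ_d) positive compactly supported Borel measures with μ_i ∈ USz(Δ_i) for each i. Let (Δ_{n,1},…,Δ_{n,d}), n ∈ ℕ, be collections of pairwise disjoint closed intervals with Δ_{n,i} ⊆ Δ(μ_i) and Δ_{n,i} → Δ_i as n→∞ for each i. Then S_{n,i}(z) → S_i(z) as n→∞ locally uniformly in D_{Δ_i} for each i, where (S_i)_{i=1}^d and (S_{n,i})_{i=1}^d are the unique collections of conjugate-symmetric outer functions in H²(D_{Δ_i}), resp. H²(D_{Δ_{n,i}}), positive at infinity, satisfying |S_{i±}(x)|² ∏_{j≠i} S_j(x) = v_{Δ_i}(x) a.e. on Δ_i (resp. the same relation for the intervals Δ_{n,i}). -/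

import Mathlib

open MeasureTheory Set Filter Topology Polynomial

noncomputable section

/-- The arcsine distribution `dω_[a,b](x) = dx/(π √((x−a)(b−x)))` on `[a,b]`. -/
def arcsineMeasure (a b : ℝ) : Measure ℝ :=
  (volume.restrict (Set.Icc a b)).withDensity
    fun x => ENNReal.ofReal (1 / (Real.pi * Real.sqrt ((x - a) * (b - x))))

/-- The branch of `√((z−a)(z−b))` holomorphic off `[a,b]` with `w(z) = z + O(1)` at `∞`. -/
def wBranch (a b : ℝ) (z : ℂ) : ℂ :=
  (z - a) * Complex.exp ((1 / 2 : ℂ) * Complex.log ((z - b) / (z - a)))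

/-- Cauchy transform `∫ u(x)/(z−x) dω_[a,b](x)`. -/
def cauchyT (a b : ℝ) (u : ℝ → ℝ) (z : ℂ) : ℂ :=
  ∫ x, (u x : ℂ) / (z - (x : ℂ)) ∂(arcsineMeasure a b)

/-- `H_Δ u`, the harmonic extension of `u` off `Δ = [a,b]`. -/
def harmExt (a b : ℝ) (u : ℝ → ℝ) (z : ℂ) : ℝ :=
  (wBranch a b z * cauchyT a b u z).re

/-- The outer function `Ω_Δ(f,z) := exp( w_Δ(z) ∫ log f(x)/(z−x) dω_Δ(x) )`. -/
def OmegaFun (a b : ℝ) (f : ℝ → ℝ) (z : ℂ) : ℂ :=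
  Complex.exp (wBranch a b z * cauchyT a b (fun x => Real.log (f x)) z)

/-- The value of `Ω_Δ(f,·)` at infinity: `exp( ∫ log f dω_Δ )`. -/
def OmegaInf (a b : ℝ) (f : ℝ → ℝ) : ℝ :=
  Real.exp (∫ x, Real.log (f x) ∂(arcsineMeasure a b))

/-- Radon–Nikodym derivative `μ′` of `μ` with respect to Lebesgue measure. -/
def lebDeriv (μ : Measure ℝ) (x : ℝ) : ℝ := (μ.rnDeriv volume x).toReal

/-- `v_Δ(x) = π μ′(x) √((x−a)(b−x))`, the density of `μ|_Δ` w.r.t. the arcsine law. -/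
def vDens (μ : Measure ℝ) (a b : ℝ) (x : ℝ) : ℝ :=
  Real.pi * lebDeriv μ x * Real.sqrt ((x - a) * (b - x))

/-- Szegő function `G(e^h μ|_[a,b], z)`. -/
def szegoG (μ : Measure ℝ) (a b : ℝ) (h : ℝ → ℝ) (z : ℂ) : ℂ :=
  OmegaFun a b (fun x => Real.sqrt (Real.exp (h x) * vDens μ a b x)) z

/-- Szegő function `G(e^h μ|_[a,b], ·)` at infinity. -/
def szegoGInf (μ : Measure ℝ) (a b : ℝ) (h : ℝ → ℝ) : ℝ :=
  OmegaInf a b fun x => Real.sqrt (Real.exp (h x) * vDens μ a b x)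

/-- Support of a measure on `ℝ`. -/
def msupp (μ : Measure ℝ) : Set ℝ := {x | ∀ ε > 0, 0 < μ (Metric.ball x ε)}

def suppInf (μ : Measure ℝ) : ℝ := sInf (msupp μ)
def suppSup (μ : Measure ℝ) : ℝ := sSup (msupp μ)

/-- `Δ(μ)`, the convex hull of the support of `μ`. -/
def convHullSupp (μ : Measure ℝ) : Set ℝ := Set.Icc (suppInf μ) (suppSup μ)

/-- Logarithmic potential `V^ω(x) = −∫ log|x−t| dω(t)`. -/
def logPot (ω : Measure ℝ) (x : ℝ) : ℝ := -∫ t, Real.log |x - t| ∂ω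

/-- The Szegő condition `μ ∈ Sz([a,b])`. -/
def SzCond (μ : Measure ℝ) (a b : ℝ) : Prop :=
  Integrable (fun x => Real.log (lebDeriv μ x)) (arcsineMeasure a b)

/-- The increasing affine map of `[a,b]` onto `[c,d]`. -/
def affIcc (a b c d : ℝ) (x : ℝ) : ℝ := c + ((d - c) / (b - a)) * (x - a)

/-- The uniform Szegő condition `μ ∈ USz([a,b])`. -/
def USzCond (μ : Measure ℝ) (a b : ℝ) : Prop :=
  SzCond μ a b ∧
  ∀ A B : ℕ → ℝ, (∀ n, A n < B n) → (∀ n, Set.Icc (A n) (B n) ⊆ convHullSupp μ) →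
    Tendsto A atTop (𝓝 a) → Tendsto B atTop (𝓝 b) →
    (∀ᶠ n in atTop, SzCond μ (A n) (B n)) ∧
    Tendsto (fun n => ∫ x,
        |Real.log (lebDeriv μ x) - Real.log (lebDeriv μ (affIcc a b (A n) (B n) x))|
          ∂(arcsineMeasure a b)) atTop (𝓝 0)

/-- `P` is the `n`-th monic orthogonal polynomial with respect to `ν`. -/
def IsMonicOP (ν : Measure ℝ) (n : ℕ) (P : Polynomial ℝ) : Prop :=
  P.Monic ∧ P.natDegree = n ∧ ∀ k < n, ∫ x, x ^ k * P.eval x ∂ν = 0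

/-- The weighted measure `e^θ μ`. -/
def expWt (μ : Measure ℝ) (θ : ℝ → ℝ) : Measure ℝ :=
  μ.withDensity fun x => ENNReal.ofReal (Real.exp (θ x))

/-- An Angelesco system of `d` measures, with `Δ(μ_i) = [lo i, hi i]`. -/
structure Angelesco (d : ℕ) (μ : Fin d → Measure ℝ) (lo hi : Fin d → ℝ) : Prop where
  two_le : 2 ≤ d
  bounded : ∀ i, Bornology.IsBounded (msupp (μ i))
  infinite : ∀ i, (msupp (μ i)).Infinite
  lo_eq : ∀ i, lo i = suppInf (μ i)
  hi_eq : ∀ i, hi i = suppSup (μ i)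
  sep : ∀ i j, i < j → hi i < lo j

/-- The vector equilibrium measure `(ω_1,…,ω_d)` with parameter `c`,
with `supp ω_i = [A i, B i] ⊆ [lo i, hi i]` and masses `c i`. -/
structure VecEquil (d : ℕ) (lo hi : Fin d → ℝ) (c : Fin d → ℝ)
    (ω : Fin d → Measure ℝ) (A B : Fin d → ℝ) : Prop where
  endpoints : ∀ i, lo i ≤ A i ∧ A i < B i ∧ B i ≤ hi i
  supp : ∀ i, msupp (ω i) = Set.Icc (A i) (B i)
  mass : ∀ i, ω i Set.univ = ENNReal.ofReal (c i)
  equil : ∀ j, ∃ ℓ : ℝ,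
    (∀ x ∈ Set.Icc (A j) (B j), logPot (ω j) x + ∑ i, logPot (ω i) x = ℓ) ∧
    (∀ x ∈ Set.Icc (lo j) (hi j) \ Set.Icc (A j) (B j),
        ℓ < logPot (ω j) x + ∑ i, logPot (ω i) x)

/-- The vector `(S_1,…,S_d)` of conjugate-symmetric outer functions in `H²(D_{Δ_i})`,
positive at infinity, with boundary moduli `g_i` satisfying
`|S_{i±}|² ∏_{j≠i} S_j = v_i` a.e. on `Δ_i` (outer functions positive at infinity are
recovered from their boundary moduli by `S_i = Ω_{Δ_i}(g_i, ·)`). -/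
def IsSzegoVector (d : ℕ) (A B : Fin d → ℝ) (v : Fin d → ℝ → ℝ)
    (g : Fin d → ℝ → ℝ) (S : Fin d → ℂ → ℂ) : Prop :=
  (∀ i x, 0 ≤ g i x) ∧
  (∀ i, Integrable (fun x => Real.log (g i x)) (arcsineMeasure (A i) (B i))) ∧
  (∀ i, S i = fun z => OmegaFun (A i) (B i) (g i) z) ∧
  (∀ i, ∀ᵐ x ∂(arcsineMeasure (A i) (B i)),
    (g i x) ^ 2 * ∏ j ∈ Finset.univ.erase i, (S j (x : ℂ)).re = v i x)

/-- The operator `ℋ` with component `i` equal to `−(1/2) Σ_{j≠i} H_{[A j, B j]} u_j`. -/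
def calH (d : ℕ) (A B : Fin d → ℝ) (u : Fin d → ℝ → ℝ) (i : Fin d) (x : ℝ) : ℝ :=
  -(1 / 2) * ∑ j ∈ Finset.univ.erase i, harmExt (A j) (B j) (u j) (x : ℂ)

/-- sup norm over `[a,b]`. -/
def supIcc (a b : ℝ) (f : ℝ → ℝ) : ℝ := sSup ((fun x => |f x|) '' Set.Icc a b)

/-- Norm of `C(Δ⃗)`. -/
def vecCNorm (d : ℕ) (A B : Fin d → ℝ) (u : Fin d → ℝ → ℝ) : ℝ :=
  ∑ i, supIcc (A i) (B i) (u i)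

/-- Norm of `C¹(Δ⃗)`. -/
def vecC1Norm (d : ℕ) (A B : Fin d → ℝ) (u : Fin d → ℝ → ℝ) : ℝ :=
  ∑ i, (supIcc (A i) (B i) (u i) +
    supIcc (A i) (B i) (derivWithin (u i) (Set.Icc (A i) (B i))))

/-- membership in `C(Δ⃗)`. -/
def memVecC (d : ℕ) (A B : Fin d → ℝ) (u : Fin d → ℝ → ℝ) : Prop :=
  ∀ i, ContinuousOn (u i) (Set.Icc (A i) (B i))

/-- membership in `C¹(Δ⃗)`. -/
def memVecC1 (d : ℕ) (A B : Fin d → ℝ) (u : Fin d → ℝ → ℝ) : Prop :=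
  ∀ i, ContDiffOn ℝ 1 (u i) (Set.Icc (A i) (B i))

/-- `|w_Δ(x)|` for real `x`. -/
def wAbs (p q x : ℝ) : ℝ := Real.sqrt |(x - p) * (x - q)|

/-- Riemann–Liouville type fractional integral of order 1/2. -/
def fracInt (γ : ℝ) (θ : ℝ → ℝ) (x : ℝ) : ℝ :=
  (Real.sqrt Real.pi)⁻¹ * ∫ t in γ..x, θ t / Real.sqrt |x - t|


/-- The increasing affine parametrisation of `[a,b]` by `[-1,1]`. -/
def posn (a b s : ℝ) : ℝ := (a + b) / 2 + (b - a) / 2 * s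

/-- Normalised Lebesgue measure on `(0, 2π]`. -/
def cm : Measure ℝ := ENNReal.ofReal (2 * Real.pi)⁻¹ • volume.restrict (Ioc 0 (2 * Real.pi))

instance cm_prob : IsProbabilityMeasure cm := by
  constructor
  have h : (0:ℝ) < 2 * Real.pi := by positivity
  simp only [cm, Measure.smul_apply, Measure.restrict_apply MeasurableSet.univ, univ_inter,
    Real.volume_Ioc, sub_zero, smul_eq_mul]
  rw [← ENNReal.ofReal_mul (by positivity), inv_mul_cancel₀ h.ne', ENNReal.ofReal_one]

lemma circleAverage_eq_cm (f : ℂ → ℝ) (c : ℂ) (R : ℝ) :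
    Real.circleAverage f c R = ∫ t, f (circleMap c R t) ∂cm := by
  have h : (0:ℝ) < 2 * Real.pi := by positivity
  rw [Real.circleAverage_def, cm, integral_smul_measure, intervalIntegral.integral_of_le h.le,
    ENNReal.toReal_ofReal (by positivity)]

lemma circleIntegrable_iff_cm (f : ℂ → ℝ) (c : ℂ) (R : ℝ) :
    CircleIntegrable f c R ↔ Integrable (fun t => f (circleMap c R t)) cm := by
  have h : (0:ℝ) < 2 * Real.pi := by positivity
  rw [CircleIntegrable, intervalIntegrable_iff_integrableOn_Ioc_of_le h.le, cm,
    integrable_smul_measure]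
  · rfl
  · simp [Real.pi_pos]
  · exact ENNReal.ofReal_ne_top

lemma posn_sub_left (a b s : ℝ) : posn a b s - a = (b - a) / 2 * (1 + s) := by
  unfold posn; ring
lemma posn_sub_right (a b s : ℝ) : b - posn a b s = (b - a) / 2 * (1 - s) := by
  unfold posn; ring

lemma sqrt_posn (a b t : ℝ) (hab : a < b) :
    Real.sqrt ((posn a b (Real.cos t) - a) * (b - posn a b (Real.cos t)))
      = (b - a) / 2 * |Real.sin t| := by
  rw [posn_sub_left, posn_sub_right]
  have : (b - a) / 2 * (1 + Real.cos t) * ((b - a) / 2 * (1 - Real.cos t))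
      = ((b - a) / 2 * |Real.sin t|) ^ 2 := by
    rw [mul_pow, sq_abs, Real.sin_sq]; ring
  rw [this, Real.sqrt_sq]
  have : 0 < b - a := by linarith
  positivity

lemma continuous_posn_cos (a b : ℝ) : Continuous fun t => posn a b (Real.cos t) := by
  unfold posn; fun_prop

lemma arcsine_half (a b : ℝ) (hab : a < b) (s : Set ℝ) (hs : MeasurableSet s)
    (hinj : InjOn (fun t => posn a b (Real.cos t)) s)
    (him : (fun t => posn a b (Real.cos t)) '' s = Ioo a b)
    (hsin : ∀ t ∈ s, Real.sin t ≠ 0) (E : Set ℝ) (hE : MeasurableSet E) :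
    arcsineMeasure a b E
      = ENNReal.ofReal (1 / Real.pi) * volume (s ∩ (fun t => posn a b (Real.cos t)) ⁻¹' E) := by
  have hba : 0 < b - a := by linarith
  set f : ℝ → ℝ := fun t => posn a b (Real.cos t) with hf
  set g : ℝ → ENNReal := fun x =>
    ENNReal.ofReal (1 / (Real.pi * Real.sqrt ((x - a) * (b - x)))) with hg
  have hgm : Measurable g := by fun_prop
  rw [arcsineMeasure, withDensity_apply _ hE, Measure.restrict_restrict hE]
  have h1 : ∫⁻ x in E ∩ Icc a b, g x = ∫⁻ x in Ioo a b, E.indicator g x := by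
    rw [lintegral_indicator hE, Measure.restrict_restrict hE]
    apply setLIntegral_congr
    exact (ae_eq_refl E).inter Ioo_ae_eq_Icc.symm
  rw [h1, ← him, lintegral_image_eq_lintegral_abs_deriv_mul hs
    (f' := fun t => (b - a) / 2 * (-Real.sin t)) ?_ hinj]
  · have h2 : ∫⁻ x in s, ENNReal.ofReal |(b - a) / 2 * -Real.sin x| * E.indicator g (f x)
        = ∫⁻ x in s, (f ⁻¹' E).indicator (fun _ => ENNReal.ofReal (1 / Real.pi)) x := by
      apply setLIntegral_congr_fun hs
      intro t ht
      by_cases hE' : f t ∈ E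
      · have h3 : t ∈ f ⁻¹' E := hE'
        simp only [indicator_of_mem hE', indicator_of_mem h3, hg]
        rw [← ENNReal.ofReal_mul (abs_nonneg _)]
        congr 1
        rw [hf]
        simp only
        rw [sqrt_posn a b t hab, abs_mul, abs_neg, abs_of_pos (by positivity)]
        have := abs_pos.mpr (hsin t ht)
        field_simp
      · have h3 : t ∉ f ⁻¹' E := hE'
        simp [indicator_of_notMem hE', indicator_of_notMem h3]
    rw [h2, lintegral_indicator ((continuous_posn_cos a b).measurable hE),
      Measure.restrict_restrict ((continuous_posn_cos a b).measurable hE), lintegral_const,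
      Measure.restrict_apply MeasurableSet.univ, univ_inter, inter_comm]
  · intro t _
    have : HasDerivAt f ((b - a) / 2 * (-Real.sin t)) t := by
      simpa [hf, posn] using ((Real.hasDerivAt_cos t).const_mul ((b - a) / 2)).const_add ((a + b) / 2)
    exact this.hasDerivWithinAt

lemma posn_cos_image {a b : ℝ} (hab : a < b) {s : Set ℝ} (h : Real.cos '' s = Ioo (-1) 1) :
    (fun t => posn a b (Real.cos t)) '' s = Ioo a b := by
  have : (fun t => posn a b (Real.cos t)) '' s = (posn a b) '' (Real.cos '' s) := by
    rw [image_image]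
  rw [this, h]
  have hba : 0 < b - a := by linarith
  ext x
  constructor
  · rintro ⟨s, ⟨h1, h2⟩, rfl⟩
    constructor
    · have := posn_sub_left a b s
      nlinarith
    · have := posn_sub_right a b s
      nlinarith
  · rintro ⟨h1, h2⟩
    refine ⟨(2 * x - a - b) / (b - a), ⟨?_, ?_⟩, ?_⟩
    · rw [lt_div_iff₀ hba]; linarith
    · rw [div_lt_iff₀ hba]; linarith
    · unfold posn; field_simp; ring

lemma cos_image_Ioo : Real.cos '' Ioo 0 Real.pi = Ioo (-1) 1 := by
  ext x
  constructor
  · rintro ⟨t, ⟨h1, h2⟩, rfl⟩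
    constructor
    · rw [← Real.cos_pi]
      exact Real.cos_lt_cos_of_nonneg_of_le_pi h1.le le_rfl h2
    · rw [← Real.cos_zero]
      exact Real.cos_lt_cos_of_nonneg_of_le_pi le_rfl h2.le h1
  · rintro ⟨h1, h2⟩
    refine ⟨Real.arccos x, ⟨Real.arccos_pos.mpr h2, ?_⟩, Real.cos_arccos h1.le h2.le⟩
    exact Real.arccos_lt_pi.mpr h1

lemma map_posn_cos (a b : ℝ) (hab : a < b) :
    cm.map (fun t => posn a b (Real.cos t)) = arcsineMeasure a b := by
  have hba : 0 < b - a := by linarith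
  have hpi := Real.pi_pos
  ext E hE
  have hm := (continuous_posn_cos a b).measurable
  rw [Measure.map_apply hm hE]
  have hinj : ∀ s : Set ℝ, InjOn Real.cos s → InjOn (fun t => posn a b (Real.cos t)) s := by
    intro s hs x hx y hy hxy
    apply hs hx hy
    have h1 : (b - a) / 2 * Real.cos x = (b - a) / 2 * Real.cos y := by
      have := hxy
      simp only [posn] at this
      linarith
    exact mul_left_cancel₀ (by positivity) h1
  have hA := arcsine_half a b hab (Ioo 0 Real.pi) measurableSet_Ioo
    (hinj _ (Real.injOn_cos.mono Ioo_subset_Icc_self)) (posn_cos_image hab cos_image_Ioo)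
    (fun t ht => (Real.sin_pos_of_pos_of_lt_pi ht.1 ht.2).ne') E hE
  have hcos2 : ∀ t, Real.cos (2 * Real.pi - t) = Real.cos t := fun t => by
    rw [Real.cos_two_pi_sub]
  have him2 : Real.cos '' Ioo Real.pi (2 * Real.pi) = Ioo (-1) 1 := by
    rw [← cos_image_Ioo]
    ext x
    constructor
    · rintro ⟨t, ⟨h1, h2⟩, rfl⟩
      exact ⟨2 * Real.pi - t, ⟨by linarith, by linarith⟩, hcos2 t⟩
    · rintro ⟨t, ⟨h1, h2⟩, rfl⟩
      exact ⟨2 * Real.pi - t, ⟨by linarith, by linarith⟩, hcos2 t⟩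
  have hB := arcsine_half a b hab (Ioo Real.pi (2 * Real.pi)) measurableSet_Ioo
    (hinj _ (by
      intro x hx y hy hxy
      rw [← hcos2 x, ← hcos2 y] at hxy
      have := Real.injOn_cos (x₁ := 2 * Real.pi - x) (x₂ := 2 * Real.pi - y)
        ⟨by linarith [hx.2], by linarith [hx.1]⟩ ⟨by linarith [hy.2], by linarith [hy.1]⟩ hxy
      linarith)) (posn_cos_image hab him2)
    (fun t ht => by
      have : Real.sin (2 * Real.pi - t) = - Real.sin t := Real.sin_two_pi_sub t
      have h2 := Real.sin_pos_of_pos_of_lt_pi (x := 2 * Real.pi - t) (by linarith [ht.2])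
        (by linarith [ht.1])
      intro h3
      rw [this, h3] at h2
      simp at h2) E hE
  set f : ℝ → ℝ := fun t => posn a b (Real.cos t)
  have hvol : volume (f ⁻¹' E ∩ Ioc 0 (2 * Real.pi))
      = volume (Ioo 0 Real.pi ∩ f ⁻¹' E) + volume (Ioo Real.pi (2 * Real.pi) ∩ f ⁻¹' E) := by
    rw [← measure_union]
    · have h1 : Ioc 0 (2 * Real.pi) = Ioc 0 Real.pi ∪ Ioc Real.pi (2 * Real.pi) :=
        (Ioc_union_Ioc_eq_Ioc hpi.le (by linarith)).symm
      rw [h1, ← union_inter_distrib_right, inter_comm]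
      apply measure_congr
      exact (Ioo_ae_eq_Ioc.symm.union Ioo_ae_eq_Ioc.symm).inter (ae_eq_refl _)
    · apply Set.disjoint_left.mpr
      rintro x ⟨h1, _⟩ ⟨h2, _⟩
      exact absurd h1.2 (not_lt.mpr h2.1.le)
    · exact measurableSet_Ioo.inter (hm hE)
  rw [cm, Measure.smul_apply, Measure.restrict_apply (hm hE), hvol, smul_eq_mul, mul_add]
  have h5 : ENNReal.ofReal (2 * Real.pi)⁻¹ = 2⁻¹ * ENNReal.ofReal (1 / Real.pi) := by
    rw [mul_inv, ENNReal.ofReal_mul (by norm_num), one_div, ENNReal.ofReal_inv_of_pos (by norm_num)]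
    simp
  rw [h5, mul_assoc, mul_assoc, ← hA, ← hB, ← add_mul, ENNReal.inv_two_add_inv_two, one_mul]

lemma integral_arcsine {G : Type*} [NormedAddCommGroup G] [NormedSpace ℝ G] (a b : ℝ) (hab : a < b)
    {f : ℝ → G} (hf : AEStronglyMeasurable f (arcsineMeasure a b)) :
    ∫ x, f x ∂(arcsineMeasure a b) = ∫ t, f (posn a b (Real.cos t)) ∂cm := by
  rw [← map_posn_cos a b hab] at hf ⊢
  rw [integral_map (continuous_posn_cos a b).measurable.aemeasurable hf]

lemma integrable_arcsine {G : Type*} [NormedAddCommGroup G] [NormedSpace ℝ G] (a b : ℝ) (hab : a < b)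
    {f : ℝ → G} (hf : AEStronglyMeasurable f (arcsineMeasure a b)) :
    Integrable f (arcsineMeasure a b) ↔ Integrable (fun t => f (posn a b (Real.cos t))) cm := by
  rw [← map_posn_cos a b hab] at hf ⊢
  rw [integrable_map_measure hf (continuous_posn_cos a b).measurable.aemeasurable]
  rfl

lemma ae_arcsine (a b : ℝ) (hab : a < b) {p : ℝ → Prop}
    (hp : ∀ᵐ x ∂(arcsineMeasure a b), p x) : ∀ᵐ t ∂cm, p (posn a b (Real.cos t)) := by
  rw [← map_posn_cos a b hab] at hp
  exact ae_of_ae_map (continuous_posn_cos a b).measurable.aemeasurable hp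

/-- The point `e^{it}` of the unit circle. -/
def ee (t : ℝ) : ℂ := circleMap 0 1 t

lemma ee_re (t : ℝ) : (ee t).re = Real.cos t := by
  simp [ee, circleMap, Complex.exp_ofReal_mul_I_re]
lemma ee_im (t : ℝ) : (ee t).im = Real.sin t := by
  simp [ee, circleMap, Complex.exp_ofReal_mul_I_im]
lemma norm_ee (t : ℝ) : ‖ee t‖ = 1 := by simp [ee]
lemma continuous_ee : Continuous ee := by unfold ee; exact continuous_circleMap 0 1

lemma norm_sq_eq (z : ℂ) : ‖z‖ ^ 2 = z.re ^ 2 + z.im ^ 2 := by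
  rw [← Complex.normSq_eq_norm_sq, Complex.normSq_apply]; ring

/-- Poisson kernel of the unit disk. -/
def pk (ρ : ℂ) (t : ℝ) : ℝ := (1 - ‖ρ‖ ^ 2) / ‖ee t - ρ‖ ^ 2

lemma pk_eq (ρ : ℂ) (t : ℝ) : pk ρ t = (Complex.re ∘ herglotzRieszKernel 0 ρ) (circleMap 0 1 t) := by
  rw [← poissonKernel_eq_re_herglotzRieszKernel, poissonKernel_def]
  simp [pk, ee]

lemma ee_sub_ne {ρ : ℂ} (hρ : ‖ρ‖ < 1) (t : ℝ) : ee t - ρ ≠ 0 := by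
  intro h
  have := norm_ee t
  rw [sub_eq_zero] at h
  rw [h] at this
  linarith

lemma continuous_pk {ρ : ℂ} (hρ : ‖ρ‖ < 1) : Continuous (pk ρ) := by
  unfold pk
  have := continuous_ee
  refine Continuous.div (by fun_prop) (by fun_prop) fun t => ?_
  have := norm_pos_iff.mpr (ee_sub_ne hρ t)
  positivity

lemma pk_lower {ρ : ℂ} (hρ : ‖ρ‖ < 1) (t : ℝ) : (1 - ‖ρ‖) / 2 ≤ pk ρ t := by
  have h0 := norm_pos_iff.mpr (ee_sub_ne hρ t)
  have h1 : ‖ee t - ρ‖ ≤ 1 + ‖ρ‖ := by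
    have := norm_sub_le (ee t) ρ
    rwa [norm_ee] at this
  have h2 := norm_nonneg ρ
  unfold pk
  rw [le_div_iff₀ (by positivity)]
  have : ‖ee t - ρ‖ ^ 2 ≤ (1 + ‖ρ‖) ^ 2 := by gcongr
  nlinarith [mul_le_mul_of_nonneg_left this (by linarith : 0 ≤ (1 - ‖ρ‖) / 2),
    mul_nonneg (mul_nonneg (by linarith : 0 ≤ 1 - ‖ρ‖) (by linarith : 0 ≤ 1 + ‖ρ‖)) (by linarith : 0 ≤ 1 - ‖ρ‖)]

lemma integral_pk_log {ρ : ℂ} (hρ : ‖ρ‖ < 1) (s : ℝ) :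
    ∫ t, pk ρ t * Real.log ‖ee t - ee s‖ ∂cm = Real.log ‖ρ - ee s‖ := by
  have := circleAverage_re_herglotzRieszKernel_mul_log₀ (w := ρ) (ρ := ee s) (R := 1)
    (by simp [norm_ee]) (by simpa using hρ)
  rw [← this, circleAverage_eq_cm]
  refine integral_congr_ae (Eventually.of_forall fun t => ?_)
  simp only [Pi.smul_apply', smul_eq_mul]
  rw [← pk_eq]
  rfl

lemma integral_pk {ρ : ℂ} (hρ : ‖ρ‖ < 1) : ∫ t, pk ρ t ∂cm = 1 := by
  have := InnerProductSpace.HarmonicOnNhd.circleAverage_re_herglotzRieszKernel_smul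
    (f := fun _ => (1:ℝ)) (c := 0) (R := 1) (w := ρ)
    (fun x _ => InnerProductSpace.harmonicAt_const _) (by simpa using hρ)
  rw [circleAverage_eq_cm] at this
  rw [← this]
  refine integral_congr_ae (Eventually.of_forall fun t => ?_)
  simp only [Pi.smul_apply', smul_eq_mul, mul_one]
  rw [← pk_eq]

/-- The real branch of `√((y-a)(y-b))`. -/
def wR (a b y : ℝ) : ℝ := (y - a) * Real.sqrt ((y - b) / (y - a))

lemma quot_pos {a b y : ℝ} (hab : a < b) (hy : y ∉ Icc a b) : 0 < (y - b) / (y - a) := by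
  by_cases h : a ≤ y
  · have : b < y := by
      by_contra h'
      exact hy ⟨h, not_lt.mp h'⟩
    exact div_pos (by linarith) (by linarith)
  · exact div_pos_of_neg_of_neg (by linarith) (by linarith)

lemma wBranch_real {a b y : ℝ} (hab : a < b) (hy : y ∉ Icc a b) :
    wBranch a b (y : ℂ) = (wR a b y : ℂ) := by
  have hq := quot_pos hab hy
  unfold wBranch wR
  have h1 : ((y : ℂ) - b) / (y - a) = (((y - b) / (y - a) : ℝ) : ℂ) := by push_cast; rfl
  rw [h1, ← Complex.ofReal_log hq.le]
  have h2 : (1 / 2 : ℂ) * (Real.log ((y - b) / (y - a)) : ℂ)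
      = ((Real.log ((y - b) / (y - a)) / 2 : ℝ) : ℂ) := by push_cast; ring
  rw [h2, ← Complex.ofReal_exp, ← Real.log_sqrt hq.le, Real.exp_log (Real.sqrt_pos.mpr hq)]
  push_cast; rfl

lemma wR_sq {a b y : ℝ} (hab : a < b) (hy : y ∉ Icc a b) :
    wR a b y ^ 2 = (y - a) * (y - b) := by
  have hq := quot_pos hab hy
  have : y - a ≠ 0 := by
    intro h
    rw [h] at hq
    simp at hq
  rw [wR, mul_pow, Real.sq_sqrt hq.le]
  field_simp

/-- The image of `y` under the conformal map of the exterior of `[a,b]`. -/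
def rhoR (a b y : ℝ) : ℝ := (y - (a + b) / 2 - wR a b y) / ((b - a) / 2)

lemma rhoR_facts {a b y : ℝ} (hab : a < b) (hy : y ∉ Icc a b) :
    rhoR a b y ≠ 0 ∧ |rhoR a b y| < 1 ∧
    y = (a + b) / 2 + (b - a) / 2 * ((rhoR a b y + (rhoR a b y)⁻¹) / 2) ∧
    wR a b y = (b - a) / 2 * (((rhoR a b y)⁻¹ - rhoR a b y) / 2) := by
  have hq := quot_pos hab hy
  have hs := wR_sq hab hy
  have hr : 0 < (b - a) / 2 := by linarith
  have hba : b - a ≠ 0 := by linarith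
  have hprod : rhoR a b y * ((y - (a + b) / 2 + wR a b y) / ((b - a) / 2)) = 1 := by
    unfold rhoR
    field_simp
    nlinarith
  have hne : rhoR a b y ≠ 0 := left_ne_zero_of_mul_eq_one hprod
  have hinv : (rhoR a b y)⁻¹ = (y - (a + b) / 2 + wR a b y) / ((b - a) / 2) :=
    (eq_inv_of_mul_eq_one_right hprod).symm
  refine ⟨hne, ?_, ?_, ?_⟩
  · have hpos : 0 < (y - (a + b) / 2) * wR a b y := by
      unfold wR
      rw [← mul_assoc]
      refine mul_pos ?_ (Real.sqrt_pos.mpr hq)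
      by_cases h : a ≤ y
      · have : b < y := by
          by_contra h'
          exact hy ⟨h, not_lt.mp h'⟩
        exact mul_pos (by linarith) (by linarith)
      · exact mul_pos_of_neg_of_neg (by linarith) (by linarith)
    have h2 : |rhoR a b y| < |(rhoR a b y)⁻¹| := by
      rw [← sq_lt_sq, hinv]
      unfold rhoR
      rw [div_pow _ ((b - a) / 2), div_pow _ ((b - a) / 2)]
      refine div_lt_div_of_pos_right ?_ (pow_pos hr 2)
      nlinarith
    by_contra h3
    push Not at h3
    rw [abs_inv] at h2
    have : |rhoR a b y|⁻¹ ≤ 1 := inv_le_one_of_one_le₀ h3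
    linarith
  · rw [hinv]
    unfold rhoR
    field_simp
    ring
  · rw [hinv]
    unfold rhoR
    field_simp
    ring

lemma norm_ee_sub_real (τ ρ : ℝ) : ‖ee τ - (ρ : ℂ)‖ ^ 2 = 1 - 2 * ρ * Real.cos τ + ρ ^ 2 := by
  rw [norm_sq_eq]
  simp only [Complex.sub_re, Complex.sub_im, ee_re, ee_im, Complex.ofReal_re, Complex.ofReal_im]
  have := Real.sin_sq_add_cos_sq τ
  nlinarith

lemma sub_posn_eq {a b y : ℝ} (hab : a < b) (hy : y ∉ Icc a b) (τ : ℝ) :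
    y - posn a b (Real.cos τ)
      = (b - a) / 2 / (2 * rhoR a b y) * ‖ee τ - (rhoR a b y : ℂ)‖ ^ 2 := by
  obtain ⟨h1, h2, h3, h4⟩ := rhoR_facts hab hy
  rw [norm_ee_sub_real]
  conv_lhs => rw [h3]
  unfold posn
  field_simp
  ring

/-- The Poisson-type kernel of the exterior of `[a,b]`. -/
def PK (a b y x : ℝ) : ℝ := wR a b y / (y - x)

lemma PK_eq_pk {a b y : ℝ} (hab : a < b) (hy : y ∉ Icc a b) (τ : ℝ) :
    PK a b y (posn a b (Real.cos τ)) = pk (rhoR a b y : ℂ) τ := by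
  obtain ⟨h1, h2, h3, h4⟩ := rhoR_facts hab hy
  have hρ : ‖(rhoR a b y : ℂ)‖ < 1 := by rwa [Complex.norm_real]
  have h0 := norm_pos_iff.mpr (ee_sub_ne hρ τ)
  have hr : 0 < (b - a) / 2 := by linarith
  have hba : b - a ≠ 0 := by linarith
  unfold PK pk
  rw [sub_posn_eq hab hy, h4, Complex.norm_real, Real.norm_eq_abs, sq_abs]
  field_simp

lemma log_sub_posn {a b y : ℝ} (hab : a < b) (hy : y ∉ Icc a b) (τ : ℝ) :
    Real.log |y - posn a b (Real.cos τ)|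
      = Real.log ((b - a) / 2 / (2 * rhoR a b y)) + 2 * Real.log ‖ee τ - (rhoR a b y : ℂ)‖ := by
  obtain ⟨h1, h2, h3, h4⟩ := rhoR_facts hab hy
  have hρ : ‖(rhoR a b y : ℂ)‖ < 1 := by rwa [Complex.norm_real]
  have h0 := norm_pos_iff.mpr (ee_sub_ne hρ τ)
  have hr : 0 < (b - a) / 2 := by linarith
  have hba : b - a ≠ 0 := by linarith
  rw [sub_posn_eq hab hy, Real.log_abs, Real.log_mul (by positivity) (by positivity), Real.log_pow]
  norm_num

lemma posn_mem {a b s : ℝ} (hab : a < b) (hs : s ∈ Icc (-1:ℝ) 1) : posn a b s ∈ Icc a b := by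
  have h1 := posn_sub_left a b s
  have h2 := posn_sub_right a b s
  constructor
  · nlinarith [hs.1]
  · nlinarith [hs.2]

lemma cos_mem (t : ℝ) : Real.cos t ∈ Icc (-1:ℝ) 1 := ⟨Real.neg_one_le_cos t, Real.cos_le_one t⟩

lemma mem_posn {a b x : ℝ} (hab : a < b) (hx : x ∈ Icc a b) :
    ∃ t ∈ Icc 0 Real.pi, x = posn a b (Real.cos t) := by
  have hba : 0 < b - a := by linarith
  refine ⟨Real.arccos ((2 * x - a - b) / (b - a)), ⟨Real.arccos_nonneg _, Real.arccos_le_pi _⟩, ?_⟩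
  rw [Real.cos_arccos]
  · unfold posn; field_simp; ring
  · rw [le_div_iff₀ hba]; linarith [hx.1]
  · rw [div_le_iff₀ hba]; linarith [hx.2]

lemma cm_null_of_countable {s : Set ℝ} (hs : s.Countable) : cm s = 0 := by
  have h : (volume.restrict (Ioc 0 (2 * Real.pi))) s = 0 :=
    le_antisymm ((Measure.restrict_apply_le _ _).trans (hs.measure_zero volume).le) (zero_le)
  simp [cm, h]

lemma ae_ee_ne (a : ℂ) : ∀ᵐ t ∂cm, ee t ≠ a := by
  have h : (circleMap 0 1 ⁻¹' {a}).Countable :=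
    Set.Countable.preimage_circleMap (Set.countable_singleton a) 0 one_ne_zero
  rw [ae_iff]
  refine cm_null_of_countable (h.mono fun t ht => ?_)
  simpa [ee] using ht

lemma integrable_log_ee (a : ℂ) : Integrable (fun t => Real.log ‖ee t - a‖) cm :=
  (circleIntegrable_iff_cm _ _ _).mp (circleIntegrable_log_norm_sub_const (a := a) (c := 0) 1)

lemma integral_log_ee (a : ℂ) : ∫ t, Real.log ‖ee t - a‖ ∂cm = Real.posLog ‖a‖ := by
  rw [← circleAverage_log_norm_sub_const_eq_posLog, circleAverage_eq_cm]
  rfl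

lemma joukowski (z : ℂ) : ∃ ρ : ℂ, ρ ≠ 0 ∧ ‖ρ‖ ≤ 1 ∧ z = (ρ + ρ⁻¹) / 2 := by
  obtain ⟨w, hw⟩ := IsAlgClosed.exists_pow_nat_eq (z ^ 2 - 1) (n := 2) (by norm_num)
  have hp : (z - w) * (z + w) = 1 := by linear_combination -hw
  have h1 : z - w ≠ 0 := left_ne_zero_of_mul_eq_one hp
  have h2 : z + w ≠ 0 := right_ne_zero_of_mul_eq_one hp
  have hi : (z - w)⁻¹ = z + w := (eq_inv_of_mul_eq_one_right hp).symm
  have hi2 : (z + w)⁻¹ = z - w := by rw [← hi, inv_inv]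
  rcases le_total ‖z - w‖ 1 with h | h
  · exact ⟨z - w, h1, h, by rw [hi]; ring⟩
  · refine ⟨z + w, h2, ?_, by rw [hi2]; ring⟩
    rw [← hi, norm_inv]
    exact inv_le_one_of_one_le₀ h

lemma ee_mul_neg (t : ℝ) : ee t * ee (-t) = 1 := by
  simp [ee, circleMap, ← Complex.exp_add]

lemma ee_add_neg (t : ℝ) : ee t + ee (-t) = 2 * (Real.cos t : ℂ) := by
  apply Complex.ext
  · rw [← Complex.ofReal_ofNat, ← Complex.ofReal_mul, Complex.ofReal_re]
    simp only [Complex.add_re, ee_re, Real.cos_neg]; ring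
  · rw [← Complex.ofReal_ofNat, ← Complex.ofReal_mul, Complex.ofReal_im]
    simp only [Complex.add_im, ee_im, Real.sin_neg]; ring

lemma ee_neg_conj (t : ℝ) : ee (-t) = (starRingEnd ℂ) (ee t) := by
  apply Complex.ext
  · simp [ee_re]
  · simp [ee_im]

lemma jouk_factor {ρ z : ℂ} (h0 : ρ ≠ 0) (hz : z = (ρ + ρ⁻¹) / 2) (t : ℝ) :
    2 * ‖ρ‖ * ‖z - (Real.cos t : ℂ)‖ = ‖ee t - ρ‖ * ‖ee t - (starRingEnd ℂ) ρ‖ := by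
  have h1 : ‖ee t - (starRingEnd ℂ) ρ‖ = ‖ee (-t) - ρ‖ := by
    rw [ee_neg_conj, ← Complex.norm_conj]; simp
  rw [h1, ← norm_mul]
  have h2 : (ee t - ρ) * (ee (-t) - ρ) = 2 * ρ * (z - (Real.cos t : ℂ)) := by
    have e1 := ee_mul_neg t
    have e2 := ee_add_neg t
    rw [hz]
    have : 2 * ρ * ((ρ + ρ⁻¹) / 2 - (Real.cos t : ℂ)) = ρ ^ 2 + 1 - ρ * (2 * (Real.cos t : ℂ)) := by
      field_simp
    rw [this, ← e2]
    linear_combination e1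
  rw [h2]; simp

lemma jouk_log {ρ z : ℂ} (h0 : ρ ≠ 0) (hz : z = (ρ + ρ⁻¹) / 2) :
    (fun t => Real.log ‖z - (Real.cos t : ℂ)‖) =ᵐ[cm]
    fun t => Real.log ‖ee t - ρ‖ + Real.log ‖ee t - (starRingEnd ℂ) ρ‖ - Real.log (2 * ‖ρ‖) := by
  filter_upwards [ae_ee_ne ρ, ae_ee_ne ((starRingEnd ℂ) ρ)] with t h1 h2
  have h1' : 0 < ‖ee t - ρ‖ := norm_pos_iff.mpr (sub_ne_zero.mpr h1)
  have h2' : 0 < ‖ee t - (starRingEnd ℂ) ρ‖ := norm_pos_iff.mpr (sub_ne_zero.mpr h2)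
  have h0' : 0 < ‖ρ‖ := norm_pos_iff.mpr h0
  have hf := jouk_factor h0 hz t
  have h3 : ‖z - (Real.cos t : ℂ)‖ = ‖ee t - ρ‖ * ‖ee t - (starRingEnd ℂ) ρ‖ / (2 * ‖ρ‖) := by
    rw [eq_div_iff (by positivity), ← hf]; ring
  rw [h3, Real.log_div (by positivity) (by positivity), Real.log_mul h1'.ne' h2'.ne']

lemma integrable_log_cos (z : ℂ) : Integrable (fun t => Real.log ‖z - (Real.cos t : ℂ)‖) cm := by
  obtain ⟨ρ, h0, h1, hz⟩ := joukowski z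
  exact (((integrable_log_ee ρ).add (integrable_log_ee _)).sub (integrable_const _)).congr
    (jouk_log h0 hz).symm

lemma ae_cos_ne (z : ℂ) : ∀ᵐ t ∂cm, z - (Real.cos t : ℂ) ≠ 0 := by
  obtain ⟨ρ, h0, h1, hz⟩ := joukowski z
  filter_upwards [ae_ee_ne ρ, ae_ee_ne ((starRingEnd ℂ) ρ)] with t h1 h2 h3
  have h1' : 0 < ‖ee t - ρ‖ := norm_pos_iff.mpr (sub_ne_zero.mpr h1)
  have h2' : 0 < ‖ee t - (starRingEnd ℂ) ρ‖ := norm_pos_iff.mpr (sub_ne_zero.mpr h2)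
  have hf := jouk_factor h0 hz t
  rw [h3, norm_zero, mul_zero] at hf
  have := mul_pos h1' h2'
  linarith

lemma integral_log_cos (z : ℂ) : ∫ t, Real.log ‖z - (Real.cos t : ℂ)‖ ∂cm
    = Real.log ((‖z - 1‖ + ‖z + 1‖ + Real.sqrt ((‖z - 1‖ + ‖z + 1‖) ^ 2 - 4)) / 4) := by
  obtain ⟨ρ, h0, h1, hz⟩ := joukowski z
  have h0' : 0 < ‖ρ‖ := norm_pos_iff.mpr h0
  have hadd : Integrable (fun t => Real.log ‖ee t - ρ‖ + Real.log ‖ee t - (starRingEnd ℂ) ρ‖) cm :=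
    (integrable_log_ee ρ).add (integrable_log_ee _)
  rw [integral_congr_ae (jouk_log h0 hz), integral_sub hadd
    (integrable_const _), integral_add (integrable_log_ee ρ) (integrable_log_ee _),
    integral_log_ee, integral_log_ee, integral_const, Complex.norm_conj]
  have h2 : Real.posLog ‖ρ‖ = 0 := by
    rw [Real.posLog_eq_zero_iff, abs_of_pos h0']; exact h1
  have hs : ‖z - 1‖ + ‖z + 1‖ = ‖ρ‖ + ‖ρ‖⁻¹ := by
    have e1 : z - 1 = (ρ - 1) ^ 2 / (2 * ρ) := by rw [hz]; field_simp; ring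
    have e2 : z + 1 = (ρ + 1) ^ 2 / (2 * ρ) := by rw [hz]; field_simp; ring
    rw [e1, e2, norm_div, norm_div, norm_pow, norm_pow, norm_mul, Complex.norm_ofNat,
      norm_sq_eq, norm_sq_eq]
    have e3 := norm_sq_eq ρ
    simp only [Complex.sub_re, Complex.sub_im, Complex.add_re, Complex.add_im, Complex.one_re,
      Complex.one_im]
    field_simp
    rw [e3]; ring
  have hsq : (‖ρ‖ + ‖ρ‖⁻¹) ^ 2 - 4 = (‖ρ‖⁻¹ - ‖ρ‖) ^ 2 := by field_simp; ring
  rw [hs, hsq, Real.sqrt_sq, h2]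
  · simp only [probReal_univ, smul_eq_mul]
    have : (‖ρ‖ + ‖ρ‖⁻¹ + (‖ρ‖⁻¹ - ‖ρ‖)) / 4 = (2 * ‖ρ‖)⁻¹ := by field_simp; ring
    rw [this, Real.log_inv]; ring
  · have := one_le_inv₀ h0' |>.mpr h1
    linarith

lemma two_le_norms (z : ℂ) : 2 ≤ ‖z - 1‖ + ‖z + 1‖ := by
  have := norm_sub_le (z + 1) (z - 1)
  have h : z + 1 - (z - 1) = 2 := by ring
  rw [h] at this
  simp at this
  linarith

lemma continuous_integral_log_cos : Continuous fun z : ℂ => ∫ t, Real.log ‖z - (Real.cos t : ℂ)‖ ∂cm := by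
  simp only [integral_log_cos]
  refine Continuous.log (by fun_prop) fun z => ?_
  have := two_le_norms z
  positivity

/-- A Scheffé-type lemma. -/
lemma scheffe {Ω ι : Type*} [MeasurableSpace Ω] {m : Measure Ω} [IsFiniteMeasure m] {l : Filter ι}
    [l.IsCountablyGenerated] {F : ι → Ω → ℝ} {f : Ω → ℝ} (C : ℝ) (hF : ∀ i, Integrable (F i) m)
    (hf : Integrable f m) (hb : ∀ᶠ i in l, ∀ᵐ x ∂m, F i x ≤ C)
    (hb' : ∀ᵐ x ∂m, f x ≤ C)
    (hlim : ∀ᵐ x ∂m, Tendsto (fun i => F i x) l (𝓝 (f x)))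
    (hIntg : Tendsto (fun i => ∫ x, F i x ∂m) l (𝓝 (∫ x, f x ∂m))) :
    Tendsto (fun i => ∫ x, |F i x - f x| ∂m) l (𝓝 0) := by
  have h1 : Tendsto (fun i => ∫ x, max (F i x - f x) 0 ∂m) l (𝓝 (∫ x, (0:ℝ) ∂m)) := by
    refine tendsto_integral_filter_of_dominated_convergence (fun x => C - f x) ?_ ?_ ?_ ?_
    · exact Eventually.of_forall fun i => (((hF i).sub hf).pos_part).aestronglyMeasurable
    · filter_upwards [hb] with i hi
      filter_upwards [hi, hb'] with x h1 h2
      rw [Real.norm_eq_abs, abs_of_nonneg (le_max_right _ _)]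
      exact max_le (by linarith) (by linarith)
    · exact (integrable_const C).sub hf
    · filter_upwards [hlim] with x hx
      have : Tendsto (fun i => max (F i x - f x) 0) l (𝓝 (max (f x - f x) 0)) :=
        (hx.sub_const _).max tendsto_const_nhds
      simpa using this
  simp only [integral_zero] at h1
  have h2 : ∀ i, ∫ x, |F i x - f x| ∂m
      = 2 * ∫ x, max (F i x - f x) 0 ∂m - (∫ x, F i x ∂m - ∫ x, f x ∂m) := by
    intro i
    rw [← integral_const_mul, ← integral_sub (hF i) hf, ← integral_sub]
    · refine integral_congr_ae (Eventually.of_forall fun x => ?_)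
      simp only
      rcases le_total 0 (F i x - f x) with h | h
      · rw [abs_of_nonneg h, max_eq_left h]; ring
      · rw [abs_of_nonpos h, max_eq_right h]; ring
    · exact ((hF i).sub hf).pos_part.const_mul 2
    · exact (hF i).sub hf
  simp only [h2]
  have := (h1.const_mul 2).sub (hIntg.sub_const (∫ x, f x ∂m))
  simpa using this

/-- logarithmic kernel -/
def lk (a b : ℝ) (z : ℂ) (t : ℝ) : ℝ := Real.log ‖z - (posn a b (Real.cos t) : ℂ)‖

lemma lk_scale {a b : ℝ} (hab : a < b) (z : ℂ) (t : ℝ) :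
    z - (posn a b (Real.cos t) : ℂ)
      = ((b - a) / 2 : ℝ) * ((z - ((a + b) / 2 : ℝ)) / ((b - a) / 2 : ℝ) - (Real.cos t : ℂ)) := by
  have h : (((b - a) / 2 : ℝ) : ℂ) ≠ 0 := by
    exact_mod_cast (by linarith : (b - a) / 2 ≠ 0)
  rw [mul_sub, mul_div_cancel₀ _ h]
  unfold posn
  push_cast; ring

lemma lk_ae {a b : ℝ} (hab : a < b) (z : ℂ) :
    lk a b z =ᵐ[cm] fun t => Real.log ((b - a) / 2)
      + Real.log ‖(z - ((a + b) / 2 : ℝ)) / ((b - a) / 2 : ℝ) - (Real.cos t : ℂ)‖ := by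
  have hr : 0 < (b - a) / 2 := by linarith
  filter_upwards [ae_cos_ne ((z - ((a + b) / 2 : ℝ)) / ((b - a) / 2 : ℝ))] with t ht
  unfold lk
  rw [lk_scale hab, norm_mul, Real.log_mul, Complex.norm_real, Real.norm_of_nonneg hr.le]
  · rw [Complex.norm_real, Real.norm_of_nonneg hr.le]; exact hr.ne'
  · exact norm_ne_zero_iff.mpr ht

lemma lk_ae_ne {a b : ℝ} (hab : a < b) (z : ℂ) : ∀ᵐ t ∂cm, z - (posn a b (Real.cos t) : ℂ) ≠ 0 := by
  have hr : 0 < (b - a) / 2 := by linarith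
  filter_upwards [ae_cos_ne ((z - ((a + b) / 2 : ℝ)) / ((b - a) / 2 : ℝ))] with t ht
  rw [lk_scale hab]
  exact mul_ne_zero (by exact_mod_cast hr.ne') ht

lemma lk_integrable {a b : ℝ} (hab : a < b) (z : ℂ) : Integrable (lk a b z) cm :=
  ((integrable_const _).add (integrable_log_cos _)).congr (lk_ae hab z).symm

lemma lk_integral_continuous {a b : ℝ} (hab : a < b) : Continuous fun z => ∫ t, lk a b z t ∂cm := by
  have : (fun z => ∫ t, lk a b z t ∂cm) = fun z : ℂ => Real.log ((b - a) / 2) +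
      ∫ t, Real.log ‖(z - ((a + b) / 2 : ℝ)) / ((b - a) / 2 : ℝ) - (Real.cos t : ℂ)‖ ∂cm := by
    funext z
    rw [integral_congr_ae (lk_ae hab z), integral_add (integrable_const _) (integrable_log_cos _)]
    simp
  rw [this]
  refine continuous_const.add (continuous_integral_log_cos.comp ?_)
  fun_prop

lemma lk_le {a b : ℝ} (hab : a < b) (z : ℂ) (t : ℝ) : lk a b z t ≤ ‖z‖ + (|a| + |b|) := by
  unfold lk
  refine (Real.log_le_self (norm_nonneg _)).trans ((norm_sub_le _ _).trans ?_)
  gcongr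
  rw [Complex.norm_real, Real.norm_eq_abs, abs_le]
  have := posn_mem hab (cos_mem t)
  constructor
  · linarith [this.1, neg_abs_le a, abs_nonneg b]
  · linarith [this.2, le_abs_self b, abs_nonneg a]

lemma lk_L1 {a b : ℝ} (hab : a < b) (z₀ : ℂ) :
    Tendsto (fun z => ∫ t, |lk a b z t - lk a b z₀ t| ∂cm) (𝓝 z₀) (𝓝 0) := by
  refine scheffe (‖z₀‖ + 1 + (|a| + |b|)) (fun z => lk_integrable hab z) (lk_integrable hab z₀) ?_ ?_ ?_
    ((lk_integral_continuous hab).tendsto z₀)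
  · have : ∀ᶠ z in 𝓝 z₀, ‖z‖ < ‖z₀‖ + 1 :=
      (continuous_norm.tendsto z₀).eventually (gt_mem_nhds (by linarith))
    filter_upwards [this] with z hz
    refine Eventually.of_forall fun t => (lk_le hab z t).trans (by linarith)
  · exact Eventually.of_forall fun t => (lk_le hab z₀ t).trans (by linarith)
  · filter_upwards [lk_ae_ne hab z₀] with t ht
    have : ContinuousAt (fun z => lk a b z t) z₀ := by
      unfold lk
      exact ContinuousAt.log (by fun_prop) (norm_ne_zero_iff.mpr ht)
    exact this

lemma lk_meas (a b : ℝ) : Measurable (fun p : ℂ × ℝ => lk a b p.1 p.2) := by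
  unfold lk
  have := continuous_posn_cos a b
  refine Real.measurable_log.comp (Continuous.measurable ?_)
  exact (continuous_fst.sub (Complex.continuous_ofReal.comp (this.comp continuous_snd))).norm

lemma lk_absint_bdd {a b : ℝ} (hab : a < b) : Continuous fun z => ∫ t, |lk a b z t| ∂cm := by
  rw [continuous_iff_continuousAt]
  intro z₀
  have h := lk_L1 hab z₀
  rw [ContinuousAt, tendsto_iff_norm_sub_tendsto_zero]
  refine squeeze_zero (fun _ => norm_nonneg _) (fun z => ?_) h
  rw [← integral_sub (lk_integrable hab z).abs (lk_integrable hab z₀).abs]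
  refine (norm_integral_le_integral_norm _).trans ?_
  refine integral_mono (((lk_integrable hab z).abs.sub (lk_integrable hab z₀).abs).norm)
    (((lk_integrable hab z).sub (lk_integrable hab z₀)).abs) fun t => ?_
  exact abs_abs_sub_abs_le_abs_sub _ _

lemma lk_mul_integrable {a b : ℝ} (hab : a < b) (z : ℂ) {N : ℝ → ℝ} (hN : Measurable N) {M : ℝ}
    (hM : ∀ t, |N t| ≤ M) : Integrable (fun t => lk a b z t * N t) cm :=
  (lk_integrable hab z).mul_bdd (c := M) hN.aestronglyMeasurable (Eventually.of_forall hM)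

lemma pot_continuous {a b : ℝ} (hab : a < b) {N : ℝ → ℝ} (hN : Measurable N) {M : ℝ}
    (hM : ∀ t, |N t| ≤ M) : Continuous fun z => ∫ t, lk a b z t * N t ∂cm := by
  rw [continuous_iff_continuousAt]
  intro z₀
  have h := (lk_L1 hab z₀).mul_const M
  rw [zero_mul] at h
  rw [ContinuousAt, tendsto_iff_norm_sub_tendsto_zero]
  refine squeeze_zero (fun _ => norm_nonneg _) (fun z => ?_) h
  rw [← integral_sub (lk_mul_integrable hab z hN hM) (lk_mul_integrable hab z₀ hN hM),
    ← integral_mul_const]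
  refine (norm_integral_le_integral_norm _).trans ?_
  refine integral_mono ((lk_mul_integrable hab z hN hM).sub (lk_mul_integrable hab z₀ hN hM)).norm
    ((((lk_integrable hab z).sub (lk_integrable hab z₀)).abs).mul_const M) fun t => ?_
  simp only
  rw [← sub_mul, norm_mul]
  exact mul_le_mul_of_nonneg_left (hM t) (norm_nonneg _)

/-- Circle average of the potential. -/
lemma pot_circle {a b : ℝ} (hab : a < b) {N : ℝ → ℝ} (hN : Measurable N) {M : ℝ}
    (hM : ∀ t, |N t| ≤ M) (c : ℂ) {r : ℝ} (hr : 0 < r) :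
    ∫ τ, (∫ t, lk a b (circleMap c r τ) t * N t ∂cm) ∂cm
      = ∫ t, (Real.log r + Real.posLog (r⁻¹ * ‖c - (posn a b (Real.cos t) : ℂ)‖)) * N t ∂cm := by
  have hcirc : Continuous (circleMap c r) := continuous_circleMap c r
  have hmeas : Measurable (fun p : ℝ × ℝ => lk a b (circleMap c r p.1) p.2) :=
    (lk_meas a b).comp ((hcirc.measurable.comp measurable_fst).prodMk measurable_snd)
  have hI : Integrable (fun p : ℝ × ℝ => lk a b (circleMap c r p.1) p.2) (cm.prod cm) := by
    rw [integrable_prod_iff hmeas.aestronglyMeasurable]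
    refine ⟨Eventually.of_forall fun τ => lk_integrable hab (circleMap c r τ), ?_⟩
    change Integrable (fun τ => ∫ t, |lk a b (circleMap c r τ) t| ∂cm) cm
    have hc : Continuous fun τ => ∫ t, |lk a b (circleMap c r τ) t| ∂cm :=
      (lk_absint_bdd hab).comp hcirc
    obtain ⟨K, hK⟩ := (isCompact_sphere c r).exists_bound_of_continuousOn
      (lk_absint_bdd hab).continuousOn
    refine (integrable_const K).mono' hc.aestronglyMeasurable (Eventually.of_forall fun τ => ?_)
    exact hK _ (circleMap_mem_sphere c hr.le τ)
  have hI2 : Integrable (fun p : ℝ × ℝ => lk a b (circleMap c r p.1) p.2 * N p.2) (cm.prod cm) :=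
    hI.mul_bdd (c := M) (hN.comp measurable_snd).aestronglyMeasurable (Eventually.of_forall fun p => hM p.2)
  rw [integral_integral_swap hI2]
  refine integral_congr_ae (Eventually.of_forall fun t => ?_)
  simp only
  rw [integral_mul_const]
  congr 1
  rw [← circleAverage_log_norm_sub_const_eq_log_radius_add_posLog hr.ne', circleAverage_eq_cm]
  rfl

lemma zero_of_integral_cm {f : ℝ → ℝ} (hf : Continuous f) (h0 : ∀ t, 0 ≤ f t)
    (hi : ∫ t, f t ∂cm ≤ 0) : ∀ t ∈ Icc 0 (2 * Real.pi), f t = 0 := by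
  have hpi := Real.pi_pos
  have hIntg : IntegrableOn f (Ioc 0 (2 * Real.pi)) volume :=
    (hf.integrableOn_Icc).mono_set Ioc_subset_Icc_self
  rw [cm, integral_smul_measure, ENNReal.toReal_ofReal (by positivity), smul_eq_mul] at hi
  have h1 : ∫ t in Ioc 0 (2 * Real.pi), f t = 0 := by
    have h2 : 0 ≤ ∫ t in Ioc 0 (2 * Real.pi), f t := integral_nonneg h0
    have h3 : 0 < (2 * Real.pi)⁻¹ := by positivity
    by_contra h4
    have := mul_pos h3 (lt_of_le_of_ne h2 (Ne.symm h4))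
    linarith
  rw [setIntegral_eq_zero_iff_of_nonneg_ae (Eventually.of_forall h0) hIntg] at h1
  have h5 : f =ᵐ[volume.restrict (Ioo 0 (2 * Real.pi))] fun _ => 0 :=
    ae_restrict_of_ae_restrict_of_subset Ioo_subset_Ioc_self h1
  have h6 : EqOn f (fun _ => 0) (Ioo 0 (2 * Real.pi)) :=
    Measure.eqOn_open_of_ae_eq h5 isOpen_Ioo hf.continuousOn continuousOn_const
  have h7 : EqOn f (fun _ => 0) (closure (Ioo 0 (2 * Real.pi))) :=
    h6.closure hf continuous_const
  rw [closure_Ioo (by positivity)] at h7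
  exact h7

/-- A solution of the homogeneous adjoint system. -/
structure USol (d : ℕ) (A B : Fin d → ℝ) (ψ θ : Fin d → ℝ → ℝ) : Prop where
  hAB : ∀ i, A i < B i
  hdisj : ∀ i j, i ≠ j → Disjoint (Icc (A i) (B i)) (Icc (A j) (B j))
  cont : ∀ i, Continuous (ψ i)
  meas : ∀ i, Measurable (θ i)
  nonneg : ∀ i s, 0 ≤ θ i s
  le_one : ∀ i s, θ i s ≤ 1
  eq : ∀ i, ∀ s ∈ Icc (-1 : ℝ) 1, ψ i s = -(1 / 2) * ∑ j ∈ Finset.univ.erase i,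
    ∫ t, PK (A i) (B i) (posn (A j) (B j) (Real.cos t)) (posn (A i) (B i) s)
      * (θ j (Real.cos t) * ψ j (Real.cos t)) ∂cm

namespace USol

variable {d : ℕ} {A B : Fin d → ℝ} {ψ θ : Fin d → ℝ → ℝ}

/-- density -/
def N (ψ θ : Fin d → ℝ → ℝ) (j : Fin d) (t : ℝ) : ℝ := θ j (Real.cos t) * ψ j (Real.cos t)

/-- potential -/
def V (A B : Fin d → ℝ) (ψ θ : Fin d → ℝ → ℝ) (z : ℂ) : ℝ :=
  -∑ j, ∫ t, lk (A j) (B j) z t * N ψ θ j t ∂cm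

/-- total mass -/
def mass (ψ θ : Fin d → ℝ → ℝ) : ℝ := ∑ j, ∫ t, N ψ θ j t ∂cm

lemma neg (h : USol d A B ψ θ) : USol d A B (fun i s => -ψ i s) θ where
  hAB := h.hAB
  hdisj := h.hdisj
  cont i := (h.cont i).neg
  meas := h.meas
  nonneg := h.nonneg
  le_one := h.le_one
  eq i s hs := by
    simp only [mul_neg, integral_neg, Finset.sum_neg_distrib]
    rw [h.eq i s hs]

lemma N_neg (j : Fin d) (t : ℝ) : N (fun i s => -ψ i s) θ j t = - N ψ θ j t := by
  simp [N]

lemma V_neg (z : ℂ) : V A B (fun i s => -ψ i s) θ z = - V A B ψ θ z := by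
  simp only [V, N_neg, mul_neg, integral_neg, Finset.sum_neg_distrib]

lemma mass_neg : mass (fun i s => -ψ i s) θ = - mass ψ θ := by
  simp only [mass, N_neg, integral_neg, Finset.sum_neg_distrib]

lemma N_meas (h : USol d A B ψ θ) (j : Fin d) : Measurable (N ψ θ j) :=
  ((h.meas j).comp Real.measurable_cos).mul ((h.cont j).measurable.comp Real.measurable_cos)

lemma exists_bound (h : USol d A B ψ θ) : ∃ M, 0 ≤ M ∧ (∀ j t, |ψ j (Real.cos t)| ≤ M) ∧
    ∀ j t, |N ψ θ j t| ≤ M := by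
  have h1 : ∀ j, ∃ M, ∀ s ∈ Icc (-1:ℝ) 1, ‖ψ j s‖ ≤ M := fun j =>
    isCompact_Icc.exists_bound_of_continuousOn (h.cont j).continuousOn
  choose M hM using h1
  have h2 : ∀ j t, |ψ j (Real.cos t)| ≤ ∑ k, |M k| := fun j t =>
    ((hM j _ (cos_mem t)).trans (le_abs_self _)).trans
      (Finset.single_le_sum (f := fun k => |M k|) (fun k _ => abs_nonneg _) (Finset.mem_univ j))
  refine ⟨∑ k, |M k|, Finset.sum_nonneg fun k _ => abs_nonneg _, h2, fun j t => ?_⟩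
  unfold N
  rw [abs_mul, abs_of_nonneg (h.nonneg j _)]
  calc θ j (Real.cos t) * |ψ j (Real.cos t)| ≤ 1 * |ψ j (Real.cos t)| := by
        gcongr; exact h.le_one j _
    _ ≤ _ := by rw [one_mul]; exact h2 j t

lemma N_integrable (h : USol d A B ψ θ) (j : Fin d) : Integrable (N ψ θ j) cm := by
  obtain ⟨M, h0, h1, h2⟩ := h.exists_bound
  exact (integrable_const M).mono' (h.N_meas j).aestronglyMeasurable
    (Eventually.of_forall (h2 j))

lemma V_cont (h : USol d A B ψ θ) : Continuous (V A B ψ θ) := by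
  obtain ⟨M, h0, h1, h2⟩ := h.exists_bound
  unfold V
  exact (continuous_finset_sum _ fun j _ => pot_continuous (h.hAB j) (h.N_meas j) (h2 j)).neg

lemma V_lift (h : USol d A B ψ θ) (c : ℂ) {r : ℝ} (hr : 0 < r)
    (hmax : ∀ z, V A B ψ θ z ≤ V A B ψ θ c)
    (hneg : ∀ j t, ‖c - (posn (A j) (B j) (Real.cos t) : ℂ)‖ < r → N ψ θ j t ≤ 0) :
    V A B ψ θ (c + r * Complex.I) = V A B ψ θ c := by
  obtain ⟨M, h0, h1, h2⟩ := h.exists_bound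
  have hcirc : Continuous (circleMap c r) := continuous_circleMap c r
  have hpot : ∀ j, Continuous fun τ => ∫ t, lk (A j) (B j) (circleMap c r τ) t * N ψ θ j t ∂cm :=
    fun j => (pot_continuous (h.hAB j) (h.N_meas j) (h2 j)).comp hcirc
  have hIntg : ∀ f : ℝ → ℝ, Continuous f → Integrable f cm := by
    intro f hf
    unfold cm
    exact ((hf.integrableOn_Icc).mono_set Ioc_subset_Icc_self).integrable.smul_measure
      ENNReal.ofReal_ne_top
  have havg : ∫ τ, V A B ψ θ (circleMap c r τ) ∂cm
      = - ∑ j, ∫ t, (Real.log r + Real.posLog (r⁻¹ * ‖c - (posn (A j) (B j) (Real.cos t) : ℂ)‖))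
        * N ψ θ j t ∂cm := by
    unfold V
    rw [integral_neg, integral_finset_sum _ fun j _ => hIntg _ (hpot j)]
    congr 1
    exact Finset.sum_congr rfl fun j _ => pot_circle (h.hAB j) (h.N_meas j) (h2 j) c hr
  have hle : V A B ψ θ c ≤ ∫ τ, V A B ψ θ (circleMap c r τ) ∂cm := by
    rw [havg]
    unfold V
    refine neg_le_neg (Finset.sum_le_sum fun j _ => ?_)
    refine integral_mono_ae ?_ (lk_mul_integrable (h.hAB j) c (h.N_meas j) (h2 j)) ?_
    · refine (hIntg _ ?_).mul_bdd (c := M) (h.N_meas j).aestronglyMeasurable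
        (Eventually.of_forall (h2 j))
      have h3 := continuous_posn_cos (A j) (B j)
      have h4 : Continuous fun t => r⁻¹ * ‖c - (posn (A j) (B j) (Real.cos t) : ℂ)‖ :=
        continuous_const.mul (continuous_const.sub (Complex.continuous_ofReal.comp h3)).norm
      exact continuous_const.add (Real.continuous_posLog.comp h4)
    · filter_upwards [lk_ae_ne (h.hAB j) c] with t ht
      set u := ‖c - (posn (A j) (B j) (Real.cos t) : ℂ)‖ with hu
      have hu0 : 0 < u := norm_pos_iff.mpr ht
      unfold lk
      rw [← hu]
      rcases lt_or_ge u r with hur | hur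
      · have hN := hneg j t hur
        have hp : Real.posLog (r⁻¹ * u) = 0 := by
          rw [Real.posLog_eq_zero_iff, abs_of_pos (by positivity), inv_mul_le_iff₀ hr]; linarith
        rw [hp, add_zero]
        exact mul_le_mul_of_nonpos_right (Real.log_le_log hu0 hur.le) hN
      · have hp : Real.posLog (r⁻¹ * u) = Real.log (r⁻¹ * u) := by
          apply Real.posLog_eq_log
          rw [abs_of_pos (by positivity), le_inv_mul_iff₀ hr]; linarith
        rw [hp, Real.log_mul (by positivity) (by positivity), Real.log_inv]
        apply le_of_eq; ring
  have hVc : Continuous fun τ => V A B ψ θ (circleMap c r τ) := h.V_cont.comp hcirc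
  have hz := zero_of_integral_cm (f := fun τ => V A B ψ θ c - V A B ψ θ (circleMap c r τ))
    (continuous_const.sub hVc) (fun τ => sub_nonneg.mpr (hmax _)) (by
      rw [integral_sub (integrable_const _) (hIntg _ hVc)]
      simpa using hle) (Real.pi / 2) ⟨by positivity, by linarith [Real.pi_pos]⟩
  have hpt : circleMap c r (Real.pi / 2) = c + r * Complex.I := by
    simp [circleMap, Complex.exp_pi_div_two_mul_I]
  simp only [hpt] at hz
  linarith

lemma V_infty (h : USol d A B ψ θ) :
    Tendsto (fun z : ℂ => V A B ψ θ z + mass ψ θ * Real.log ‖z‖) (Filter.cocompact ℂ) (𝓝 0) := by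
  obtain ⟨M, h0, h1, h2⟩ := h.exists_bound
  set R : ℝ := 1 + ∑ j, (|A j| + |B j|) with hR
  have hsum : 0 ≤ ∑ j, (|A j| + |B j|) := Finset.sum_nonneg fun j _ => by positivity
  have hxR : ∀ j t, |posn (A j) (B j) (Real.cos t)| ≤ R := by
    intro j t
    have h3 := posn_mem (h.hAB j) (cos_mem t)
    have h4 : |A j| + |B j| ≤ ∑ j, (|A j| + |B j|) :=
      Finset.single_le_sum (f := fun j => |A j| + |B j|) (fun k _ => by positivity) (Finset.mem_univ j)
    rw [abs_le]
    constructor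
    · linarith [h3.1, neg_abs_le (A j), abs_nonneg (B j)]
    · linarith [h3.2, le_abs_self (B j), abs_nonneg (A j)]
  have hnorm := tendsto_norm_cocompact_atTop (E := ℂ)
  have hlim : Tendsto (fun z : ℂ => (d : ℝ) * (2 * R * M) * ‖z‖⁻¹) (Filter.cocompact ℂ) (𝓝 0) := by
    have := (tendsto_inv_atTop_zero.comp hnorm).const_mul ((d : ℝ) * (2 * R * M))
    simpa using this
  refine squeeze_zero_norm' ?_ hlim
  filter_upwards [hnorm.eventually (eventually_ge_atTop (2 * R))] with z hz
  have hz0 : 0 < ‖z‖ := by linarith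
  have hE : V A B ψ θ z + mass ψ θ * Real.log ‖z‖
      = - ∑ j, ∫ t, (lk (A j) (B j) z t - Real.log ‖z‖) * N ψ θ j t ∂cm := by
    unfold V mass
    rw [Finset.sum_mul, neg_add_eq_sub, ← Finset.sum_sub_distrib, ← Finset.sum_neg_distrib]
    refine Finset.sum_congr rfl fun j _ => ?_
    rw [← integral_mul_const, ← integral_sub, ← integral_neg]
    · exact integral_congr_ae (Eventually.of_forall fun t => by simp only; ring)
    · exact (h.N_integrable j).mul_const _
    · exact lk_mul_integrable (h.hAB j) z (h.N_meas j) (h2 j)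
  have hb : ∀ j, ‖∫ t, (lk (A j) (B j) z t - Real.log ‖z‖) * N ψ θ j t ∂cm‖ ≤ 2 * R * M * ‖z‖⁻¹ := by
    intro j
    have h5 : ∀ᵐ t ∂cm, ‖(lk (A j) (B j) z t - Real.log ‖z‖) * N ψ θ j t‖ ≤ 2 * R * M * ‖z‖⁻¹ := by
      refine Eventually.of_forall fun t => ?_
      rw [norm_mul]
      have h6 : ‖lk (A j) (B j) z t - Real.log ‖z‖‖ ≤ 2 * R * ‖z‖⁻¹ := by
        unfold lk
        set u := ‖z - (posn (A j) (B j) (Real.cos t) : ℂ)‖ with hu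
        have h7 : |u - ‖z‖| ≤ R := by
          refine (abs_norm_sub_norm_le _ _).trans ?_
          rw [sub_sub_cancel_left, norm_neg, Complex.norm_real]
          exact hxR j t
        have h8 := abs_le.mp h7
        have hu1 : ‖z‖ / 2 ≤ u := by linarith [h8.1]
        have hu0 : 0 < u := by linarith
        rw [Real.norm_eq_abs, abs_le, ← Real.log_div hu0.ne' hz0.ne']
        have hR0 : 0 < R := by linarith
        constructor
        · rw [← inv_div, Real.log_inv, neg_le_neg_iff]
          refine (Real.log_le_sub_one_of_pos (by positivity)).trans ?_
          rw [← div_eq_mul_inv, div_sub_one hu0.ne', div_le_div_iff₀ hu0 hz0]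
          nlinarith [h8.1]
        · refine (Real.log_le_sub_one_of_pos (by positivity)).trans ?_
          rw [← div_eq_mul_inv, div_sub_one hz0.ne']
          gcongr
          linarith [h8.2]
      calc _ ≤ 2 * R * ‖z‖⁻¹ * M := by
            gcongr
            exact h2 j t
        _ = _ := by ring
    have := norm_integral_le_of_norm_le_const h5
    simpa using this
  rw [hE, norm_neg]
  refine (norm_sum_le _ _).trans ((Finset.sum_le_sum fun j _ => hb j).trans ?_)
  simp
  apply le_of_eq; ring

end USol

lemma cm_neg {f : ℝ → ℝ} (hf : Function.Periodic f (2 * Real.pi)) :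
    ∫ t, f (-t) ∂cm = ∫ t, f t ∂cm := by
  have h2 : (0:ℝ) ≤ 2 * Real.pi := by positivity
  unfold cm
  rw [integral_smul_measure, integral_smul_measure, ← intervalIntegral.integral_of_le h2,
    ← intervalIntegral.integral_of_le h2, intervalIntegral.integral_comp_neg]
  congr 1
  have := hf.intervalIntegral_add_eq (-(2 * Real.pi)) 0
  simpa using this

lemma ee_periodic : Function.Periodic ee (2 * Real.pi) := periodic_circleMap 0 1

lemma cm_integrable_of_continuous {f : ℝ → ℝ} (hf : Continuous f) : Integrable f cm := by
  unfold cm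
  exact ((hf.integrableOn_Icc).mono_set Ioc_subset_Icc_self).integrable.smul_measure
    ENNReal.ofReal_ne_top

lemma ee_norm_sub_comm (s t : ℝ) : ‖ee s - ee t‖ = ‖ee t - ee s‖ := norm_sub_rev _ _

lemma log_ee_meas : Measurable (fun p : ℝ × ℝ => Real.log ‖ee p.2 - ee p.1‖) :=
  Real.measurable_log.comp (Continuous.measurable
    ((continuous_ee.comp continuous_snd).sub (continuous_ee.comp continuous_fst)).norm)

lemma log_ee_prod : Integrable (fun p : ℝ × ℝ => Real.log ‖ee p.2 - ee p.1‖) (cm.prod cm) := by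
  rw [integrable_prod_iff log_ee_meas.aestronglyMeasurable]
  refine ⟨Eventually.of_forall fun s => integrable_log_ee (ee s), ?_⟩
  refine (integrable_const (2 * Real.log 2)).mono'
    log_ee_meas.aestronglyMeasurable.norm.integral_prod_right' (Eventually.of_forall fun s => ?_)
  have hn : 0 ≤ ∫ t, ‖Real.log ‖ee t - ee s‖‖ ∂cm := integral_nonneg fun _ => norm_nonneg _
  simp only
  rw [Real.norm_of_nonneg hn]
  have h1 : ∫ t, (2 * Real.log 2 - Real.log ‖ee t - ee s‖) ∂cm = 2 * Real.log 2 := by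
    rw [integral_sub (integrable_const _) (integrable_log_ee _), integral_log_ee, norm_ee]
    simp
  rw [← h1]
  refine integral_mono (integrable_log_ee _).norm ((integrable_const _).sub (integrable_log_ee _))
    fun t => ?_
  have h2 : ‖ee t - ee s‖ ≤ 2 := by
    have := norm_sub_le (ee t) (ee s)
    rw [norm_ee, norm_ee] at this
    linarith
  have h3 : Real.log ‖ee t - ee s‖ ≤ Real.log 2 := by
    rcases (norm_nonneg (ee t - ee s)).eq_or_lt with h | h
    · rw [← h, Real.log_zero]; exact Real.log_nonneg (by norm_num)
    · exact Real.log_le_log h h2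
  have h4 : 0 ≤ Real.log 2 := Real.log_nonneg (by norm_num)
  simp only [Real.norm_eq_abs]
  rw [abs_le]
  constructor <;> linarith

lemma wR_continuousAt {a b y : ℝ} (hab : a < b) (hy : y ∉ Icc a b) : ContinuousAt (wR a b) y := by
  have h : y - a ≠ 0 := by
    intro h
    exact hy ⟨by linarith, by linarith⟩
  unfold wR
  refine ContinuousAt.mul (by fun_prop) (ContinuousAt.sqrt (ContinuousAt.div (by fun_prop) (by fun_prop) h))

lemma posn_notMem {a b a' b' s : ℝ} (hab' : a' < b')
    (hd : Disjoint (Icc a b) (Icc a' b')) (hs : s ∈ Icc (-1:ℝ) 1) : posn a' b' s ∉ Icc a b :=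
  fun h => (Set.disjoint_left.mp hd) h (posn_mem hab' hs)

lemma PK_continuousOn {a b a' b' : ℝ} (hab : a < b) (hab' : a' < b')
    (hd : Disjoint (Icc a b) (Icc a' b')) :
    ContinuousOn (fun p : ℝ × ℝ => PK a b (posn a' b' p.1) (posn a b p.2))
      (Icc (-1) 1 ×ˢ Icc (-1) 1) := by
  rintro ⟨s, σ⟩ ⟨hs, hσ⟩
  have h1 := posn_notMem hab' hd hs
  have h2 := posn_mem hab hσ
  apply ContinuousAt.continuousWithinAt
  unfold PK
  have hp : Continuous (posn a' b') := by unfold posn; fun_prop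
  have hp' : Continuous (posn a b) := by unfold posn; fun_prop
  refine ContinuousAt.div ?_ ?_ ?_
  · exact (wR_continuousAt hab h1).comp (f := fun p : ℝ × ℝ => posn a' b' p.1)
      (hp.comp continuous_fst).continuousAt
  · exact ((hp.comp continuous_fst).sub (hp'.comp continuous_snd)).continuousAt
  · intro h
    apply h1
    have : posn a' b' s = posn a b σ := sub_eq_zero.mp h
    rw [this]; exact h2

lemma PK_cos_continuous {a b a' b' : ℝ} (hab : a < b) (hab' : a' < b')
    (hd : Disjoint (Icc a b) (Icc a' b')) :
    Continuous (fun p : ℝ × ℝ => PK a b (posn a' b' (Real.cos p.1)) (posn a b (Real.cos p.2))) := by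
  have h := PK_continuousOn hab hab' hd
  have h2 : Continuous fun p : ℝ × ℝ => (Real.cos p.1, Real.cos p.2) := by fun_prop
  exact h.comp_continuous h2 fun p => ⟨cos_mem _, cos_mem _⟩

lemma PK_bdd {a b a' b' : ℝ} (hab : a < b) (hab' : a' < b')
    (hd : Disjoint (Icc a b) (Icc a' b')) :
    ∃ K, ∀ t τ, |PK a b (posn a' b' (Real.cos t)) (posn a b (Real.cos τ))| ≤ K := by
  obtain ⟨K, hK⟩ := (isCompact_Icc.prod isCompact_Icc).exists_bound_of_continuousOn
    (PK_continuousOn hab hab' hd)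
  exact ⟨K, fun t τ => hK (Real.cos t, Real.cos τ) ⟨cos_mem _, cos_mem _⟩⟩

namespace USol

variable {d : ℕ} {A B : Fin d → ℝ} {ψ θ : Fin d → ℝ → ℝ}

lemma fub_integrable (h : USol d A B ψ θ) {i j : Fin d} (hij : i ≠ j) {f : ℝ → ℝ}
    (hf : Integrable f cm) :
    Integrable (fun p : ℝ × ℝ => f p.1 * (PK (A i) (B i) (posn (A j) (B j) (Real.cos p.2))
      (posn (A i) (B i) (Real.cos p.1)) * N ψ θ j p.2)) (cm.prod cm) := by
  obtain ⟨M, h0, h1, h2⟩ := h.exists_bound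
  obtain ⟨K, hK⟩ := PK_bdd (h.hAB i) (h.hAB j) (h.hdisj i j hij)
  have hc := PK_cos_continuous (h.hAB i) (h.hAB j) (h.hdisj i j hij)
  refine (hf.comp_fst cm).mul_bdd (c := K * M) ?_ ?_
  · exact ((hc.comp continuous_swap).measurable.mul
      ((h.N_meas j).comp measurable_snd)).aestronglyMeasurable
  · refine Eventually.of_forall fun p => ?_
    rw [norm_mul]
    have := (abs_nonneg _).trans (hK 0 0)
    exact mul_le_mul (hK _ _) (h2 j _) (norm_nonneg _) this

lemma adj_integrable (h : USol d A B ψ θ) {i j : Fin d} (hij : i ≠ j) {f : ℝ → ℝ}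
    (hf : Integrable f cm) :
    Integrable (fun t => (∫ τ, f τ * PK (A i) (B i) (posn (A j) (B j) (Real.cos t))
      (posn (A i) (B i) (Real.cos τ)) ∂cm) * N ψ θ j t) cm := by
  have := (h.fub_integrable hij hf).integral_prod_right
  refine this.congr (Eventually.of_forall fun t => ?_)
  simp only
  rw [← integral_mul_const]
  exact integral_congr_ae (Eventually.of_forall fun τ => by simp only; ring)

lemma adj (h : USol d A B ψ θ) (i : Fin d) {f : ℝ → ℝ} (hf : Integrable f cm) :
    ∫ τ, f τ * (-2 * ψ i (Real.cos τ)) ∂cm = ∑ j ∈ Finset.univ.erase i,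
      ∫ t, (∫ τ, f τ * PK (A i) (B i) (posn (A j) (B j) (Real.cos t))
      (posn (A i) (B i) (Real.cos τ)) ∂cm) * N ψ θ j t ∂cm := by
  have e1 : ∀ τ, f τ * (-2 * ψ i (Real.cos τ)) = ∑ j ∈ Finset.univ.erase i,
      ∫ t, f τ * (PK (A i) (B i) (posn (A j) (B j) (Real.cos t))
      (posn (A i) (B i) (Real.cos τ)) * N ψ θ j t) ∂cm := by
    intro τ
    rw [h.eq i _ (cos_mem τ)]
    simp only [integral_const_mul, ← Finset.mul_sum]
    unfold N
    ring
  simp only [e1]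
  rw [integral_finsetSum]
  · refine Finset.sum_congr rfl fun j hj => ?_
    have hij : i ≠ j := (Finset.ne_of_mem_erase hj).symm
    rw [integral_integral_swap (h.fub_integrable hij hf)]
    refine integral_congr_ae (Eventually.of_forall fun t => ?_)
    simp only
    rw [← integral_mul_const]
    exact integral_congr_ae (Eventually.of_forall fun τ => by simp only; ring)
  · intro j hj
    have hij : i ≠ j := (Finset.ne_of_mem_erase hj).symm
    exact (h.fub_integrable hij hf).integral_prod_left

/-- the auxiliary density on the circle -/
def bt (ψ θ : Fin d → ℝ → ℝ) (i : Fin d) (t : ℝ) : ℝ := N ψ θ i t + -2 * ψ i (Real.cos t)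

/-- the auxiliary potential on the disk -/
def Phi (ψ θ : Fin d → ℝ → ℝ) (i : Fin d) (ρ : ℂ) : ℝ :=
  -2 * ∫ t, Real.log ‖ee t - ρ‖ * bt ψ θ i t ∂cm

lemma psi_cont (h : USol d A B ψ θ) (i : Fin d) : Continuous fun t => -2 * ψ i (Real.cos t) :=
  continuous_const.mul ((h.cont i).comp Real.continuous_cos)

lemma bt_meas (h : USol d A B ψ θ) (i : Fin d) : Measurable (bt ψ θ i) :=
  (h.N_meas i).add (h.psi_cont i).measurable

lemma bt_integrable (h : USol d A B ψ θ) (i : Fin d) : Integrable (bt ψ θ i) cm :=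
  (h.N_integrable i).add (cm_integrable_of_continuous (h.psi_cont i))

lemma bt_bdd (h : USol d A B ψ θ) (i : Fin d) : ∃ M, 0 ≤ M ∧ ∀ t, |bt ψ θ i t| ≤ M := by
  obtain ⟨M, h0, h1, h2⟩ := h.exists_bound
  refine ⟨M + 2 * M, by positivity, fun t => ?_⟩
  unfold bt
  refine (abs_add_le _ _).trans (add_le_add (h2 i t) ?_)
  rw [abs_mul]
  norm_num
  exact h1 i t

lemma rho_lt {i j : Fin d} (h : USol d A B ψ θ) (hij : i ≠ j) (t : ℝ) :
    ‖(rhoR (A i) (B i) (posn (A j) (B j) (Real.cos t)) : ℂ)‖ < 1 := by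
  rw [Complex.norm_real]
  exact (rhoR_facts (h.hAB i) (posn_notMem (h.hAB j) (h.hdisj i j hij) (cos_mem t))).2.1

lemma bt_mass (h : USol d A B ψ θ) (i : Fin d) : ∫ t, bt ψ θ i t ∂cm = mass ψ θ := by
  unfold bt
  rw [integral_add (h.N_integrable i) (cm_integrable_of_continuous (h.psi_cont i))]
  have := h.adj i (f := fun _ => 1) (integrable_const _)
  simp only [one_mul] at this
  rw [this]
  unfold mass
  rw [← Finset.add_sum_erase _ _ (Finset.mem_univ i)]
  congr 1
  refine Finset.sum_congr rfl fun j hj => ?_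
  have hij : i ≠ j := (Finset.ne_of_mem_erase hj).symm
  refine integral_congr_ae (Eventually.of_forall fun t => ?_)
  simp only
  have e : ∀ τ, PK (A i) (B i) (posn (A j) (B j) (Real.cos t)) (posn (A i) (B i) (Real.cos τ))
      = pk (rhoR (A i) (B i) (posn (A j) (B j) (Real.cos t)) : ℂ) τ := fun τ =>
    PK_eq_pk (h.hAB i) (posn_notMem (h.hAB j) (h.hdisj i j hij) (cos_mem t)) τ
  simp only [e]
  rw [integral_pk (h.rho_lt hij t), one_mul]

lemma cos_jouk (s : ℝ) : (Real.cos s : ℂ) = (ee s + (ee s)⁻¹) / 2 := by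
  have h1 := ee_mul_neg s
  have h2 := ee_add_neg s
  have : (ee s)⁻¹ = ee (-s) := (eq_inv_of_mul_eq_one_right h1).symm
  rw [this, h2]; ring

lemma own_part (h : USol d A B ψ θ) (i : Fin d) (s : ℝ) :
    ∫ t, lk (A i) (B i) (posn (A i) (B i) (Real.cos s) : ℂ) t * N ψ θ i t ∂cm
      = (Real.log ((B i - A i) / 2) - Real.log 2) * ∫ t, N ψ θ i t ∂cm
        + 2 * ∫ t, Real.log ‖ee t - ee s‖ * N ψ θ i t ∂cm := by
  obtain ⟨M, h0, h1, h2⟩ := h.exists_bound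
  have hAB := h.hAB i
  have hI : ∀ a : ℂ, Integrable (fun t => Real.log ‖ee t - a‖ * N ψ θ i t) cm := fun a =>
    (integrable_log_ee a).mul_bdd (c := M) (h.N_meas i).aestronglyMeasurable
      (Eventually.of_forall (h2 i))
  have hsym : ∫ t, Real.log ‖ee t - (starRingEnd ℂ) (ee s)‖ * N ψ θ i t ∂cm
      = ∫ t, Real.log ‖ee t - ee s‖ * N ψ θ i t ∂cm := by
    rw [← cm_neg (f := fun t => Real.log ‖ee t - ee s‖ * N ψ θ i t)]
    · refine integral_congr_ae (Eventually.of_forall fun t => ?_)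
      simp only
      have e1 : ‖ee t - (starRingEnd ℂ) (ee s)‖ = ‖ee (-t) - ee s‖ := by
        rw [ee_neg_conj t, ← Complex.norm_conj, map_sub, Complex.conj_conj]
      have e2 : N ψ θ i (-t) = N ψ θ i t := by
        unfold N; rw [Real.cos_neg]
      rw [e1, e2]
    · intro t
      simp only [ee_periodic t, N, Real.cos_add_two_pi]
  have hae : (fun t => lk (A i) (B i) (posn (A i) (B i) (Real.cos s) : ℂ) t * N ψ θ i t) =ᵐ[cm]
      fun t => (Real.log ((B i - A i) / 2) - Real.log 2) * N ψ θ i t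
        + (Real.log ‖ee t - ee s‖ * N ψ θ i t
          + Real.log ‖ee t - (starRingEnd ℂ) (ee s)‖ * N ψ θ i t) := by
    have hne : ee s ≠ 0 := by
      intro h; have := norm_ee s; rw [h] at this; simp at this
    filter_upwards [lk_ae hAB (posn (A i) (B i) (Real.cos s) : ℂ), jouk_log hne (cos_jouk s)]
      with t e1 e2
    rw [e1]
    have hb : ((posn (A i) (B i) (Real.cos s) : ℂ) - ((A i + B i) / 2 : ℝ)) / ((B i - A i) / 2 : ℝ)
        = (Real.cos s : ℂ) := by
      have : (((B i - A i) / 2 : ℝ) : ℂ) ≠ 0 := by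
        exact_mod_cast (by linarith : (B i - A i) / 2 ≠ 0)
      rw [div_eq_iff this]
      unfold posn
      push_cast; ring
    rw [hb, e2, norm_ee, mul_one]
    ring
  have hadd : Integrable (fun t => Real.log ‖ee t - ee s‖ * N ψ θ i t
      + Real.log ‖ee t - (starRingEnd ℂ) (ee s)‖ * N ψ θ i t) cm := (hI _).add (hI _)
  rw [integral_congr_ae hae, integral_add ((h.N_integrable i).const_mul _) hadd,
    integral_const_mul, integral_add (hI _) (hI _), hsym]
  ring

lemma claimA (h : USol d A B ψ θ) (i : Fin d) : ∃ K, ∀ s,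
    Phi ψ θ i (ee s) = V A B ψ θ (posn (A i) (B i) (Real.cos s) : ℂ) + K := by
  obtain ⟨M, h0, h1, h2⟩ := h.exists_bound
  refine ⟨(Real.log ((B i - A i) / 2) - Real.log 2) * ∫ t, N ψ θ i t ∂cm
    + ∑ j ∈ Finset.univ.erase i, ∫ t, Real.log ((B i - A i) / 2 /
      (2 * rhoR (A i) (B i) (posn (A j) (B j) (Real.cos t)))) * N ψ θ j t ∂cm, fun s => ?_⟩
  have hV : V A B ψ θ (posn (A i) (B i) (Real.cos s) : ℂ)
      = -(∫ t, lk (A i) (B i) (posn (A i) (B i) (Real.cos s) : ℂ) t * N ψ θ i t ∂cm)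
        - ∑ j ∈ Finset.univ.erase i,
          ∫ t, lk (A j) (B j) (posn (A i) (B i) (Real.cos s) : ℂ) t * N ψ θ j t ∂cm := by
    unfold V
    rw [← Finset.add_sum_erase _ _ (Finset.mem_univ i)]; ring
  have hlog := integrable_log_ee (ee s)
  have hI : Integrable (fun t => Real.log ‖ee t - ee s‖ * N ψ θ i t) cm :=
    hlog.mul_bdd (c := M) (h.N_meas i).aestronglyMeasurable (Eventually.of_forall (h2 i))
  have hI2 : Integrable (fun t => Real.log ‖ee t - ee s‖ * (-2 * ψ i (Real.cos t))) cm :=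
    hlog.mul_bdd (c := 2 * M) (h.psi_cont i).aestronglyMeasurable
      (Eventually.of_forall fun t => by
        rw [norm_mul]; norm_num; exact h1 i t)
  have hPhi : Phi ψ θ i (ee s) = -2 * ∫ t, Real.log ‖ee t - ee s‖ * N ψ θ i t ∂cm
      + -2 * ∫ t, Real.log ‖ee t - ee s‖ * (-2 * ψ i (Real.cos t)) ∂cm := by
    unfold Phi bt
    rw [← mul_add, ← integral_add hI hI2]
    congr 1
    exact integral_congr_ae (Eventually.of_forall fun t => by simp only; ring)
  have hcross : ∀ j ∈ Finset.univ.erase i,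
      -2 * (∫ t, (∫ τ, Real.log ‖ee τ - ee s‖ * PK (A i) (B i) (posn (A j) (B j) (Real.cos t))
      (posn (A i) (B i) (Real.cos τ)) ∂cm) * N ψ θ j t ∂cm)
      = -(∫ t, lk (A j) (B j) (posn (A i) (B i) (Real.cos s) : ℂ) t * N ψ θ j t ∂cm)
        + ∫ t, Real.log ((B i - A i) / 2 /
      (2 * rhoR (A i) (B i) (posn (A j) (B j) (Real.cos t)))) * N ψ θ j t ∂cm := by
    intro j hj
    have hij : i ≠ j := (Finset.ne_of_mem_erase hj).symm
    have e1 : ∀ t, Real.log ((B i - A i) / 2 /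
        (2 * rhoR (A i) (B i) (posn (A j) (B j) (Real.cos t)))) * N ψ θ j t
        = lk (A j) (B j) (posn (A i) (B i) (Real.cos s) : ℂ) t * N ψ θ j t
        - 2 * ((∫ τ, Real.log ‖ee τ - ee s‖ * PK (A i) (B i) (posn (A j) (B j) (Real.cos t))
      (posn (A i) (B i) (Real.cos τ)) ∂cm) * N ψ θ j t) := by
      intro t
      have hy := posn_notMem (h.hAB j) (h.hdisj i j hij) (cos_mem t)
      have e : ∀ τ, PK (A i) (B i) (posn (A j) (B j) (Real.cos t)) (posn (A i) (B i) (Real.cos τ))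
        = pk (rhoR (A i) (B i) (posn (A j) (B j) (Real.cos t)) : ℂ) τ := fun τ =>
        PK_eq_pk (h.hAB i) hy τ
      have e2 : ∫ τ, Real.log ‖ee τ - ee s‖ * PK (A i) (B i) (posn (A j) (B j) (Real.cos t))
          (posn (A i) (B i) (Real.cos τ)) ∂cm
          = Real.log ‖ee s - (rhoR (A i) (B i) (posn (A j) (B j) (Real.cos t)) : ℂ)‖ := by
        simp only [e]
        rw [norm_sub_rev, ← integral_pk_log (h.rho_lt hij t) s]
        exact integral_congr_ae (Eventually.of_forall fun τ => mul_comm _ _)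
      have e3 := log_sub_posn (h.hAB i) hy s
      have e4 : lk (A j) (B j) (posn (A i) (B i) (Real.cos s) : ℂ) t
          = Real.log |posn (A j) (B j) (Real.cos t) - posn (A i) (B i) (Real.cos s)| := by
        unfold lk
        rw [← Complex.ofReal_sub, Complex.norm_real, Real.norm_eq_abs, abs_sub_comm]
      rw [e2, e4, e3]; ring
    simp only [e1]
    rw [integral_sub (lk_mul_integrable (h.hAB j) _ (h.N_meas j) (h2 j))
      ((h.adj_integrable hij hlog).const_mul 2), integral_const_mul]
    ring
  rw [hPhi, hV, h.own_part i s, h.adj i hlog, Finset.mul_sum, Finset.sum_congr rfl hcross,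
    Finset.sum_add_distrib, Finset.sum_neg_distrib]
  ring

lemma claimB (h : USol d A B ψ θ) (i : Fin d) {ρ : ℂ} (hρ : ‖ρ‖ < 1) :
    Phi ψ θ i ρ = ∫ s, pk ρ s * Phi ψ θ i (ee s) ∂cm := by
  obtain ⟨M, h0, h1⟩ := h.bt_bdd i
  obtain ⟨K, hK⟩ := (isCompact_Icc (a := (0:ℝ)) (b := 2 * Real.pi)).exists_bound_of_continuousOn
    (continuous_pk hρ).continuousOn
  have hpkb : ∀ᵐ s ∂cm, ‖pk ρ s‖ ≤ K := by
    unfold cm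
    refine Measure.ae_smul_measure ?_ _
    filter_upwards [ae_restrict_mem measurableSet_Ioc] with s hs
    exact hK s (Ioc_subset_Icc_self hs)
  have hI1 : Integrable (fun p : ℝ × ℝ => Real.log ‖ee p.2 - ee p.1‖ * bt ψ θ i p.2) (cm.prod cm) :=
    log_ee_prod.mul_bdd (c := M) ((h.bt_meas i).comp measurable_snd).aestronglyMeasurable
      (Eventually.of_forall fun p => h1 p.2)
  have hI2 : Integrable (fun p : ℝ × ℝ => Real.log ‖ee p.2 - ee p.1‖ * bt ψ θ i p.2 * pk ρ p.1)
      (cm.prod cm) :=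
    hI1.mul_bdd (c := K) ((continuous_pk hρ).comp continuous_fst).aestronglyMeasurable
      (Measure.quasiMeasurePreserving_fst.ae hpkb)
  have e1 : ∀ s, pk ρ s * Phi ψ θ i (ee s)
      = -2 * ∫ t, Real.log ‖ee t - ee s‖ * bt ψ θ i t * pk ρ s ∂cm := by
    intro s
    rw [integral_mul_const]
    unfold Phi
    ring
  simp only [e1]
  rw [integral_const_mul, integral_integral_swap hI2]
  unfold Phi
  congr 1
  refine integral_congr_ae (Eventually.of_forall fun t => ?_)
  simp only
  have e2 : ∀ s, Real.log ‖ee t - ee s‖ * bt ψ θ i t * pk ρ s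
      = pk ρ s * Real.log ‖ee s - ee t‖ * bt ψ θ i t := by
    intro s
    rw [norm_sub_rev]; ring
  simp only [e2]
  rw [integral_mul_const, integral_pk_log hρ, norm_sub_rev]

end USol

lemma ee_sub_rr (t s r : ℝ) :
    ‖ee t - r * ee s‖ ^ 2 = (1 - r) ^ 2 + r * ‖ee t - ee s‖ ^ 2 := by
  rw [norm_sq_eq, norm_sq_eq]
  simp only [Complex.sub_re, Complex.sub_im, Complex.mul_re, Complex.mul_im, ee_re, ee_im,
    Complex.ofReal_re, Complex.ofReal_im]
  have h1 := Real.sin_sq_add_cos_sq t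
  have h2 := Real.sin_sq_add_cos_sq s
  linear_combination (1 - r) * h1 + (r ^ 2 - r) * h2

lemma cos_sub_le_ee (t s : ℝ) : |Real.cos t - Real.cos s| ≤ ‖ee t - ee s‖ := by
  have := Complex.abs_re_le_norm (ee t - ee s)
  rwa [Complex.sub_re, ee_re, ee_re] at this

/-- the logarithmic comparison kernel -/
lemma LL_facts {r : ℝ} (h0 : 0 < r) (h1 : r < 1) (t s : ℝ) (hne : ee t ≠ ee s) :
    0 ≤ 2 * Real.log ‖ee t - r * ee s‖ - 2 * Real.log ‖ee t - ee s‖ - Real.log r ∧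
    (2 * Real.log ‖ee t - r * ee s‖ - 2 * Real.log ‖ee t - ee s‖ - Real.log r) *
      ‖ee t - ee s‖ ^ 2 ≤ (1 - r) ^ 2 / r := by
  have hd : 0 < ‖ee t - ee s‖ := norm_pos_iff.mpr (sub_ne_zero.mpr hne)
  have hn : ‖(r : ℂ) * ee s‖ < 1 := by
    rw [norm_mul, norm_ee, Complex.norm_real, mul_one, Real.norm_of_nonneg h0.le]; exact h1
  have hρ : 0 < ‖ee t - r * ee s‖ := norm_pos_iff.mpr (ee_sub_ne hn t)
  set d := ‖ee t - ee s‖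
  have e : 2 * Real.log ‖ee t - r * ee s‖ - 2 * Real.log d - Real.log r
      = Real.log (1 + (1 - r) ^ 2 / (r * d ^ 2)) := by
    have h2 : (1 + (1 - r) ^ 2 / (r * d ^ 2)) = ‖ee t - r * ee s‖ ^ 2 / d ^ 2 / r := by
      rw [ee_sub_rr]; field_simp; ring
    rw [h2, Real.log_div (by positivity) h0.ne', Real.log_div (by positivity) (by positivity),
      Real.log_pow, Real.log_pow]
    push_cast; ring
  rw [e]
  have hp : 0 ≤ (1 - r) ^ 2 / (r * d ^ 2) := by positivity
  refine ⟨Real.log_nonneg (by linarith), ?_⟩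
  have h3 := Real.log_le_sub_one_of_pos (show 0 < 1 + (1 - r) ^ 2 / (r * d ^ 2) by linarith)
  calc Real.log (1 + (1 - r) ^ 2 / (r * d ^ 2)) * d ^ 2
      ≤ ((1 - r) ^ 2 / (r * d ^ 2)) * d ^ 2 := by gcongr; linarith
    _ = (1 - r) ^ 2 / r := by field_simp

namespace USol

variable {d : ℕ} {A B : Fin d → ℝ} {ψ θ : Fin d → ℝ → ℝ}

lemma bt_upper (h : USol d A B ψ θ) (i : Fin d) (s0 : ℝ) (hκ : 0 ≤ ψ i (Real.cos s0))
    {ε : ℝ} (hε : 0 < ε) : ∃ K, 0 ≤ K ∧ ∀ t,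
      bt ψ θ i t ≤ -ψ i (Real.cos s0) + ε + K * ‖ee t - ee s0‖ ^ 2 := by
  obtain ⟨M, h0, hM⟩ := h.bt_bdd i
  have hc := Metric.continuous_iff.mp (h.cont i) (Real.cos s0) (ε / 2) (by linarith)
  obtain ⟨δ, hδ, hc⟩ := hc
  refine ⟨(M + ψ i (Real.cos s0)) / δ ^ 2, by positivity, fun t => ?_⟩
  by_cases hd : ‖ee t - ee s0‖ < δ
  · have h1 := hc (Real.cos t) (by rw [Real.dist_eq]; exact (cos_sub_le_ee _ _).trans_lt hd)
    rw [Real.dist_eq, abs_lt] at h1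
    have h2 : 0 ≤ (M + ψ i (Real.cos s0)) / δ ^ 2 * ‖ee t - ee s0‖ ^ 2 := by positivity
    have h3 := h.nonneg i (Real.cos t)
    have h4 := h.le_one i (Real.cos t)
    unfold bt N
    rcases le_total 0 (ψ i (Real.cos t)) with h5 | h5
    · nlinarith
    · nlinarith
  · push Not at hd
    have h1 := (le_abs_self _).trans (hM t)
    have h2 : (M + ψ i (Real.cos s0)) ≤ (M + ψ i (Real.cos s0)) / δ ^ 2 * ‖ee t - ee s0‖ ^ 2 := by
      rw [div_mul_eq_mul_div, le_div_iff₀ (by positivity)]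
      gcongr
    linarith

lemma claimC_ineq (h : USol d A B ψ θ) (i : Fin d) (s0 : ℝ) (hmass : 0 ≤ mass ψ θ)
    (hmax : ∀ s, V A B ψ θ (posn (A i) (B i) (Real.cos s) : ℂ)
      ≤ V A B ψ θ (posn (A i) (B i) (Real.cos s0) : ℂ))
    (hκ : 0 ≤ ψ i (Real.cos s0)) :
    mass ψ θ + ψ i (Real.cos s0) + (∫ s, (V A B ψ θ (posn (A i) (B i) (Real.cos s0) : ℂ)
      - V A B ψ θ (posn (A i) (B i) (Real.cos s) : ℂ)) ∂cm) / 2 ≤ 0 := by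
  obtain ⟨M, hM0, hM⟩ := h.bt_bdd i
  obtain ⟨KA, hKA⟩ := h.claimA i
  have hVc : Continuous fun s : ℝ => V A B ψ θ (posn (A i) (B i) (Real.cos s) : ℂ) :=
    h.V_cont.comp (Complex.continuous_ofReal.comp (continuous_posn_cos _ _))
  set F : ℝ → ℝ := fun s => V A B ψ θ (posn (A i) (B i) (Real.cos s0) : ℂ)
      - V A B ψ θ (posn (A i) (B i) (Real.cos s) : ℂ) with hF
  have hFc : Continuous F := continuous_const.sub hVc
  have hF0 : ∀ s, 0 ≤ F s := fun s => sub_nonneg.mpr (hmax s)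
  have hFi := cm_integrable_of_continuous hFc
  set c := ∫ s, F s ∂cm with hc
  have hc0 : 0 ≤ c := integral_nonneg hF0
  set κ := ψ i (Real.cos s0) with hκd
  refine le_of_forall_pos_le_add fun ε hε => ?_
  obtain ⟨K, hK0, hK⟩ := h.bt_upper i s0 hκ hε
  have key : ∀ r : ℝ, 0 < r → r < 1 → (mass ψ θ + κ + c / 2) * r ≤ ε + K * (1 - r) := by
    intro r hr0 hr1
    have hn : ‖(r : ℂ) * ee s0‖ = r := by
      rw [norm_mul, norm_ee, Complex.norm_real, mul_one, Real.norm_of_nonneg hr0.le]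
    have hn1 : ‖(r : ℂ) * ee s0‖ < 1 := by rw [hn]; exact hr1
    -- lower bound
    have lower : (1 - r) / 2 * c ≤ Phi ψ θ i (ee s0) - Phi ψ θ i (r * ee s0) := by
      have hpkF : Continuous fun s => pk (r * ee s0) s * F s := (continuous_pk hn1).mul hFc
      have e1 : Phi ψ θ i (ee s0) - Phi ψ θ i (r * ee s0) = ∫ s, pk (r * ee s0) s * F s ∂cm := by
        rw [h.claimB i hn1]
        have e2 : ∀ s, pk (r * ee s0) s * F s = pk (r * ee s0) s * Phi ψ θ i (ee s0)
            - pk (r * ee s0) s * Phi ψ θ i (ee s) := by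
          intro s
          rw [hKA s, hKA s0, hF]; ring
        simp only [e2]
        have hPc : Continuous fun s => Phi ψ θ i (ee s) := by
          simp only [hKA]; exact hVc.add continuous_const
        have hPi : Integrable (fun s => pk (r * ee s0) s * Phi ψ θ i (ee s)) cm :=
          cm_integrable_of_continuous ((continuous_pk hn1).mul hPc)
        rw [integral_sub ((cm_integrable_of_continuous (continuous_pk hn1)).mul_const _)
          hPi, integral_mul_const,
          integral_pk hn1, one_mul]
      rw [e1, hc, ← integral_const_mul]
      refine integral_mono (hFi.const_mul _) (cm_integrable_of_continuous hpkF) fun s => ?_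
      have := pk_lower hn1 s
      rw [hn] at this
      exact mul_le_mul_of_nonneg_right this (hF0 s)
    -- upper bound
    set G : ℝ → ℝ := fun t =>
      2 * Real.log ‖ee t - r * ee s0‖ - 2 * Real.log ‖ee t - ee s0‖ - Real.log r with hG
    have hGi : Integrable G cm := (((integrable_log_ee _).const_mul 2).sub
      ((integrable_log_ee _).const_mul 2)).sub (integrable_const _)
    have hGint : ∫ t, G t ∂cm = -Real.log r := by
      have hi2 : Integrable (fun t => 2 * Real.log ‖ee t - r * ee s0‖
        - 2 * Real.log ‖ee t - ee s0‖) cm := ((integrable_log_ee _).const_mul 2).sub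
          ((integrable_log_ee _).const_mul 2)
      rw [hG, integral_sub hi2 (integrable_const _), integral_sub ((integrable_log_ee _).const_mul 2)
          ((integrable_log_ee _).const_mul 2), integral_const_mul, integral_const_mul,
          integral_log_ee, integral_log_ee, norm_ee, hn]
      have : Real.posLog r = 0 := by
        rw [Real.posLog_eq_zero_iff, abs_of_pos hr0]; exact hr1.le
      rw [this]
      simp
    have hGb : Integrable (fun t => G t * bt ψ θ i t) cm :=
      hGi.mul_bdd (c := M) (h.bt_meas i).aestronglyMeasurable (Eventually.of_forall hM)
    have hlogb : ∀ a : ℂ, Integrable (fun t => Real.log ‖ee t - a‖ * bt ψ θ i t) cm := fun a =>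
      (integrable_log_ee a).mul_bdd (c := M) (h.bt_meas i).aestronglyMeasurable
        (Eventually.of_forall hM)
    have eqn : Phi ψ θ i (ee s0) - Phi ψ θ i (r * ee s0)
        = ∫ t, G t * bt ψ θ i t ∂cm + Real.log r * mass ψ θ := by
      rw [← h.bt_mass i, ← integral_const_mul, ← integral_add hGb ((h.bt_integrable i).const_mul _)]
      unfold Phi
      rw [← integral_const_mul, ← integral_const_mul, ← integral_sub ((hlogb _).const_mul _)
        ((hlogb _).const_mul _)]
      refine integral_congr_ae (Eventually.of_forall fun t => ?_)
      simp only [hG]; ring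
    have upper : ∫ t, G t * bt ψ θ i t ∂cm
        ≤ (-κ + ε) * (-Real.log r) + K * ((1 - r) ^ 2 / r) := by
      have e3 : (-κ + ε) * (-Real.log r) + K * ((1 - r) ^ 2 / r)
          = ∫ t, ((-κ + ε) * G t + K * ((1 - r) ^ 2 / r)) ∂cm := by
        rw [integral_add (hGi.const_mul _) (integrable_const _), integral_const_mul, hGint]
        simp
      rw [e3]
      refine integral_mono_ae hGb ((hGi.const_mul _).add (integrable_const _)) ?_
      filter_upwards [ae_ee_ne (ee s0)] with t ht
      obtain ⟨g1, g2⟩ := LL_facts hr0 hr1 t s0 ht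
      have g3 : 0 ≤ G t := g1
      have g4 : G t * ‖ee t - ee s0‖ ^ 2 ≤ (1 - r) ^ 2 / r := g2
      calc G t * bt ψ θ i t ≤ G t * (-κ + ε + K * ‖ee t - ee s0‖ ^ 2) :=
            mul_le_mul_of_nonneg_left (hK t) g3
        _ = (-κ + ε) * G t + K * (G t * ‖ee t - ee s0‖ ^ 2) := by ring
        _ ≤ _ := by gcongr
    have l1 : 1 - r ≤ -Real.log r := by
      have := Real.log_le_sub_one_of_pos hr0; linarith
    have l2 : -Real.log r ≤ (1 - r) / r := by
      have := Real.log_le_sub_one_of_pos (inv_pos.mpr hr0)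
      rw [Real.log_inv] at this
      have e : (1 - r) / r = r⁻¹ - 1 := by field_simp
      rw [e]; exact this
    have tot : (1 - r) / 2 * c ≤ (-κ + ε) * (-Real.log r) + K * ((1 - r) ^ 2 / r)
        + Real.log r * mass ψ θ := by linarith
    have t2 : (mass ψ θ + κ + c / 2) * (1 - r) ≤ (ε + K * (1 - r)) * ((1 - r) / r) := by
      have a1 : mass ψ θ * (1 - r) ≤ mass ψ θ * (-Real.log r) := mul_le_mul_of_nonneg_left l1 hmass
      have a2 : κ * (1 - r) ≤ κ * (-Real.log r) := mul_le_mul_of_nonneg_left l1 hκ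
      have a3 : ε * (-Real.log r) ≤ ε * ((1 - r) / r) := mul_le_mul_of_nonneg_left l2 hε.le
      have a4 : K * ((1 - r) ^ 2 / r) = K * (1 - r) * ((1 - r) / r) := by ring
      linarith
    have h1r : 0 < 1 - r := by linarith
    rw [← mul_div_assoc, le_div_iff₀ hr0] at t2
    have t3 : (mass ψ θ + κ + c / 2) * r * (1 - r) ≤ (ε + K * (1 - r)) * (1 - r) := by linarith
    exact le_of_mul_le_mul_right t3 h1r
  have lim1 : Tendsto (fun r : ℝ => (mass ψ θ + κ + c / 2) * r) (𝓝[<] 1)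
      (𝓝 ((mass ψ θ + κ + c / 2) * 1)) :=
    ((by fun_prop : Continuous fun r : ℝ => (mass ψ θ + κ + c / 2) * r).tendsto 1).mono_left
      nhdsWithin_le_nhds
  have lim2 : Tendsto (fun r : ℝ => ε + K * (1 - r)) (𝓝[<] 1) (𝓝 (ε + K * (1 - 1))) :=
    ((by fun_prop : Continuous fun r : ℝ => ε + K * (1 - r)).tendsto 1).mono_left
      nhdsWithin_le_nhds
  have := le_of_tendsto_of_tendsto lim1 lim2 (by
    filter_upwards [Ioo_mem_nhdsLT (show (0:ℝ) < 1 by norm_num)] with r hr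
    exact key r hr.1 hr.2)
  linarith

lemma claimC (h : USol d A B ψ θ) (i : Fin d) (s0 : ℝ) (hmass : 0 ≤ mass ψ θ)
    (hmax : ∀ s, V A B ψ θ (posn (A i) (B i) (Real.cos s) : ℂ)
      ≤ V A B ψ θ (posn (A i) (B i) (Real.cos s0) : ℂ))
    (hκ : 0 ≤ ψ i (Real.cos s0)) :
    ψ i (Real.cos s0) = 0 ∧ ∀ s ∈ Icc 0 (2 * Real.pi),
      V A B ψ θ (posn (A i) (B i) (Real.cos s) : ℂ)
      = V A B ψ θ (posn (A i) (B i) (Real.cos s0) : ℂ) := by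
  have h1 := h.claimC_ineq i s0 hmass hmax hκ
  have hVc : Continuous fun s : ℝ => V A B ψ θ (posn (A i) (B i) (Real.cos s) : ℂ) :=
    h.V_cont.comp (Complex.continuous_ofReal.comp (continuous_posn_cos _ _))
  have hc0 : 0 ≤ ∫ s, (V A B ψ θ (posn (A i) (B i) (Real.cos s0) : ℂ)
      - V A B ψ θ (posn (A i) (B i) (Real.cos s) : ℂ)) ∂cm :=
    integral_nonneg fun s => sub_nonneg.mpr (hmax s)
  refine ⟨by linarith, fun s hs => ?_⟩
  have := zero_of_integral_cm (f := fun s => V A B ψ θ (posn (A i) (B i) (Real.cos s0) : ℂ)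
      - V A B ψ θ (posn (A i) (B i) (Real.cos s) : ℂ)) (continuous_const.sub hVc) (fun s => sub_nonneg.mpr (hmax s))
    (by linarith) s hs
  linarith

end USol

lemma isClosed_intervals {d : ℕ} (A B : Fin d → ℝ) (P : Fin d → Prop) :
    IsClosed {z : ℂ | ∃ j, P j ∧ ∃ x ∈ Icc (A j) (B j), z = (x : ℂ)} := by
  have : {z : ℂ | ∃ j, P j ∧ ∃ x ∈ Icc (A j) (B j), z = (x : ℂ)}
      = ⋃ j ∈ {j | P j}, Complex.ofReal '' Icc (A j) (B j) := by
    ext z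
    simp only [mem_setOf_eq, mem_iUnion, mem_image, exists_prop]
    constructor
    · rintro ⟨j, hj, x, hx, rfl⟩; exact ⟨j, hj, x, hx, rfl⟩
    · rintro ⟨j, hj, x, hx, rfl⟩; exact ⟨j, hj, x, hx, rfl⟩
  rw [this]
  exact (Set.toFinite _).isClosed_biUnion fun j _ =>
    (isCompact_Icc.image Complex.continuous_ofReal).isClosed

namespace USol

variable {d : ℕ} {A B : Fin d → ℝ} {ψ θ : Fin d → ℝ → ℝ}

lemma sep (h : USol d A B ψ θ) (i : Fin d) (t : ℝ) : ∃ r > 0, ∀ j ≠ i, ∀ t',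
    r ≤ ‖(posn (A i) (B i) (Real.cos t) : ℂ) - (posn (A j) (B j) (Real.cos t') : ℂ)‖ := by
  have hc := (isClosed_intervals A B (fun j => j ≠ i)).isOpen_compl
  have hm : (posn (A i) (B i) (Real.cos t) : ℂ) ∈
      {z : ℂ | ∃ j, j ≠ i ∧ ∃ x ∈ Icc (A j) (B j), z = (x : ℂ)}ᶜ := by
    rintro ⟨j, hj, x, hx, he⟩
    have he' := Complex.ofReal_injective he
    exact (Set.disjoint_left.mp (h.hdisj j i hj)) hx (he' ▸ posn_mem (h.hAB i) (cos_mem t))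
  obtain ⟨r, hr, hb⟩ := Metric.isOpen_iff.mp hc _ hm
  refine ⟨r, hr, fun j hj t' => ?_⟩
  by_contra hlt
  push Not at hlt
  refine hb (show (posn (A j) (B j) (Real.cos t') : ℂ) ∈ Metric.ball _ r from ?_)
    ⟨j, hj, _, posn_mem (h.hAB j) (cos_mem t'), rfl⟩
  rw [Metric.mem_ball, dist_comm, dist_eq_norm]
  exact hlt

lemma no_max (h : USol d A B ψ θ) (hmass : 0 ≤ mass ψ θ) (m : ℝ)
    (hle : ∀ z, V A B ψ θ z ≤ m) (hne : {z | V A B ψ θ z = m}.Nonempty)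
    (hcpt : IsCompact {z | V A B ψ θ z = m}) : False := by
  obtain ⟨z0, hz0, hmax⟩ := hcpt.exists_isMaxOn hne Complex.continuous_im.continuousOn
  have lift : ∀ c : ℂ, V A B ψ θ c = m → c.im = z0.im → ∀ r > 0,
      (∀ j t, ‖c - (posn (A j) (B j) (Real.cos t) : ℂ)‖ < r → N ψ θ j t ≤ 0) → False := by
    intro c hc him r hr hneg
    have h1 := h.V_lift c hr (fun z => hc ▸ hle z) hneg
    have h2 := hmax (show c + r * Complex.I ∈ {z | V A B ψ θ z = m} from h1.trans hc)
    simp only [mem_setOf_eq, Complex.add_im, Complex.mul_im, Complex.ofReal_re, Complex.I_im,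
      Complex.ofReal_im, Complex.I_re] at h2
    linarith
  by_cases hin : z0 ∈ {z : ℂ | ∃ j, True ∧ ∃ x ∈ Icc (A j) (B j), z = (x : ℂ)}
  · obtain ⟨i, -, x, hx, he⟩ := hin
    have him0 : z0.im = 0 := by rw [he]; simp
    obtain ⟨t0, -, hxt⟩ := mem_posn (h.hAB i) hx
    have hnn : ∀ t, V A B ψ θ (posn (A i) (B i) (Real.cos t) : ℂ) = m → 0 ≤ ψ i (Real.cos t) := by
      intro t ht
      by_contra hlt
      push Not at hlt
      obtain ⟨r, hr, hsep⟩ := h.sep i t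
      have hev := ((h.cont i).tendsto (Real.cos t)).eventually_lt_const hlt
      obtain ⟨δ, hδ, hb⟩ := Metric.eventually_nhds_iff.mp hev
      have hba : 0 < B i - A i := by linarith [h.hAB i]
      refine lift _ ht (by rw [him0]; simp) (min r ((B i - A i) / 2 * δ)) (by positivity) ?_
      intro j t' hlt'
      by_cases hj : j = i
      · subst hj
        have h1 := hlt'.trans_le (min_le_right _ _)
        have h2 : ‖(posn (A j) (B j) (Real.cos t) : ℂ) - (posn (A j) (B j) (Real.cos t') : ℂ)‖
            = (B j - A j) / 2 * |Real.cos t' - Real.cos t| := by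
          rw [← Complex.ofReal_sub, Complex.norm_real, Real.norm_eq_abs, abs_sub_comm]
          have : posn (A j) (B j) (Real.cos t') - posn (A j) (B j) (Real.cos t)
              = (B j - A j) / 2 * (Real.cos t' - Real.cos t) := by unfold posn; ring
          rw [this, abs_mul, abs_of_pos (by linarith)]
        rw [h2] at h1
        have h3 := lt_of_mul_lt_mul_left h1 (by linarith)
        have h4 := hb (y := Real.cos t') (by rw [Real.dist_eq]; exact h3)
        exact mul_nonpos_of_nonneg_of_nonpos (h.nonneg _ _) h4.le
      · exact absurd (hlt'.trans_le (min_le_left _ _)) (not_lt.mpr (hsep j hj t'))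
    have hVt0 : V A B ψ θ (posn (A i) (B i) (Real.cos t0) : ℂ) = m := by
      rw [← hxt, ← he]; exact hz0
    have hall := (h.claimC i t0 hmass (fun s => hVt0 ▸ hle _) (hnn t0 hVt0)).2
    have hzero : ∀ t, ψ i (Real.cos t) = 0 := by
      intro t
      have h1 : Real.arccos (Real.cos t) ∈ Icc 0 (2 * Real.pi) :=
        ⟨Real.arccos_nonneg _, (Real.arccos_le_pi _).trans (by linarith [Real.pi_pos])⟩
      have h2 := (hall _ h1).trans hVt0
      have h3 := (h.claimC i _ hmass (fun s => h2 ▸ hle _) (hnn _ h2)).1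
      rwa [Real.cos_arccos (Real.neg_one_le_cos t) (Real.cos_le_one t)] at h3
    obtain ⟨r, hr, hsep⟩ := h.sep i t0
    refine lift _ hVt0 (by rw [him0]; simp) r hr fun j t' hlt' => ?_
    by_cases hj : j = i
    · subst hj
      unfold N; rw [hzero]; simp
    · exact absurd hlt' (not_lt.mpr (hsep j hj t'))
  · obtain ⟨r, hr, hb⟩ := Metric.isOpen_iff.mp
      (isClosed_intervals A B (fun _ => True)).isOpen_compl z0 hin
    refine lift z0 hz0 rfl r hr fun j t hlt => ?_
    exfalso
    refine hb (show (posn (A j) (B j) (Real.cos t) : ℂ) ∈ Metric.ball _ r from ?_)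
      ⟨j, trivial, _, posn_mem (h.hAB j) (cos_mem t), rfl⟩
    rw [Metric.mem_ball, dist_comm, dist_eq_norm]
    exact hlt

/-- abstract form: a positive value larger than the limsup at infinity is impossible -/
lemma no_max' (h : USol d A B ψ θ) (hmass : 0 ≤ mass ψ θ) (z1 : ℂ) 
    (hinf : ∀ᶠ z in Filter.cocompact ℂ, V A B ψ θ z < V A B ψ θ z1) : False := by
  have hcl : ∀ᶠ z in Filter.cocompact ℂ, V A B ψ θ z ≤ V A B ψ θ z1 := hinf.mono fun z hz => hz.le
  obtain ⟨z2, hz2⟩ := h.V_cont.exists_forall_ge' z1 hcl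
  refine h.no_max hmass (V A B ψ θ z2) hz2 ⟨z2, rfl⟩ ?_
  obtain ⟨K, hK, hs⟩ := Filter.mem_cocompact.mp hinf
  refine hK.of_isClosed_subset (isClosed_eq h.V_cont continuous_const) fun z hz => ?_
  by_contra hz'
  have h1 : V A B ψ θ z < V A B ψ θ z1 := hs hz'
  have h2 := hz2 z1
  have h3 : V A B ψ θ z = V A B ψ θ z2 := hz
  linarith

lemma mass_nonpos (h : USol d A B ψ θ) : mass ψ θ ≤ 0 := by
  by_contra hm
  push Not at hm
  refine h.no_max' hm.le 0 ?_
  have h1 := h.V_infty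
  have h2 : Tendsto (fun z : ℂ => Real.log ‖z‖) (Filter.cocompact ℂ) atTop :=
    Real.tendsto_log_atTop.comp (tendsto_norm_cocompact_atTop)
  have h3 := h1.eventually_lt_const (show (0:ℝ) < 1 by norm_num)
  have h4 := (h2.const_mul_atTop hm).eventually_gt_atTop (1 - V A B ψ θ 0)
  filter_upwards [h3, h4] with z h5 h6
  linarith

lemma V_nonpos (h : USol d A B ψ θ) (hm : mass ψ θ = 0) (z : ℂ) : V A B ψ θ z ≤ 0 := by
  by_contra hv
  push Not at hv
  have h1 := h.V_infty
  rw [hm] at h1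
  refine h.no_max' hm.ge z ?_
  filter_upwards [h1.eventually_lt_const hv] with z h5
  linarith

theorem uniq (h : USol d A B ψ θ) (i : Fin d) (s : ℝ) (hs : s ∈ Icc (-1:ℝ) 1) : ψ i s = 0 := by
  have hm : mass ψ θ = 0 := by
    refine le_antisymm h.mass_nonpos ?_
    have := h.neg.mass_nonpos
    rw [mass_neg] at this
    linarith
  have hm' : mass (fun i s => -ψ i s) θ = 0 := by rw [mass_neg, hm, neg_zero]
  have hV : ∀ z, V A B ψ θ z = 0 := by
    intro z
    refine le_antisymm (h.V_nonpos hm z) ?_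
    have := h.neg.V_nonpos hm' z
    rw [V_neg] at this
    linarith
  have hV' : ∀ z, V A B (fun i s => -ψ i s) θ z = 0 := fun z => by rw [V_neg, hV, neg_zero]
  have hs' : Real.cos (Real.arccos s) = s := Real.cos_arccos hs.1 hs.2
  rcases le_total 0 (ψ i s) with h0 | h0
  · have := (h.claimC i (Real.arccos s) hm.ge (fun t => by rw [hV, hV]) (by rwa [hs'])).1
    rwa [hs'] at this
  · have := (h.neg.claimC i (Real.arccos s) hm'.ge (fun t => by rw [hV', hV'])
      (by rw [hs']; linarith)).1
    rw [hs'] at this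
    linarith

end USol

section FA

variable {X : Type*} [TopologicalSpace X] [CompactSpace X]

/-- integral type operator attached to a functional and a kernel -/
def TT (l : C(X, ℝ) →L[ℝ] ℝ) (κ : C(X, C(X, ℝ))) : C(X, ℝ) →L[ℝ] C(X, ℝ) :=
  LinearMap.mkContinuous
    { toFun := fun ψ => ⟨fun s => l (κ s * ψ), by fun_prop⟩
      map_add' := fun f g => by ext s; simp [mul_add]
      map_smul' := fun c f => by ext s; simp }
    (‖l‖ * ‖κ‖) (fun ψ => by
      rw [ContinuousMap.norm_le _ (by positivity)]
      intro s
      refine (l.le_opNorm _).trans ?_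
      rw [mul_assoc]
      refine mul_le_mul_of_nonneg_left ?_ (norm_nonneg _)
      exact (norm_mul_le _ _).trans (mul_le_mul_of_nonneg_right (κ.norm_coe_le_norm s) (norm_nonneg _)))

lemma TT_apply (l : C(X, ℝ) →L[ℝ] ℝ) (κ : C(X, C(X, ℝ))) (ψ : C(X, ℝ)) (s : X) :
    TT l κ ψ s = l (κ s * ψ) := rfl

lemma TT_norm (l : C(X, ℝ) →L[ℝ] ℝ) (κ : C(X, C(X, ℝ))) : ‖TT l κ‖ ≤ ‖l‖ * ‖κ‖ :=
  LinearMap.mkContinuous_norm_le _ (by positivity) _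

lemma TT_sub (l l' : C(X, ℝ) →L[ℝ] ℝ) (κ κ' : C(X, C(X, ℝ))) :
    TT l' κ' - TT l κ = TT (l' - l) κ' + TT l (κ' - κ) := by
  ext ψ s
  simp only [sub_apply, add_apply, ContinuousMap.sub_apply,
    ContinuousMap.add_apply, TT_apply, sub_mul, map_sub]
  ring

lemma TT_tendsto {l : C(X, ℝ) →L[ℝ] ℝ} {κ : C(X, C(X, ℝ))} {ln : ℕ → C(X, ℝ) →L[ℝ] ℝ}
    {κn : ℕ → C(X, C(X, ℝ))} (hl : Tendsto ln atTop (𝓝 l)) (hκ : Tendsto κn atTop (𝓝 κ)) :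
    Tendsto (fun n => TT (ln n) (κn n)) atTop (𝓝 (TT l κ)) := by
  replace hl := (tendsto_iff_norm_sub_tendsto_zero (E := C(X, ℝ) →L[ℝ] ℝ)).mp hl
  replace hκ := (tendsto_iff_norm_sub_tendsto_zero (E := C(X, C(X, ℝ)))).mp hκ
  refine (tendsto_iff_norm_sub_tendsto_zero (E := C(X, ℝ) →L[ℝ] C(X, ℝ))).mpr ?_
  have hb : Tendsto (fun n => ‖ln n - l‖ * (‖κn n - κ‖ + ‖κ‖) + ‖l‖ * ‖κn n - κ‖) atTop (𝓝 0) := by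
    have := (hl.mul (hκ.add_const ‖κ‖)).add (hκ.const_mul ‖l‖)
    simpa using this
  refine squeeze_zero (fun n => norm_nonneg (E := C(X, ℝ) →L[ℝ] C(X, ℝ)) _) (fun n => ?_) hb
  rw [TT_sub]
  refine (norm_add_le (E := C(X, ℝ) →L[ℝ] C(X, ℝ)) _ _).trans (add_le_add ((TT_norm _ _).trans ?_) (TT_norm _ _))
  gcongr
  have := norm_add_le (κn n - κ) κ
  simpa using this

lemma TT_compact (l : C(X, ℝ) →L[ℝ] ℝ) (κ : C(X, C(X, ℝ))) : IsCompactOperator (TT l κ) := by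
  let K : Set C(X, ℝ) := {f | (∀ x, |f x| ≤ ‖l‖ * ‖κ‖) ∧ ∀ x y, |f x - f y| ≤ ‖l‖ * ‖κ x - κ y‖}
  refine ⟨K, ?_, ?_⟩
  · have cont_of : ∀ f : X → ℝ, (∀ x y, |f x - f y| ≤ ‖l‖ * ‖κ x - κ y‖) → Continuous f := by
      intro f hf
      rw [continuous_iff_continuousAt]
      intro y
      rw [ContinuousAt, tendsto_iff_norm_sub_tendsto_zero]
      have h1 : Tendsto (fun x => ‖l‖ * ‖κ x - κ y‖) (𝓝 y) (𝓝 0) := by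
        have : Continuous fun x => ‖l‖ * ‖κ x - κ y‖ := by fun_prop
        simpa using this.tendsto y
      exact squeeze_zero (fun _ => norm_nonneg _) (fun x => hf x y) h1
    refine ArzelaAscoli.isCompact_of_equicontinuous K ?_ ?_
    · have : (ContinuousMap.toFun '' K : Set (X → ℝ)) =
          {f | (∀ x, |f x| ≤ ‖l‖ * ‖κ‖) ∧ ∀ x y, |f x - f y| ≤ ‖l‖ * ‖κ x - κ y‖} := by
        ext f
        constructor
        · rintro ⟨g, hg, rfl⟩; exact hg
        · intro hf; exact ⟨⟨f, cont_of f hf.2⟩, hf, rfl⟩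
      rw [this]
      have hc : IsCompact (Set.pi Set.univ fun _ : X => Icc (-(‖l‖ * ‖κ‖)) (‖l‖ * ‖κ‖)) :=
        isCompact_univ_pi fun _ => isCompact_Icc
      refine hc.of_isClosed_subset ?_ ?_
      · have e : {f : X → ℝ | (∀ x, |f x| ≤ ‖l‖ * ‖κ‖) ∧ ∀ x y, |f x - f y| ≤ ‖l‖ * ‖κ x - κ y‖}
            = (⋂ x, {f : X → ℝ | |f x| ≤ ‖l‖ * ‖κ‖}) ∩
              ⋂ x, ⋂ y, {f : X → ℝ | |f x - f y| ≤ ‖l‖ * ‖κ x - κ y‖} := by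
          ext f; simp
        rw [e]
        refine (isClosed_iInter fun x => isClosed_le (by fun_prop) (by fun_prop)).inter
          (isClosed_iInter fun x => isClosed_iInter fun y => isClosed_le (by fun_prop) (by fun_prop))
      · intro f hf x _
        exact abs_le.mp (hf.1 x)
    · intro x0
      rw [Metric.equicontinuousAt_iff_right]
      intro ε hε
      have h1 : Tendsto (fun x => ‖l‖ * ‖κ x0 - κ x‖) (𝓝 x0) (𝓝 0) := by
        have : Continuous fun x => ‖l‖ * ‖κ x0 - κ x‖ := by fun_prop
        simpa using this.tendsto x0
      filter_upwards [h1.eventually_lt_const hε] with x hx f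
      exact (f.2.2 x0 x).trans_lt hx
  · refine Filter.mem_of_superset (Metric.closedBall_mem_nhds (0 : C(X, ℝ)) one_pos) ?_
    intro ψ hψ
    rw [mem_closedBall_zero_iff] at hψ
    constructor
    · intro x
      rw [TT_apply, ← Real.norm_eq_abs]
      refine (l.le_opNorm _).trans ?_
      refine mul_le_mul_of_nonneg_left ((norm_mul_le _ _).trans ?_) (norm_nonneg _)
      have := κ.norm_coe_le_norm x
      calc ‖κ x‖ * ‖ψ‖ ≤ ‖κ‖ * 1 := by gcongr
        _ = ‖κ‖ := mul_one _
    · intro x y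
      rw [TT_apply, TT_apply, ← map_sub, ← sub_mul, ← Real.norm_eq_abs]
      refine (l.le_opNorm _).trans ?_
      refine mul_le_mul_of_nonneg_left ((norm_mul_le _ _).trans ?_) (norm_nonneg _)
      calc ‖κ x - κ y‖ * ‖ψ‖ ≤ ‖κ x - κ y‖ * 1 := by gcongr
        _ = _ := mul_one _

lemma TT_unit (l : C(X, ℝ) →L[ℝ] ℝ) (κ : C(X, C(X, ℝ)))
    (hinj : ∀ ψ, ψ + TT l κ ψ = 0 → ψ = 0) : IsUnit (1 + TT l κ) := by
  rcases (TT_compact l κ).hasEigenvalue_or_mem_resolventSet (μ := (-1:ℝ)) (by norm_num) with h | h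
  · obtain ⟨v, hv⟩ := h.exists_hasEigenvector
    have h1 := hv.apply_eq_smul
    exfalso
    refine hv.2 (hinj v ?_)
    have h2 : TT l κ v = -v := by simpa using h1
    rw [h2]; simp
  · rw [spectrum.mem_resolventSet_iff] at h
    have : 1 + TT l κ = -((algebraMap ℝ (C(X, ℝ) →L[ℝ] C(X, ℝ))) (-1) - TT l κ) := by
      rw [map_neg, map_one]; abel
    rw [this]
    exact h.neg

lemma TT_solve {l : C(X, ℝ) →L[ℝ] ℝ} {κ : C(X, C(X, ℝ))} {ln : ℕ → C(X, ℝ) →L[ℝ] ℝ}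
    {κn : ℕ → C(X, C(X, ℝ))} (hl : Tendsto ln atTop (𝓝 l)) (hκ : Tendsto κn atTop (𝓝 κ))
    (hinj : ∀ ψ, ψ + TT l κ ψ = 0 → ψ = 0) :
    ∃ C, 0 ≤ C ∧ ∀ᶠ n in atTop, ∀ φ : C(X, ℝ), ∃ ψ, ψ + TT (ln n) (κn n) ψ = φ ∧ ‖ψ‖ ≤ C * ‖φ‖ := by
  have hu := TT_unit l κ hinj
  have ht : Tendsto (fun n => 1 + TT (ln n) (κn n)) atTop (𝓝 (1 + TT l κ)) :=
    (TT_tendsto hl hκ).const_add 1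
  obtain ⟨u, hu'⟩ := hu
  have hopen := (Units.isOpen (R := C(X, ℝ) →L[ℝ] C(X, ℝ))).mem_nhds (show IsUnit (1 + TT l κ) from ⟨u, hu'⟩)
  have hinv := NormedRing.inverse_continuousAt (R := C(X, ℝ) →L[ℝ] C(X, ℝ)) u
  rw [hu'] at hinv
  have hb := Filter.Tendsto.norm (E := C(X, ℝ) →L[ℝ] C(X, ℝ)) (hinv.tendsto.comp ht)
  refine ⟨‖Ring.inverse (1 + TT l κ)‖ + 1, by positivity, ?_⟩
  filter_upwards [ht.eventually hopen, hb.eventually_lt_const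
    (show ‖Ring.inverse (1 + TT l κ)‖ < ‖Ring.inverse (1 + TT l κ)‖ + 1 by linarith)] with n h1 h2 φ
  have h1' : IsUnit (1 + TT (ln n) (κn n)) := h1
  refine ⟨Ring.inverse (1 + TT (ln n) (κn n)) φ, ?_, ?_⟩
  · have := Ring.mul_inverse_cancel _ h1'
    have h3 := congrArg (fun T : C(X, ℝ) →L[ℝ] C(X, ℝ) => T φ) this
    simpa using h3
  · exact (ContinuousLinearMap.le_opNorm _ _).trans
      (mul_le_mul_of_nonneg_right h2.le (norm_nonneg _))

end FA

/-- the compact parameter space -/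
abbrev XX (d : ℕ) := Fin d × Icc (-1 : ℝ) 1

/-- points of the compact parameter space -/
def pt {d : ℕ} (j : Fin d) (t : ℝ) : XX d := (j, ⟨Real.cos t, cos_mem t⟩)

lemma continuous_pt {d : ℕ} (j : Fin d) : Continuous (pt j) := by
  unfold pt; fun_prop

/-- admissible interval collections -/
def Par (d : ℕ) := {p : (Fin d → ℝ) × (Fin d → ℝ) // (∀ i, p.1 i < p.2 i) ∧
  ∀ i j, i ≠ j → Disjoint (Icc (p.1 i) (p.2 i)) (Icc (p.1 j) (p.2 j))}

instance (d : ℕ) : TopologicalSpace (Par d) := instTopologicalSpaceSubtype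

lemma continuous_Par_fst {d : ℕ} (i : Fin d) : Continuous fun p : Par d => p.1.1 i :=
  (continuous_apply i).comp (continuous_fst.comp continuous_subtype_val)

lemma continuous_Par_snd {d : ℕ} (i : Fin d) : Continuous fun p : Par d => p.1.2 i :=
  (continuous_apply i).comp (continuous_snd.comp continuous_subtype_val)

/-- the kernel function -/
def kf {d : ℕ} (q : (Par d × XX d) × XX d) : ℝ :=
  if q.2.1 = q.1.2.1 then 0 else 1 / 2 * PK (q.1.1.1.1 q.1.2.1) (q.1.1.1.2 q.1.2.1)
    (posn (q.1.1.1.1 q.2.1) (q.1.1.1.2 q.2.1) q.2.2)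
    (posn (q.1.1.1.1 q.1.2.1) (q.1.1.1.2 q.1.2.1) q.1.2.2)

lemma kf_ne {d : ℕ} (p : Par d) {i j : Fin d} (hij : j ≠ i) {s : ℝ} {hs : s ∈ Icc (-1 : ℝ) 1} {t : ℝ} :
    kf ((p, (i, ⟨s, hs⟩)), pt j t) = 1 / 2 * PK (p.1.1 i) (p.1.2 i)
      (posn (p.1.1 j) (p.1.2 j) (Real.cos t)) (posn (p.1.1 i) (p.1.2 i) s) := if_neg hij

lemma continuous_kf {d : ℕ} : Continuous (kf (d := d)) := by
  rw [continuous_iff_continuousAt]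
  rintro ⟨⟨p, i, s⟩, j, x⟩
  have h1 : ∀ᶠ q : (Par d × XX d) × XX d in 𝓝 ((p, i, s), j, x), q.1.2.1 = i := by
    have hc : Continuous fun q : (Par d × XX d) × XX d => q.1.2.1 := by fun_prop
    exact (hc.tendsto ((p, i, s), j, x)).eventually (isOpen_discrete {i} |>.mem_nhds rfl)
  have h2 : ∀ᶠ q : (Par d × XX d) × XX d in 𝓝 ((p, i, s), j, x), q.2.1 = j := by
    have hc : Continuous fun q : (Par d × XX d) × XX d => q.2.1 := by fun_prop
    exact (hc.tendsto ((p, i, s), j, x)).eventually (isOpen_discrete {j} |>.mem_nhds rfl)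
  by_cases hij : j = i
  · refine (continuousAt_const (y := (0:ℝ))).congr ?_
    filter_upwards [h1, h2] with q e1 e2
    unfold kf
    rw [e1, e2, if_pos hij]
  · have e : (fun q : (Par d × XX d) × XX d => 1 / 2 * PK (q.1.1.1.1 i) (q.1.1.1.2 i)
        (posn (q.1.1.1.1 j) (q.1.1.1.2 j) q.2.2) (posn (q.1.1.1.1 i) (q.1.1.1.2 i) q.1.2.2))
        =ᶠ[𝓝 ((p, i, s), j, x)] kf := by
      filter_upwards [h1, h2] with q e1 e2
      unfold kf
      rw [e1, e2, if_neg hij]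
    refine ContinuousAt.congr ?_ e
    have ha : ∀ k, Continuous fun q : (Par d × XX d) × XX d => q.1.1.1.1 k := fun k =>
      (continuous_Par_fst k).comp (continuous_fst.comp continuous_fst)
    have hb : ∀ k, Continuous fun q : (Par d × XX d) × XX d => q.1.1.1.2 k := fun k =>
      (continuous_Par_snd k).comp (continuous_fst.comp continuous_fst)
    have hx : Continuous fun q : (Par d × XX d) × XX d => (q.2.2 : ℝ) := by fun_prop
    have hs : Continuous fun q : (Par d × XX d) × XX d => (q.1.2.2 : ℝ) := by fun_prop
    have hy : Continuous fun q : (Par d × XX d) × XX d =>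
        posn (q.1.1.1.1 j) (q.1.1.1.2 j) q.2.2 := by unfold posn; fun_prop
    have hz : Continuous fun q : (Par d × XX d) × XX d =>
        posn (q.1.1.1.1 i) (q.1.1.1.2 i) q.1.2.2 := by unfold posn; fun_prop
    have hnot := posn_notMem (p.2.1 j) (p.2.2 i j (Ne.symm hij)) x.2
    have hmem := posn_mem (p.2.1 i) s.2
    have hne : posn (p.1.1 j) (p.1.2 j) x - p.1.1 i ≠ 0 := by
      intro h0
      exact hnot ⟨by linarith, by linarith [p.2.1 i]⟩
    refine continuousAt_const.mul ?_
    unfold PK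
    refine ContinuousAt.div ?_ (hy.sub hz).continuousAt ?_
    · unfold wR
      refine ((hy.sub (ha i)).continuousAt).mul (ContinuousAt.sqrt ?_)
      exact ((hy.sub (hb i)).continuousAt).div ((hy.sub (ha i)).continuousAt) hne
    · intro h0
      rw [sub_eq_zero] at h0
      exact hnot (by rw [h0]; exact hmem)

/-- the kernel as a continuous map of the parameters -/
def kc (d : ℕ) : C(Par d, C(XX d, C(XX d, ℝ))) :=
  ContinuousMap.curry (ContinuousMap.curry ⟨kf, continuous_kf⟩)

lemma kc_apply {d : ℕ} (p : Par d) (s x : XX d) : kc d p s x = kf ((p, s), x) := rfl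

lemma kc_ne {d : ℕ} (p : Par d) {i j : Fin d} (hij : i ≠ j) (τ t : ℝ) :
    kc d p (pt j τ) (pt i t) = 1 / 2 * PK (p.1.1 j) (p.1.2 j)
      (posn (p.1.1 i) (p.1.2 i) (Real.cos t)) (posn (p.1.1 j) (p.1.2 j) (Real.cos τ)) := if_neg hij

lemma cont_int {d : ℕ} (f : C(XX d, ℝ)) (j : Fin d) {w : ℝ → ℝ} (hw : Integrable w cm) :
    Integrable (fun t => f (pt j t) * w t) cm := by
  refine hw.bdd_mul (c := ‖f‖) ?_ (Eventually.of_forall fun t => f.norm_coe_le_norm _)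
  exact (f.continuous.comp (continuous_pt j)).aestronglyMeasurable

lemma cont_int_le {d : ℕ} (f : C(XX d, ℝ)) (w : Fin d → ℝ → ℝ) (hw : ∀ j, Integrable (w j) cm) :
    ‖∑ j, ∫ t, f (pt j t) * w j t ∂cm‖ ≤ (∑ j, ∫ t, |w j t| ∂cm) * ‖f‖ := by
  refine (norm_sum_le _ _).trans ?_
  rw [Finset.sum_mul]
  refine Finset.sum_le_sum fun j _ => ?_
  refine (norm_integral_le_integral_norm _).trans ?_
  rw [← integral_mul_const]
  refine integral_mono (cont_int f j (hw j)).norm ((hw j).abs.mul_const _) fun t => ?_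
  simp only [norm_mul, Real.norm_eq_abs (w j t)]
  rw [mul_comm]
  exact mul_le_mul_of_nonneg_left (f.norm_coe_le_norm _) (abs_nonneg _)

/-- integration functional -/
def ell {d : ℕ} (w : Fin d → ℝ → ℝ) (hw : ∀ j, Integrable (w j) cm) : C(XX d, ℝ) →L[ℝ] ℝ :=
  LinearMap.mkContinuous
    { toFun := fun f => ∑ j, ∫ t, f (pt j t) * w j t ∂cm
      map_add' := fun f g => by
        rw [← Finset.sum_add_distrib]
        refine Finset.sum_congr rfl fun j _ => ?_
        rw [← integral_add (cont_int f j (hw j)) (cont_int g j (hw j))]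
        simp only [ContinuousMap.add_apply, add_mul]
      map_smul' := fun c f => by
        simp only [ContinuousMap.smul_apply, smul_eq_mul, mul_assoc, integral_const_mul,
          ← Finset.mul_sum, RingHom.id_apply] }
    (∑ j, ∫ t, |w j t| ∂cm) (fun f => cont_int_le f w hw)

lemma ell_apply {d : ℕ} (w : Fin d → ℝ → ℝ) (hw : ∀ j, Integrable (w j) cm) (f : C(XX d, ℝ)) :
    ell w hw f = ∑ j, ∫ t, f (pt j t) * w j t ∂cm := rfl

lemma ell_sub {d : ℕ} (w w' : Fin d → ℝ → ℝ) (hw : ∀ j, Integrable (w j) cm)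
    (hw' : ∀ j, Integrable (w' j) cm) : ‖ell w hw - ell w' hw'‖ ≤ ∑ j, ∫ t, |w j t - w' j t| ∂cm := by
  have e : ell w hw - ell w' hw' = ell (fun j t => w j t - w' j t) (fun j => (hw j).sub (hw' j)) := by
    ext f
    rw [sub_apply, ell_apply, ell_apply, ell_apply, ← Finset.sum_sub_distrib]
    refine Finset.sum_congr rfl fun j _ => ?_
    rw [← integral_sub (cont_int f j (hw j)) (cont_int f j (hw' j))]
    simp only [mul_sub]
  rw [e]
  exact LinearMap.mkContinuous_norm_le _
    (Finset.sum_nonneg fun j _ => integral_nonneg fun t => abs_nonneg _) _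

lemma kernel_fubini {d : ℕ} (κ : C(XX d, C(XX d, ℝ))) (w : Fin d → ℝ → ℝ)
    (hw : ∀ j, Integrable (w j) cm) (hwm : ∀ j, Measurable (w j)) (hwb : ∀ j t, |w j t| ≤ 1)
    (ψ : C(XX d, ℝ)) (r : Fin d → ℝ → ℝ) (hr : ∀ j, Integrable (r j) cm) :
    (∑ j, ∫ τ, TT (ell w hw) κ ψ (pt j τ) * r j τ ∂cm
      = ∑ i, ∫ t, ψ (pt i t) * (w i t * ∑ j, ∫ τ, κ (pt j τ) (pt i t) * r j τ ∂cm) ∂cm) ∧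
    (∀ i, Integrable (fun t => w i t * ∑ j, ∫ τ, κ (pt j τ) (pt i t) * r j τ ∂cm) cm) := by
  have hκc : ∀ i j, Continuous fun q : ℝ × ℝ => κ (pt j q.1) (pt i q.2) := by
    intro i j
    have h1 : Continuous fun q : ℝ × ℝ => κ (pt j q.1) :=
      κ.continuous.comp ((continuous_pt j).comp continuous_fst)
    exact ContinuousEval.continuous_eval.comp (h1.prodMk ((continuous_pt i).comp continuous_snd))
  have hκb : ∀ s x, ‖κ s x‖ ≤ ‖κ‖ := fun s x =>
    ((κ s).norm_coe_le_norm x).trans (κ.norm_coe_le_norm s)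
  have hwn : ∀ i, ∀ᵐ q : ℝ × ℝ ∂(cm.prod cm), ‖w i q.2‖ ≤ 1 := fun i =>
    Eventually.of_forall fun q => hwb i q.2
  have hI : ∀ i j, Integrable (fun q : ℝ × ℝ => r j q.1 * κ (pt j q.1) (pt i q.2) * w i q.2)
      (cm.prod cm) := by
    intro i j
    refine Integrable.mul_bdd (c := 1) ?_ ((hwm i).comp measurable_snd).aestronglyMeasurable (hwn i)
    exact ((hr j).comp_fst cm).mul_bdd (c := ‖κ‖) (hκc i j).aestronglyMeasurable
      (Eventually.of_forall fun q => hκb _ _)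
  have hI2 : ∀ i j, Integrable (fun q : ℝ × ℝ =>
      r j q.1 * κ (pt j q.1) (pt i q.2) * w i q.2 * ψ (pt i q.2)) (cm.prod cm) := by
    intro i j
    exact (hI i j).mul_bdd (c := ‖ψ‖) (ψ.continuous.comp
      ((continuous_pt i).comp continuous_snd)).aestronglyMeasurable
      (Eventually.of_forall fun q => ψ.norm_coe_le_norm _)
  have hIntg : ∀ i, Integrable (fun t => w i t * ∑ j, ∫ τ, κ (pt j τ) (pt i t) * r j τ ∂cm) cm := by
    intro i
    have e : ∀ t, w i t * ∑ j, ∫ τ, κ (pt j τ) (pt i t) * r j τ ∂cm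
        = ∑ j, ∫ τ, r j τ * κ (pt j τ) (pt i t) * w i t ∂cm := by
      intro t
      rw [Finset.mul_sum]
      refine Finset.sum_congr rfl fun j _ => ?_
      rw [← integral_const_mul]
      exact integral_congr_ae (Eventually.of_forall fun τ => by simp only; ring)
    simp only [e]
    exact integrable_finsetSum _ fun j _ => (hI i j).integral_prod_right
  refine ⟨?_, hIntg⟩
  have e1 : ∀ j, ∫ τ, TT (ell w hw) κ ψ (pt j τ) * r j τ ∂cm
      = ∑ i, ∫ τ, ∫ t, r j τ * κ (pt j τ) (pt i t) * w i t * ψ (pt i t) ∂cm ∂cm := by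
    intro j
    rw [← integral_finsetSum _ fun i _ => (hI2 i j).integral_prod_left]
    refine integral_congr_ae (Eventually.of_forall fun τ => ?_)
    simp only
    rw [TT_apply, ell_apply, Finset.sum_mul]
    refine Finset.sum_congr rfl fun i _ => ?_
    rw [← integral_mul_const]
    refine integral_congr_ae (Eventually.of_forall fun t => ?_)
    simp only [ContinuousMap.mul_apply]; ring
  have e2 : ∀ i, ∫ t, ψ (pt i t) * (w i t * ∑ j, ∫ τ, κ (pt j τ) (pt i t) * r j τ ∂cm) ∂cm
      = ∑ j, ∫ t, ∫ τ, r j τ * κ (pt j τ) (pt i t) * w i t * ψ (pt i t) ∂cm ∂cm := by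
    intro i
    rw [← integral_finsetSum _ fun j _ => (hI2 i j).integral_prod_right]
    refine integral_congr_ae (Eventually.of_forall fun t => ?_)
    simp only
    rw [← mul_assoc, Finset.mul_sum]
    refine Finset.sum_congr rfl fun j _ => ?_
    rw [← integral_const_mul]
    refine integral_congr_ae (Eventually.of_forall fun τ => ?_)
    simp only; ring
  simp only [e1, e2]
  rw [Finset.sum_comm]
  refine Finset.sum_congr rfl fun i _ => Finset.sum_congr rfl fun j _ => ?_
  exact integral_integral_swap (hI2 i j)

lemma kc_inj {d : ℕ} (p : Par d) (θ : Fin d → ℝ → ℝ) (hm : ∀ i, Measurable (θ i))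
    (h0 : ∀ i s, 0 ≤ θ i s) (h1 : ∀ i s, θ i s ≤ 1)
    (hw : ∀ j, Integrable (fun t => θ j (Real.cos t)) cm) (ψ : C(XX d, ℝ))
    (hψ : ψ + TT (ell (fun j t => θ j (Real.cos t)) hw) (kc d p) ψ = 0) : ψ = 0 := by
  have hle : (-1:ℝ) ≤ 1 := by norm_num
  have hsol : USol d p.1.1 p.1.2 (fun i s => ψ (i, projIcc (-1:ℝ) 1 hle s)) θ := by
    refine ⟨p.2.1, p.2.2, fun i => ?_, hm, h0, h1, fun i s hs => ?_⟩
    · exact ψ.continuous.comp (continuous_const.prodMk continuous_projIcc)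
    · have h2 := congrArg (fun f : C(XX d, ℝ) => f (i, ⟨s, hs⟩)) hψ
      simp only [ContinuousMap.add_apply, ContinuousMap.zero_apply, TT_apply, ell_apply] at h2
      rw [projIcc_of_mem hle hs]
      rw [eq_neg_of_add_eq_zero_left h2, ← Finset.add_sum_erase _ _ (Finset.mem_univ i)]
      have e0 : ∫ t, (kc d p (i, ⟨s, hs⟩) * ψ) (pt i t) * θ i (Real.cos t) ∂cm = 0 := by
        have : ∀ t, (kc d p (i, ⟨s, hs⟩) * ψ) (pt i t) * θ i (Real.cos t) = 0 := by
          intro t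
          rw [ContinuousMap.mul_apply, kc_apply]
          simp [kf, pt]
        simp only [this, integral_zero]
      rw [e0, zero_add, neg_mul, Finset.mul_sum]
      congr 1
      refine Finset.sum_congr rfl fun j hj => ?_
      have hij : j ≠ i := Finset.ne_of_mem_erase hj
      rw [← integral_const_mul]
      refine integral_congr_ae (Eventually.of_forall fun t => ?_)
      simp only [ContinuousMap.mul_apply, kc_apply]
      rw [projIcc_of_mem hle (cos_mem t)]
      rw [kf_ne p hij]
      change _ = 1 / 2 * (_ * (_ * ψ (pt j t)))
      ring
  ext ⟨i, s⟩
  have := hsol.uniq i s s.2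
  simpa using this

theorem stability {d : ℕ} (p : Par d) (pn : ℕ → Par d) (hp : Tendsto pn atTop (𝓝 p))
    (θ : Fin d → ℝ → ℝ) (hm : ∀ i, Measurable (θ i))
    (h0 : ∀ i s, 0 ≤ θ i s) (h1 : ∀ i s, θ i s ≤ 1)
    (θn : ℕ → Fin d → ℝ → ℝ) (hmn : ∀ n i, Measurable (θn n i))
    (h0n : ∀ n i s, 0 ≤ θn n i s) (h1n : ∀ n i s, θn n i s ≤ 1)
    (hθ : ∀ i, Tendsto (fun n => ∫ t, |θn n i (Real.cos t) - θ i (Real.cos t)| ∂cm) atTop (𝓝 0)) :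
    ∃ C, 0 ≤ C ∧ ∀ᶠ n in atTop, ∀ r ε : Fin d → ℝ → ℝ, (∀ j, Integrable (r j) cm) →
      (∀ j, Integrable (ε j) cm) →
      (∀ i, ∀ᵐ t ∂cm, r i t + 1 / 2 * θn n i (Real.cos t) * ∑ j ∈ Finset.univ.erase i,
        ∫ τ, PK ((pn n).1.1 j) ((pn n).1.2 j) (posn ((pn n).1.1 i) ((pn n).1.2 i) (Real.cos t))
          (posn ((pn n).1.1 j) ((pn n).1.2 j) (Real.cos τ)) * r j τ ∂cm = ε i t) →
      ∀ φ : C(XX d, ℝ), |∑ j, ∫ t, φ (pt j t) * r j t ∂cm|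
        ≤ C * ‖φ‖ * ∑ j, ∫ t, |ε j t| ∂cm := by
  have wint : ∀ f : ℝ → ℝ, Measurable f → (∀ s, 0 ≤ f s) → (∀ s, f s ≤ 1) →
      Integrable (fun t => f (Real.cos t)) cm := by
    intro f hf g0 g1
    refine (integrable_const (1:ℝ)).mono' (hf.comp Real.measurable_cos).aestronglyMeasurable
      (Eventually.of_forall fun t => ?_)
    rw [Real.norm_of_nonneg (g0 _)]; exact g1 _
  have hw : ∀ j, Integrable (fun t => θ j (Real.cos t)) cm := fun j => wint _ (hm j) (h0 j) (h1 j)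
  have hwn : ∀ n j, Integrable (fun t => θn n j (Real.cos t)) cm := fun n j =>
    wint _ (hmn n j) (h0n n j) (h1n n j)
  have hl : Tendsto (fun n => ell (fun j t => θn n j (Real.cos t)) (hwn n)) atTop
      (𝓝 (ell (fun j t => θ j (Real.cos t)) hw)) := by
    refine (tendsto_iff_norm_sub_tendsto_zero (E := C(XX d, ℝ) →L[ℝ] ℝ)).mpr ?_
    have : Tendsto (fun n => ∑ j, ∫ t, |θn n j (Real.cos t) - θ j (Real.cos t)| ∂cm) atTop (𝓝 0) := by
      have := tendsto_finsetSum Finset.univ fun j _ => hθ j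
      simpa using this
    exact squeeze_zero (fun n => norm_nonneg (E := C(XX d, ℝ) →L[ℝ] ℝ) _)
      (fun n => ell_sub _ _ (hwn n) hw) this
  have hκ : Tendsto (fun n => kc d (pn n)) atTop (𝓝 (kc d p)) :=
    ((kc d).continuous.tendsto p).comp hp
  obtain ⟨C, hC, hev⟩ := TT_solve hl hκ (kc_inj p θ hm h0 h1 hw)
  refine ⟨C, hC, ?_⟩
  filter_upwards [hev] with n hn r ε hr hε heq φ
  obtain ⟨ψ, hψ, hψn⟩ := hn φ
  obtain ⟨fub, fubint⟩ := kernel_fubini (kc d (pn n)) (fun j t => θn n j (Real.cos t)) (hwn n)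
    (fun j => (hmn n j).comp Real.measurable_cos)
    (fun j t => by rw [abs_of_nonneg (h0n _ _ _)]; exact h1n _ _ _) ψ r hr
  have key : ∀ i, ∀ᵐ t ∂cm, r i t + θn n i (Real.cos t) *
      ∑ j, ∫ τ, kc d (pn n) (pt j τ) (pt i t) * r j τ ∂cm = ε i t := by
    intro i
    filter_upwards [heq i] with t ht
    rw [← ht, ← Finset.add_sum_erase _ _ (Finset.mem_univ i)]
    have e0 : ∫ τ, kc d (pn n) (pt i τ) (pt i t) * r i τ ∂cm = 0 := by
      have : ∀ τ, kc d (pn n) (pt i τ) (pt i t) * r i τ = 0 := by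
        intro τ
        rw [kc_apply]
        simp [kf, pt]
      simp only [this, integral_zero]
    rw [e0, zero_add]
    congr 1
    rw [mul_comm (1/2 : ℝ), mul_assoc, Finset.mul_sum (a := (1/2:ℝ))]
    congr 1
    refine Finset.sum_congr rfl fun j hj => ?_
    have hij : i ≠ j := (Finset.ne_of_mem_erase hj).symm
    rw [← integral_const_mul]
    refine integral_congr_ae (Eventually.of_forall fun τ => ?_)
    simp only [kc_ne (pn n) hij]
    ring
  have main : ∑ j, ∫ t, φ (pt j t) * r j t ∂cm = ∑ j, ∫ t, ψ (pt j t) * ε j t ∂cm := by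
    have e1 : ∀ j, ∫ t, φ (pt j t) * r j t ∂cm = ∫ t, ψ (pt j t) * r j t ∂cm
        + ∫ t, TT (ell (fun j t => θn n j (Real.cos t)) (hwn n)) (kc d (pn n)) ψ (pt j t) * r j t ∂cm := by
      intro j
      rw [← integral_add (cont_int ψ j (hr j)) (cont_int _ j (hr j)), ← hψ]
      simp only [ContinuousMap.add_apply, add_mul]
    simp only [e1]
    rw [Finset.sum_add_distrib, fub, ← Finset.sum_add_distrib]
    refine Finset.sum_congr rfl fun i _ => ?_
    rw [← integral_add (cont_int ψ i (hr i)) (cont_int ψ i (fubint i))]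
    refine integral_congr_ae ?_
    filter_upwards [key i] with t ht
    rw [← ht]; ring
  rw [main, ← Real.norm_eq_abs]
  refine (cont_int_le ψ ε hε).trans ?_
  rw [mul_comm]
  exact mul_le_mul_of_nonneg_right hψn
    (Finset.sum_nonneg fun j _ => integral_nonneg fun t => abs_nonneg _)

/-- the arcsine density -/
def ad (a b x : ℝ) : ℝ := 1 / (Real.pi * Real.sqrt ((x - a) * (b - x)))

lemma ad_meas (a b : ℝ) : Measurable (ad a b) := by unfold ad; fun_prop

lemma ad_nonneg (a b x : ℝ) : 0 ≤ ad a b x := by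
  have := Real.pi_pos
  unfold ad; positivity

lemma ad_zero {a b x : ℝ} (hab : a < b) (hx : x ∉ Icc a b) : ad a b x = 0 := by
  have : (x - a) * (b - x) ≤ 0 := by
    rw [mem_Icc, not_and_or, not_le, not_le] at hx
    rcases hx with h | h
    · exact mul_nonpos_of_nonpos_of_nonneg (by linarith) (by linarith)
    · exact mul_nonpos_of_nonneg_of_nonpos (by linarith) (by linarith)
  unfold ad
  rw [Real.sqrt_eq_zero_of_nonpos this]; simp

lemma arcsine_eq (a b : ℝ) (hab : a < b) :
    arcsineMeasure a b = volume.withDensity fun x => ENNReal.ofReal (ad a b x) := by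
  unfold arcsineMeasure
  rw [← withDensity_indicator measurableSet_Icc]
  congr 1
  funext x
  by_cases hx : x ∈ Icc a b
  · rw [indicator_of_mem hx]; rfl
  · rw [indicator_of_notMem hx, ad_zero hab hx, ENNReal.ofReal_zero]

lemma arcsine_prob (a b : ℝ) (hab : a < b) : IsProbabilityMeasure (arcsineMeasure a b) := by
  rw [← map_posn_cos a b hab]
  exact Measure.isProbabilityMeasure_map (continuous_posn_cos a b).measurable.aemeasurable

lemma ad_integral (a b : ℝ) (hab : a < b) {k : ℝ → ℝ} (hk : Measurable k) :
    ∫ t, k (posn a b (Real.cos t)) ∂cm = ∫ x, ad a b x * k x := by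
  rw [← integral_arcsine a b hab hk.aestronglyMeasurable, arcsine_eq a b hab,
    integral_withDensity_eq_integral_toReal_smul (ad_meas a b).ennreal_ofReal
      (Eventually.of_forall fun x => ENNReal.ofReal_lt_top)]
  simp only [ENNReal.toReal_ofReal (ad_nonneg a b _), smul_eq_mul]

lemma ad_integrable (a b : ℝ) (hab : a < b) : Integrable (ad a b) := by
  refine ⟨(ad_meas a b).aestronglyMeasurable, ?_⟩
  rw [hasFiniteIntegral_iff_ofReal (Eventually.of_forall (ad_nonneg a b))]
  have h := (arcsine_prob a b hab).measure_univ
  rw [arcsine_eq a b hab, withDensity_apply _ MeasurableSet.univ, Measure.restrict_univ] at h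
  rw [h]; exact ENNReal.one_lt_top

lemma ad_integral_one (a b : ℝ) (hab : a < b) : ∫ x, ad a b x = 1 := by
  have := ad_integral a b hab (k := fun _ => 1) measurable_const
  simpa using this.symm

lemma ad_tendsto {a b x : ℝ} (ha : x ≠ a) (hb : x ≠ b) {An Bn : ℕ → ℝ}
    (hA : Tendsto An atTop (𝓝 a)) (hB : Tendsto Bn atTop (𝓝 b)) :
    Tendsto (fun n => ad (An n) (Bn n) x) atTop (𝓝 (ad a b x)) := by
  have h : Tendsto (fun n => (x - An n) * (Bn n - x)) atTop (𝓝 ((x - a) * (b - x))) :=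
    (hA.const_sub x).mul (hB.sub_const x)
  have hne : (x - a) * (b - x) ≠ 0 := mul_ne_zero (sub_ne_zero.mpr ha) (sub_ne_zero.mpr hb.symm)
  rcases lt_or_gt_of_ne hne with h0 | h0
  · have e : ad a b x = 0 := by
      unfold ad; rw [Real.sqrt_eq_zero_of_nonpos h0.le]; simp
    rw [e]
    refine tendsto_const_nhds.congr' ?_
    filter_upwards [h.eventually (gt_mem_nhds h0)] with n hn
    unfold ad; rw [Real.sqrt_eq_zero_of_nonpos hn.le]; simp
  · unfold ad
    refine tendsto_const_nhds.div (tendsto_const_nhds.mul h.sqrt) ?_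
    have := Real.sqrt_pos.mpr h0
    have := Real.pi_pos
    positivity

lemma ad_tv {a b : ℝ} (hab : a < b) {An Bn : ℕ → ℝ} (hABn : ∀ n, An n < Bn n)
    (hA : Tendsto An atTop (𝓝 a)) (hB : Tendsto Bn atTop (𝓝 b)) :
    Tendsto (fun n => ∫ x, |ad (An n) (Bn n) x - ad a b x|) atTop (𝓝 0) := by
  have hev : ∀ᶠ n in atTop, ∀ x, x ∉ Icc (a - 1) (b + 1) → ad (An n) (Bn n) x = 0 := by
    filter_upwards [hA.eventually (lt_mem_nhds (by linarith : a - 1 < a)),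
      hB.eventually (gt_mem_nhds (by linarith : b < b + 1))] with n h1 h2 x hx
    exact ad_zero (hABn n) fun h => hx ⟨by linarith [h.1], by linarith [h.2]⟩
  have h0 : ∀ x, x ∉ Icc (a - 1) (b + 1) → ad a b x = 0 := fun x hx =>
    ad_zero hab fun h => hx ⟨by linarith [h.1], by linarith [h.2]⟩
  have key : Tendsto (fun n => ∫ x, |-ad (An n) (Bn n) x - -ad a b x|
      ∂(volume.restrict (Icc (a - 1) (b + 1)))) atTop (𝓝 0) := by
    refine scheffe 0 (fun n => (ad_integrable _ _ (hABn n)).neg.restrict)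
      (ad_integrable a b hab).neg.restrict ?_ ?_ ?_ ?_
    · exact Eventually.of_forall fun n => Eventually.of_forall fun x =>
        neg_nonpos.mpr (ad_nonneg _ _ _)
    · exact Eventually.of_forall fun x => neg_nonpos.mpr (ad_nonneg _ _ _)
    · have h1 : ∀ᵐ x ∂(volume.restrict (Icc (a - 1) (b + 1))), x ≠ a :=
        ae_restrict_of_ae (Measure.ae_ne volume a)
      have h2 : ∀ᵐ x ∂(volume.restrict (Icc (a - 1) (b + 1))), x ≠ b :=
        ae_restrict_of_ae (Measure.ae_ne volume b)
      filter_upwards [h1, h2] with x h1 h2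
      exact (ad_tendsto h1 h2 hA hB).neg
    · refine tendsto_const_nhds.congr' ?_
      filter_upwards [hev] with n hn
      rw [integral_neg, integral_neg, setIntegral_eq_integral_of_forall_compl_eq_zero hn,
        setIntegral_eq_integral_of_forall_compl_eq_zero h0, ad_integral_one _ _ (hABn n),
        ad_integral_one _ _ hab]
  refine key.congr' ?_
  filter_upwards [hev] with n hn
  rw [setIntegral_eq_integral_of_forall_compl_eq_zero]
  · refine integral_congr_ae (Eventually.of_forall fun x => ?_)
    simp only
    rw [← abs_neg]; congr 1; ring
  · intro x hx
    rw [hn x hx, h0 x hx]; simp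

lemma bdd_int {f : ℝ → ℝ} (hf : Measurable f) {M : ℝ} (hM : ∀ x, |f x| ≤ M) : Integrable f cm :=
  (integrable_const M).mono' hf.aestronglyMeasurable (Eventually.of_forall hM)

lemma affine_L1 {a b : ℝ} (hab : a < b) {An Bn : ℕ → ℝ} (hABn : ∀ n, An n < Bn n)
    (hA : Tendsto An atTop (𝓝 a)) (hB : Tendsto Bn atTop (𝓝 b)) {f : ℝ → ℝ} (hf : Measurable f)
    (hf1 : ∀ x, |f x| ≤ 1) :
    Tendsto (fun n => ∫ t, |f (posn (An n) (Bn n) (Real.cos t)) - f (posn a b (Real.cos t))| ∂cm)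
      atTop (𝓝 0) := by
  rw [Metric.tendsto_atTop']
  intro ε hε
  haveI := arcsine_prob a b hab
  have hfi : Integrable f (arcsineMeasure a b) :=
    (integrable_const (1:ℝ)).mono' hf.aestronglyMeasurable (Eventually.of_forall hf1)
  obtain ⟨h, hh, -⟩ := hfi.exists_boundedContinuous_integral_sub_le (ε := ε / 4) (by linarith)
  have hhm : Measurable h := h.continuous.measurable
  set k : ℝ → ℝ := fun x => |f x - h x| with hk
  have hkm : Measurable k := by
    have : Measurable fun x => f x - h x := hf.sub hhm
    exact measurable_norm.comp this
  have hkb : ∀ x, |k x| ≤ 1 + ‖h‖ := by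
    intro x
    rw [hk]; simp only [abs_abs]
    exact (abs_sub _ _).trans (add_le_add (hf1 x) (h.norm_coe_le_norm x))
  have hk0 : ∫ t, k (posn a b (Real.cos t)) ∂cm ≤ ε / 4 := by
    rw [← integral_arcsine a b hab hkm.aestronglyMeasurable]
    exact hh
  have hpm : ∀ a b, Measurable fun t => posn a b (Real.cos t) := fun a b =>
    (continuous_posn_cos a b).measurable
  have kint : ∀ a b : ℝ, a < b → Integrable (fun x => ad a b x * k x) := fun a b hab =>
    (ad_integrable a b hab).mul_bdd (c := 1 + ‖h‖) hkm.aestronglyMeasurable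
      (Eventually.of_forall hkb)
  have l1 : Tendsto (fun n => ∫ t, k (posn (An n) (Bn n) (Real.cos t)) ∂cm) atTop
      (𝓝 (∫ t, k (posn a b (Real.cos t)) ∂cm)) := by
    rw [tendsto_iff_norm_sub_tendsto_zero]
    have := (ad_tv hab hABn hA hB).mul_const (1 + ‖h‖)
    rw [zero_mul] at this
    refine squeeze_zero (fun n => norm_nonneg _) (fun n => ?_) this
    rw [ad_integral _ _ (hABn n) hkm, ad_integral _ _ hab hkm,
      ← integral_sub (kint _ _ (hABn n)) (kint _ _ hab)]
    refine (norm_integral_le_integral_norm _).trans ?_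
    rw [← integral_mul_const]
    refine integral_mono ((kint _ _ (hABn n)).sub (kint _ _ hab)).norm
      (((ad_integrable _ _ (hABn n)).sub (ad_integrable _ _ hab)).abs.mul_const _) fun x => ?_
    simp only [Pi.sub_apply]
    rw [← sub_mul, norm_mul]
    exact mul_le_mul_of_nonneg_left (hkb x) (norm_nonneg _)
  have l2 : Tendsto (fun n => ∫ t, |h (posn (An n) (Bn n) (Real.cos t)) - h (posn a b (Real.cos t))| ∂cm)
      atTop (𝓝 0) := by
    have := tendsto_integral_of_dominated_convergence (μ := cm)
      (F := fun n t => |h (posn (An n) (Bn n) (Real.cos t)) - h (posn a b (Real.cos t))|)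
      (f := fun _ => 0) (fun _ => ‖h‖ + ‖h‖) ?_ (integrable_const _) ?_ ?_
    · simpa using this
    · intro n
      exact (((h.continuous.comp (continuous_posn_cos _ _)).sub
        (h.continuous.comp (continuous_posn_cos _ _))).abs).aestronglyMeasurable
    · intro n
      refine Eventually.of_forall fun t => ?_
      rw [Real.norm_eq_abs, abs_abs]
      exact (abs_sub _ _).trans (add_le_add (h.norm_coe_le_norm _) (h.norm_coe_le_norm _))
    · refine Eventually.of_forall fun t => ?_
      have hp : Tendsto (fun n => posn (An n) (Bn n) (Real.cos t)) atTop (𝓝 (posn a b (Real.cos t))) := by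
        unfold posn
        exact ((hA.add hB).div_const 2).add (((hB.sub hA).div_const 2).mul_const _)
      have := (((h.continuous.tendsto _).comp hp).sub_const (h (posn a b (Real.cos t)))).abs
      simpa using this
  have ev1 := l1.eventually (gt_mem_nhds (lt_of_le_of_lt hk0 (by linarith : ε / 4 < ε / 2)))
  have ev2 := l2.eventually (gt_mem_nhds (by linarith : (0:ℝ) < ε / 4))
  obtain ⟨N, hN⟩ := (ev1.and ev2).exists_forall_of_atTop
  refine ⟨N, fun n hn => ?_⟩
  obtain ⟨h1, h2⟩ := hN n hn.le
  rw [Real.dist_eq, sub_zero, abs_of_nonneg (integral_nonneg fun t => abs_nonneg _)]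
  have i1 : Integrable (fun t => k (posn (An n) (Bn n) (Real.cos t))) cm :=
    bdd_int (hkm.comp (hpm _ _)) (fun t => hkb _)
  have i2 : Integrable (fun t => k (posn a b (Real.cos t))) cm :=
    bdd_int (hkm.comp (hpm _ _)) (fun t => hkb _)
  have i3 : Integrable (fun t => |h (posn (An n) (Bn n) (Real.cos t)) - h (posn a b (Real.cos t))|) cm :=
    cm_integrable_of_continuous (((h.continuous.comp (continuous_posn_cos _ _)).sub
        (h.continuous.comp (continuous_posn_cos _ _))).abs)
  have i4 : Integrable (fun t => |f (posn (An n) (Bn n) (Real.cos t)) - f (posn a b (Real.cos t))|) cm := by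
    have := (bdd_int (hf.comp (hpm (An n) (Bn n))) (fun t => hf1 _)).sub
      (bdd_int (hf.comp (hpm a b)) (fun t => hf1 _))
    exact this.abs
  have i13 : Integrable (fun t => k (posn (An n) (Bn n) (Real.cos t)) +
    |h (posn (An n) (Bn n) (Real.cos t)) - h (posn a b (Real.cos t))|) cm := i1.add i3
  have i132 : Integrable (fun t => k (posn (An n) (Bn n) (Real.cos t)) +
    |h (posn (An n) (Bn n) (Real.cos t)) - h (posn a b (Real.cos t))| + k (posn a b (Real.cos t))) cm := i13.add i2
  have := integral_mono i4 i132 (fun t => by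
    simp only [hk]
    set X := posn (An n) (Bn n) (Real.cos t)
    set Y := posn a b (Real.cos t)
    have e : f X - f Y = (f X - h X) + (h X - h Y) - (f Y - h Y) := by ring
    rw [e]
    exact (abs_sub _ _).trans (add_le_add (abs_add_le _ _) le_rfl))
  rw [integral_add i13 i2, integral_add i1 i3] at this
  linarith

lemma lebDeriv_meas (μ : Measure ℝ) : Measurable (lebDeriv μ) :=
  (Measure.measurable_rnDeriv μ volume).ennreal_toReal

lemma lebDeriv_nonneg (μ : Measure ℝ) (x : ℝ) : 0 ≤ lebDeriv μ x := ENNReal.toReal_nonneg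

/-- the nonvanishing mask -/
def mk1 (μ : Measure ℝ) (x : ℝ) : ℝ := if lebDeriv μ x = 0 then 0 else 1

lemma mk1_meas (μ : Measure ℝ) : Measurable (mk1 μ) :=
  Measurable.ite (lebDeriv_meas μ (measurableSet_singleton 0)) measurable_const measurable_const

lemma mk1_nonneg (μ : Measure ℝ) (x : ℝ) : 0 ≤ mk1 μ x := by unfold mk1; split_ifs <;> norm_num
lemma mk1_le (μ : Measure ℝ) (x : ℝ) : mk1 μ x ≤ 1 := by unfold mk1; split_ifs <;> norm_num
lemma mk1_abs (μ : Measure ℝ) (x : ℝ) : |mk1 μ x| ≤ 1 := by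
  rw [abs_of_nonneg (mk1_nonneg μ x)]; exact mk1_le μ x
lemma mk1_log (μ : Measure ℝ) (x : ℝ) : mk1 μ x * Real.log (lebDeriv μ x) = Real.log (lebDeriv μ x) := by
  unfold mk1; split_ifs with h
  · rw [h]; simp
  · simp

/-- log of the boundary modulus in the angular variable -/
def uf (g : ℝ → ℝ) (a b t : ℝ) : ℝ := Real.log (g (posn a b (Real.cos t)))

lemma uf_int {g : ℝ → ℝ} {a b : ℝ} (hab : a < b)
    (hu : Integrable (fun x => Real.log (g x)) (arcsineMeasure a b)) : Integrable (uf g a b) cm :=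
  (integrable_arcsine a b hab hu.1).mp hu

lemma omega_exp {g : ℝ → ℝ} {a b : ℝ} (hab : a < b)
    (hu : Integrable (fun x => Real.log (g x)) (arcsineMeasure a b)) (z : ℂ) :
    OmegaFun a b g z = Complex.exp (∫ t, wBranch a b z / (z - (posn a b (Real.cos t) : ℂ)) *
      (uf g a b t : ℂ) ∂cm) := by
  unfold OmegaFun cauchyT
  congr 1
  have hm : AEStronglyMeasurable (fun x : ℝ => (Real.log (g x) : ℂ) / (z - (x : ℂ)))
      (arcsineMeasure a b) := by
    have h1 : AEMeasurable (fun x : ℝ => (Real.log (g x) : ℂ)) (arcsineMeasure a b) :=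
      Complex.measurable_ofReal.comp_aemeasurable hu.1.aemeasurable
    have h2 : Measurable (fun x : ℝ => z - (x : ℂ)) := by fun_prop
    exact (h1.div h2.aemeasurable).aestronglyMeasurable
  rw [integral_arcsine a b hab hm, ← integral_const_mul]
  refine integral_congr_ae (Eventually.of_forall fun t => ?_)
  simp only [uf]; ring

lemma omega_real {g : ℝ → ℝ} {a b : ℝ} (hab : a < b)
    (hu : Integrable (fun x => Real.log (g x)) (arcsineMeasure a b)) {y : ℝ} (hy : y ∉ Icc a b) :
    (OmegaFun a b g (y : ℂ)).re = Real.exp (∫ τ, PK a b y (posn a b (Real.cos τ)) * uf g a b τ ∂cm) := by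
  rw [omega_exp hab hu, wBranch_real hab hy]
  have : ∫ t, (wR a b y : ℂ) / ((y : ℂ) - (posn a b (Real.cos t) : ℂ)) * (uf g a b t : ℂ) ∂cm
      = ((∫ τ, PK a b y (posn a b (Real.cos τ)) * uf g a b τ ∂cm : ℝ) : ℂ) := by
    rw [← integral_complex_ofReal]
    refine integral_congr_ae (Eventually.of_forall fun t => ?_)
    simp only [PK]; push_cast; ring
  rw [this, ← Complex.ofReal_exp, Complex.ofReal_re]

/-- the data term -/
def lf (μ : Measure ℝ) (a b t : ℝ) : ℝ :=
  Real.log Real.pi + Real.log ((b - a) / 2) + Real.log |Real.sin t|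
    + Real.log (lebDeriv μ (posn a b (Real.cos t)))

lemma sin_facts : (∀ᵐ t ∂cm, Real.sin t ≠ 0) ∧ Integrable (fun t => Real.log |Real.sin t|) cm := by
  have hsq : ∀ t, Real.sin t ^ 2 = (1 - Real.cos t) * (1 + Real.cos t) := by
    intro t; rw [Real.sin_sq]; ring
  have h1 := ae_cos_ne 1
  have h2 := ae_cos_ne (-1)
  have c1 : ∀ t, ‖(1:ℂ) - (Real.cos t : ℂ)‖ = 1 - Real.cos t := by
    intro t
    rw [← Complex.ofReal_one, ← Complex.ofReal_sub, Complex.norm_real, Real.norm_of_nonneg]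
    linarith [Real.cos_le_one t]
  have c2 : ∀ t, ‖(-1:ℂ) - (Real.cos t : ℂ)‖ = 1 + Real.cos t := by
    intro t
    rw [← Complex.ofReal_one, ← Complex.ofReal_neg, ← Complex.ofReal_sub, Complex.norm_real,
      Real.norm_eq_abs, abs_of_nonpos (by linarith [Real.neg_one_le_cos t])]
    ring
  have h3 : ∀ᵐ t ∂cm, 1 - Real.cos t ≠ 0 := by
    filter_upwards [h1] with t ht
    rw [← c1]; exact norm_ne_zero_iff.mpr ht
  have h4 : ∀ᵐ t ∂cm, 1 + Real.cos t ≠ 0 := by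
    filter_upwards [h2] with t ht
    rw [← c2]; exact norm_ne_zero_iff.mpr ht
  constructor
  · filter_upwards [h3, h4] with t a b h
    have := hsq t
    rw [h] at this
    exact mul_ne_zero a b (by rw [← this]; ring)
  · have i1 := integrable_log_cos 1
    have i2 := integrable_log_cos (-1)
    simp only [c1] at i1
    simp only [c2] at i2
    have : Integrable (fun t => 1 / 2 * (Real.log (1 - Real.cos t) + Real.log (1 + Real.cos t))) cm :=
      (i1.add i2).const_mul _
    refine this.congr ?_
    filter_upwards [h3, h4] with t a b
    rw [← Real.log_mul a b, ← hsq, ← sq_abs, Real.log_pow]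
    push_cast; ring

theorem szego_eq {d : ℕ} {A B : Fin d → ℝ} (hAB : ∀ i, A i < B i)
    (hdisj : ∀ i j, i ≠ j → Disjoint (Set.Icc (A i) (B i)) (Set.Icc (A j) (B j)))
    {μ : Fin d → Measure ℝ} {g : Fin d → ℝ → ℝ} {S : Fin d → ℂ → ℂ}
    (hS : IsSzegoVector d A B (fun i => vDens (μ i) (A i) (B i)) g S) (i : Fin d) :
    ∀ᵐ t ∂cm, uf (g i) (A i) (B i) t = 1 / 2 * mk1 (μ i) (posn (A i) (B i) (Real.cos t)) *
      (lf (μ i) (A i) (B i) t - ∑ j ∈ Finset.univ.erase i,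
        ∫ τ, PK (A j) (B j) (posn (A i) (B i) (Real.cos t)) (posn (A j) (B j) (Real.cos τ)) *
          uf (g j) (A j) (B j) τ ∂cm) := by
  obtain ⟨hg, hIntg, hSe, hv⟩ := hS
  filter_upwards [ae_arcsine _ _ (hAB i) (hv i), sin_facts.1] with t ht hsin
  have hprod : ∏ j ∈ Finset.univ.erase i, (S j (posn (A i) (B i) (Real.cos t) : ℂ)).re
      = Real.exp (∑ j ∈ Finset.univ.erase i,
        ∫ τ, PK (A j) (B j) (posn (A i) (B i) (Real.cos t)) (posn (A j) (B j) (Real.cos τ)) *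
          uf (g j) (A j) (B j) τ ∂cm) := by
    rw [Real.exp_sum]
    refine Finset.prod_congr rfl fun j hj => ?_
    rw [hSe j]
    have hij : j ≠ i := Finset.ne_of_mem_erase hj
    exact omega_real (hAB j) (hIntg j) (posn_notMem (hAB i) (hdisj j i hij) (cos_mem t))
  rw [hprod] at ht
  set P := ∑ j ∈ Finset.univ.erase i,
        ∫ τ, PK (A j) (B j) (posn (A i) (B i) (Real.cos t)) (posn (A j) (B j) (Real.cos τ)) *
          uf (g j) (A j) (B j) τ ∂cm
  have hgi := hg i (posn (A i) (B i) (Real.cos t))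
  simp only [vDens] at ht
  rw [sqrt_posn _ _ _ (hAB i)] at ht
  unfold uf lf mk1
  split_ifs with h
  · rw [h] at ht
    have : g i (posn (A i) (B i) (Real.cos t)) = 0 := by
      have h2 : g i (posn (A i) (B i) (Real.cos t)) ^ 2 * Real.exp P = 0 := by rw [ht]; ring
      rcases mul_eq_zero.mp h2 with h3 | h3
      · exact pow_eq_zero_iff (two_ne_zero) |>.mp h3
      · exact absurd h3 (Real.exp_pos _).ne'
    rw [this]; simp
  · have hpi := Real.pi_pos.ne'
    have hba : (B i - A i) / 2 ≠ 0 := by have := hAB i; linarith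
    have hs : |Real.sin t| ≠ 0 := abs_ne_zero.mpr hsin
    have hg0 : g i (posn (A i) (B i) (Real.cos t)) ≠ 0 := by
      intro h0
      rw [h0] at ht
      have : Real.pi * lebDeriv (μ i) (posn (A i) (B i) (Real.cos t)) * ((B i - A i) / 2 * |Real.sin t|) ≠ 0 :=
        mul_ne_zero (mul_ne_zero hpi h) (mul_ne_zero hba hs)
      exact this (by rw [← ht]; ring)
    have h3 := congrArg Real.log ht
    rw [Real.log_mul (pow_ne_zero 2 hg0) (Real.exp_pos _).ne', Real.log_pow, Real.log_exp,
      Real.log_mul (mul_ne_zero hpi h) (mul_ne_zero hba hs), Real.log_mul hpi h,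
      Real.log_mul hba hs] at h3
    push_cast at h3
    linarith

lemma kc_sum {d : ℕ} (p : Par d) (r : Fin d → ℝ → ℝ) (i : Fin d) (t : ℝ) :
    ∑ j, ∫ τ, kc d p (pt j τ) (pt i t) * r j τ ∂cm = 1 / 2 * ∑ j ∈ Finset.univ.erase i,
        ∫ τ, PK (p.1.1 j) (p.1.2 j) (posn (p.1.1 i) (p.1.2 i) (Real.cos t))
          (posn (p.1.1 j) (p.1.2 j) (Real.cos τ)) * r j τ ∂cm := by
  rw [← Finset.add_sum_erase _ _ (Finset.mem_univ i)]
  have e0 : ∫ τ, kc d p (pt i τ) (pt i t) * r i τ ∂cm = 0 := by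
    have : ∀ τ, kc d p (pt i τ) (pt i t) * r i τ = 0 := by
      intro τ
      rw [kc_apply]
      simp [kf, pt]
    simp only [this, integral_zero]
  rw [e0, zero_add, Finset.mul_sum]
  refine Finset.sum_congr rfl fun j hj => ?_
  have hij : i ≠ j := (Finset.ne_of_mem_erase hj).symm
  rw [← integral_const_mul]
  refine integral_congr_ae (Eventually.of_forall fun τ => ?_)
  simp only [kc_ne p hij]
  ring

lemma ker_int {d : ℕ} (κ : C(XX d, C(XX d, ℝ))) (x : XX d) (j : Fin d) {u : ℝ → ℝ}
    (hu : Integrable u cm) : Integrable (fun τ => κ (pt j τ) x * u τ) cm := by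
  refine hu.bdd_mul (c := ‖κ‖) ?_ (Eventually.of_forall fun t =>
    ((κ _).norm_coe_le_norm x).trans (κ.norm_coe_le_norm _))
  have h1 : Continuous fun τ => κ (pt j τ) := κ.continuous.comp (continuous_pt j)
  exact (ContinuousEval.continuous_eval.comp (h1.prodMk continuous_const)).aestronglyMeasurable

lemma ker_bound {d : ℕ} (κ : C(XX d, C(XX d, ℝ))) (x : XX d) {u : Fin d → ℝ → ℝ}
    (hu : ∀ j, Integrable (u j) cm) :
    |∑ j, ∫ τ, κ (pt j τ) x * u j τ ∂cm| ≤ ‖κ‖ * ∑ j, ∫ τ, |u j τ| ∂cm := by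
  rw [Finset.mul_sum]
  refine (Finset.abs_sum_le_sum_abs _ _).trans (Finset.sum_le_sum fun j _ => ?_)
  rw [← Real.norm_eq_abs, ← integral_const_mul]
  refine (norm_integral_le_integral_norm _).trans ?_
  refine integral_mono (ker_int κ x j (hu j)).norm ((hu j).abs.const_mul _) fun τ => ?_
  simp only [norm_mul]
  exact mul_le_mul_of_nonneg_right (((κ _).norm_coe_le_norm x).trans (κ.norm_coe_le_norm _))
    (norm_nonneg _)

lemma weight_L1 {X : ℕ → ℝ → ℝ} (hXm : ∀ n, Measurable (X n)) (hX1 : ∀ n t, |X n t| ≤ 1)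
    (hX : Tendsto (fun n => ∫ t, |X n t| ∂cm) atTop (𝓝 0)) {L : ℝ → ℝ} (hL : Integrable L cm) :
    Tendsto (fun n => ∫ t, |X n t| * |L t| ∂cm) atTop (𝓝 0) := by
  rw [Metric.tendsto_atTop']
  intro ε hε
  obtain ⟨h, hh, hhi⟩ := hL.exists_boundedContinuous_integral_sub_le (ε := ε / 2) (by linarith)
  have h2 := hX.const_mul ‖h‖
  rw [mul_zero] at h2
  obtain ⟨N, hN⟩ := (h2.eventually (gt_mem_nhds (by linarith : (0:ℝ) < ε / 2))).exists_forall_of_atTop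
  refine ⟨N, fun n hn => ?_⟩
  have h3 := hN n hn.le
  rw [Real.dist_eq, sub_zero, abs_of_nonneg (integral_nonneg fun t => by positivity)]
  have i1 : Integrable (fun t => |X n t| * |L t|) cm := by
    refine hL.abs.bdd_mul (c := 1) (hXm n).norm.aestronglyMeasurable (Eventually.of_forall fun t => ?_)
    rw [Real.norm_eq_abs, abs_abs]; exact hX1 n t
  have i2 : Integrable (fun t => ‖h‖ * |X n t|) cm := (bdd_int (hXm n) (hX1 n)).abs.const_mul _
  have i3 : Integrable (fun t => ‖L t - h t‖) cm := (hL.sub hhi).norm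
  have i23 : Integrable (fun t => ‖h‖ * |X n t| + ‖L t - h t‖) cm := i2.add i3
  have := integral_mono i1 i23 (fun t => by
    simp only
    have e : L t = h t + (L t - h t) := by ring
    have a1 : |L t| ≤ ‖h‖ + ‖L t - h t‖ := by
      conv_lhs => rw [e]
      exact (abs_add_le _ _).trans (add_le_add (h.norm_coe_le_norm t) le_rfl)
    have a2 := hX1 n t
    calc |X n t| * |L t| ≤ |X n t| * (‖h‖ + ‖L t - h t‖) := by gcongr
      _ = ‖h‖ * |X n t| + |X n t| * ‖L t - h t‖ := by ring
      _ ≤ ‖h‖ * |X n t| + 1 * ‖L t - h t‖ := by gcongr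
      _ = _ := by ring)
  rw [integral_add i2 i3, integral_const_mul] at this
  linarith

lemma affIcc_posn {a b : ℝ} (hab : a < b) (c e s : ℝ) : affIcc a b c e (posn a b s) = posn c e s := by
  have : b - a ≠ 0 := by linarith
  unfold affIcc posn
  field_simp
  ring

/-- log-density term -/
def lgd (μ : Measure ℝ) (a b t : ℝ) : ℝ := Real.log (lebDeriv μ (posn a b (Real.cos t)))

lemma lgd_meas (μ : Measure ℝ) (a b : ℝ) : Measurable (lgd μ a b) :=
  Real.measurable_log.comp ((lebDeriv_meas μ).comp (continuous_posn_cos a b).measurable)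

lemma lgd_int {μ : Measure ℝ} {a b : ℝ} (hab : a < b) (h : SzCond μ a b) : Integrable (lgd μ a b) cm :=
  (integrable_arcsine a b hab h.1).mp h

lemma lgd_conv {μ : Measure ℝ} {a b : ℝ} (hab : a < b) (h : USzCond μ a b) {An Bn : ℕ → ℝ}
    (hABn : ∀ n, An n < Bn n) (hs : ∀ n, Icc (An n) (Bn n) ⊆ convHullSupp μ)
    (hA : Tendsto An atTop (𝓝 a)) (hB : Tendsto Bn atTop (𝓝 b)) :
    (∀ᶠ n in atTop, Integrable (lgd μ (An n) (Bn n)) cm) ∧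
    Tendsto (fun n => ∫ t, |lgd μ (An n) (Bn n) t - lgd μ a b t| ∂cm) atTop (𝓝 0) := by
  obtain ⟨h1, h2⟩ := h.2 An Bn hABn hs hA hB
  refine ⟨h1.mono fun n hn => lgd_int (hABn n) hn, h2.congr fun n => ?_⟩
  have hm : Measurable fun x => |Real.log (lebDeriv μ x) -
      Real.log (lebDeriv μ (affIcc a b (An n) (Bn n) x))| := by
    have ha : Measurable (affIcc a b (An n) (Bn n)) := by unfold affIcc; fun_prop
    have m1 : Measurable fun x => Real.log (lebDeriv μ x) := Real.measurable_log.comp (lebDeriv_meas μ)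
    exact measurable_norm.comp (m1.sub (m1.comp ha))
  rw [integral_arcsine a b hab hm.aestronglyMeasurable]
  refine integral_congr_ae (Eventually.of_forall fun t => ?_)
  simp only [affIcc_posn hab, lgd]
  exact abs_sub_comm _ _

lemma eps_bound {d : ℕ} {A B A' B' : Fin d → ℝ}
    (h : (∀ i, A i < B i) ∧ ∀ i j, i ≠ j → Disjoint (Icc (A i) (B i)) (Icc (A j) (B j)))
    (h' : (∀ i, A' i < B' i) ∧ ∀ i j, i ≠ j → Disjoint (Icc (A' i) (B' i)) (Icc (A' j) (B' j)))
    (p p' : Par d) (hp : p = ⟨(A, B), h⟩) (hp' : p' = ⟨(A', B'), h'⟩)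
    {μ : Fin d → Measure ℝ} {g g' : Fin d → ℝ → ℝ} {S S' : Fin d → ℂ → ℂ}
    (hS : IsSzegoVector d A B (fun i => vDens (μ i) (A i) (B i)) g S)
    (hS' : IsSzegoVector d A' B' (fun i => vDens (μ i) (A' i) (B' i)) g' S') (i : Fin d) :
    ∀ᵐ t ∂cm, |(uf (g' i) (A' i) (B' i) t - uf (g i) (A i) (B i) t) +
      mk1 (μ i) (posn (A' i) (B' i) (Real.cos t)) * ∑ j, ∫ τ, kc d p' (pt j τ) (pt i t) *
        (uf (g' j) (A' j) (B' j) τ - uf (g j) (A j) (B j) τ) ∂cm| ≤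
      |Real.log ((B' i - A' i) / 2) - Real.log ((B i - A i) / 2)|
      + |mk1 (μ i) (posn (A' i) (B' i) (Real.cos t)) - mk1 (μ i) (posn (A i) (B i) (Real.cos t))| *
        abs (Real.log Real.pi + Real.log ((B i - A i) / 2) + Real.log |Real.sin t|)
      + |lgd (μ i) (A' i) (B' i) t - lgd (μ i) (A i) (B i) t|
      + (‖kc d p' - kc d p‖ * ∑ j, ∫ τ, |uf (g j) (A j) (B j) τ| ∂cm
      + |mk1 (μ i) (posn (A' i) (B' i) (Real.cos t)) - mk1 (μ i) (posn (A i) (B i) (Real.cos t))| *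
        (‖kc d p‖ * ∑ j, ∫ τ, |uf (g j) (A j) (B j) τ| ∂cm)) := by
  have hu : ∀ j, Integrable (uf (g j) (A j) (B j)) cm := fun j => uf_int (h.1 j) (hS.2.1 j)
  have hu' : ∀ j, Integrable (uf (g' j) (A' j) (B' j)) cm := fun j => uf_int (h'.1 j) (hS'.2.1 j)
  filter_upwards [szego_eq h.1 h.2 hS i, szego_eq h'.1 h'.2 hS' i] with t e e'
  have k0 := kc_sum p (fun j => uf (g j) (A j) (B j)) i t
  have k1 := kc_sum p' (fun j => uf (g' j) (A' j) (B' j)) i t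
  have b0 := ker_bound (kc d p) (pt i t) hu
  have b1 := ker_bound (kc d p' - kc d p) (pt i t) hu
  have s1 : ∑ j, ∫ τ, kc d p' (pt j τ) (pt i t) *
        (uf (g' j) (A' j) (B' j) τ - uf (g j) (A j) (B j) τ) ∂cm
      = ∑ j, ∫ τ, kc d p' (pt j τ) (pt i t) * uf (g' j) (A' j) (B' j) τ ∂cm
        - ∑ j, ∫ τ, kc d p' (pt j τ) (pt i t) * uf (g j) (A j) (B j) τ ∂cm := by
    rw [← Finset.sum_sub_distrib]
    refine Finset.sum_congr rfl fun j _ => ?_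
    rw [← integral_sub (ker_int _ _ j (hu' j)) (ker_int _ _ j (hu j))]
    simp only [mul_sub]
  have s2 : ∑ j, ∫ τ, (kc d p' - kc d p) (pt j τ) (pt i t) * uf (g j) (A j) (B j) τ ∂cm
      = ∑ j, ∫ τ, kc d p' (pt j τ) (pt i t) * uf (g j) (A j) (B j) τ ∂cm
        - ∑ j, ∫ τ, kc d p (pt j τ) (pt i t) * uf (g j) (A j) (B j) τ ∂cm := by
    rw [← Finset.sum_sub_distrib]
    refine Finset.sum_congr rfl fun j _ => ?_
    rw [← integral_sub (ker_int _ _ j (hu j)) (ker_int _ _ j (hu j))]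
    simp only [ContinuousMap.sub_apply, sub_mul]
  rw [s2] at b1
  rw [s1, k1]
  subst hp hp'
  simp only at k0 k1 e e' ⊢
  set Q := ∑ j, ∫ τ, kc d ⟨(A', B'), h'⟩ (pt j τ) (pt i t) * uf (g j) (A j) (B j) τ ∂cm
  set R := ∑ j, ∫ τ, kc d ⟨(A, B), h⟩ (pt j τ) (pt i t) * uf (g j) (A j) (B j) τ ∂cm
  set R' := ∑ j ∈ Finset.univ.erase i,
        ∫ τ, PK (A' j) (B' j) (posn (A' i) (B' i) (Real.cos t)) (posn (A' j) (B' j) (Real.cos τ)) *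
          uf (g' j) (A' j) (B' j) τ ∂cm
  set P := ∑ j ∈ Finset.univ.erase i,
        ∫ τ, PK (A j) (B j) (posn (A i) (B i) (Real.cos t)) (posn (A j) (B j) (Real.cos τ)) *
          uf (g j) (A j) (B j) τ ∂cm
  have l0 := mk1_log (μ i) (posn (A i) (B i) (Real.cos t))
  have l1 := mk1_log (μ i) (posn (A' i) (B' i) (Real.cos t))
  have m1 := mk1_abs (μ i) (posn (A' i) (B' i) (Real.cos t))
  unfold lf at e e'
  unfold lgd
  set θ := mk1 (μ i) (posn (A i) (B i) (Real.cos t))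
  set θ' := mk1 (μ i) (posn (A' i) (B' i) (Real.cos t))
  set L := Real.log (lebDeriv (μ i) (posn (A i) (B i) (Real.cos t)))
  set L' := Real.log (lebDeriv (μ i) (posn (A' i) (B' i) (Real.cos t)))
  set c := Real.log ((B i - A i) / 2)
  set c' := Real.log ((B' i - A' i) / 2)
  set q := Real.log Real.pi
  set w := Real.log |Real.sin t|
  have id : uf (g' i) (A' i) (B' i) t - uf (g i) (A i) (B i) t + θ' * (1 / 2 * R' - Q)
      = 1 / 2 * (θ' * (c' - c)) + 1 / 2 * ((θ' - θ) * (q + c + w)) + 1 / 2 * (L' - L)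
        - (θ' * (Q - R) + (θ' - θ) * R) := by
    rw [e, e']
    have k0' : P = 2 * R := by linarith
    rw [k0']
    linear_combination (1/2) * l1 - (1/2) * l0
  rw [id]
  have t1 : |1 / 2 * (θ' * (c' - c))| ≤ |c' - c| := by
    rw [abs_mul, abs_mul, abs_of_pos (by norm_num : (0:ℝ) < 1/2)]
    have := mul_le_mul_of_nonneg_right m1 (abs_nonneg (c' - c))
    linarith [abs_nonneg (c' - c)]
  have t2 : |1 / 2 * ((θ' - θ) * (q + c + w))| ≤ |θ' - θ| * |q + c + w| := by
    rw [abs_mul, abs_mul, abs_of_pos (by norm_num : (0:ℝ) < 1/2)]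
    have : 0 ≤ |θ' - θ| * |q + c + w| := by positivity
    linarith
  have t3 : |1 / 2 * (L' - L)| ≤ |L' - L| := by
    rw [abs_mul, abs_of_pos (by norm_num : (0:ℝ) < 1/2)]
    linarith [abs_nonneg (L' - L)]
  have t4 : |θ' * (Q - R)| ≤ ‖kc d ⟨(A', B'), h'⟩ - kc d ⟨(A, B), h⟩‖ *
      ∑ j, ∫ τ, |uf (g j) (A j) (B j) τ| ∂cm := by
    rw [abs_mul]
    refine le_trans ?_ b1
    have := mul_le_mul_of_nonneg_right m1 (abs_nonneg (Q - R))
    linarith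
  have t5 : |(θ' - θ) * R| ≤ |θ' - θ| * (‖kc d ⟨(A, B), h⟩‖ *
      ∑ j, ∫ τ, |uf (g j) (A j) (B j) τ| ∂cm) := by
    rw [abs_mul]
    exact mul_le_mul_of_nonneg_left b0 (abs_nonneg _)
  refine (abs_sub _ _).trans (add_le_add ((abs_add_le _ _).trans (add_le_add
    ((abs_add_le _ _).trans (add_le_add t1 t2)) t3)) ((abs_add_le _ _).trans (add_le_add t4 t5)))

theorem weak_conv
    (d : ℕ) (A B : Fin d → ℝ) (hAB : ∀ i, A i < B i)
    (hdisj : ∀ i j, i ≠ j → Disjoint (Set.Icc (A i) (B i)) (Set.Icc (A j) (B j)))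
    (μ : Fin d → Measure ℝ)
    (hUSz : ∀ i, USzCond (μ i) (A i) (B i))
    (An Bn : ℕ → Fin d → ℝ)
    (hABn : ∀ n i, An n i < Bn n i)
    (hdisjn : ∀ n, ∀ i j, i ≠ j →
      Disjoint (Set.Icc (An n i) (Bn n i)) (Set.Icc (An n j) (Bn n j)))
    (hsubn : ∀ n i, Set.Icc (An n i) (Bn n i) ⊆ convHullSupp (μ i))
    (hconvA : ∀ i, Tendsto (fun n => An n i) atTop (𝓝 (A i)))
    (hconvB : ∀ i, Tendsto (fun n => Bn n i) atTop (𝓝 (B i)))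
    (g : Fin d → ℝ → ℝ) (S : Fin d → ℂ → ℂ)
    (hS : IsSzegoVector d A B (fun i => vDens (μ i) (A i) (B i)) g S)
    (gn : ℕ → Fin d → ℝ → ℝ) (Sn : ℕ → Fin d → ℂ → ℂ)
    (hSn : ∀ n, IsSzegoVector d (An n) (Bn n)
      (fun i => vDens (μ i) (An n i) (Bn n i)) (gn n) (Sn n)) :
    ∃ δ : ℕ → ℝ, Tendsto δ atTop (𝓝 0) ∧ ∀ᶠ n in atTop, ∀ φ : C(XX d, ℝ),
      |∑ j, ∫ t, φ (pt j t) * (uf (gn n j) (An n j) (Bn n j) t - uf (g j) (A j) (B j) t) ∂cm|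
        ≤ ‖φ‖ * δ n := by
  let p : Par d := ⟨(A, B), hAB, hdisj⟩
  let pn : ℕ → Par d := fun n => ⟨(An n, Bn n), hABn n, hdisjn n⟩
  have hp : Tendsto pn atTop (𝓝 p) := by
    refine tendsto_subtype_rng.mpr ?_
    exact (tendsto_pi_nhds.mpr hconvA).prodMk_nhds (tendsto_pi_nhds.mpr hconvB)
  have hκ : Tendsto (fun n => kc d (pn n)) atTop (𝓝 (kc d p)) :=
    ((kc d).continuous.tendsto p).comp hp
  have hpm : ∀ a b : ℝ, Measurable (posn a b) := fun a b => by unfold posn; fun_prop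
  have hθ : ∀ i, Tendsto (fun n => ∫ t, |mk1 (μ i) (posn (An n i) (Bn n i) (Real.cos t)) -
      mk1 (μ i) (posn (A i) (B i) (Real.cos t))| ∂cm) atTop (𝓝 0) := fun i =>
    affine_L1 (hAB i) (fun n => hABn n i) (hconvA i) (hconvB i) (mk1_meas (μ i)) (mk1_abs (μ i))
  obtain ⟨C, hC, hst⟩ := stability p pn hp (fun i s => mk1 (μ i) (posn (A i) (B i) s))
    (fun i => (mk1_meas _).comp (hpm _ _)) (fun i s => mk1_nonneg _ _) (fun i s => mk1_le _ _)
    (fun n i s => mk1 (μ i) (posn (An n i) (Bn n i) s))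
    (fun n i => (mk1_meas _).comp (hpm _ _)) (fun n i s => mk1_nonneg _ _) (fun n i s => mk1_le _ _) hθ
  set U := ∑ j, ∫ τ, |uf (g j) (A j) (B j) τ| ∂cm
  have hu : ∀ j, Integrable (uf (g j) (A j) (B j)) cm := fun j => uf_int (hAB j) (hS.2.1 j)
  have hun : ∀ n j, Integrable (uf (gn n j) (An n j) (Bn n j)) cm := fun n j =>
    uf_int (hABn n j) ((hSn n).2.1 j)
  let Lam : Fin d → ℝ → ℝ := fun i t =>
    Real.log Real.pi + Real.log ((B i - A i) / 2) + Real.log |Real.sin t|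
  have hLam : ∀ i, Integrable (Lam i) cm := fun i => (integrable_const _).add sin_facts.2
  let Xt : Fin d → ℕ → ℝ → ℝ := fun i n t => mk1 (μ i) (posn (An n i) (Bn n i) (Real.cos t)) -
      mk1 (μ i) (posn (A i) (B i) (Real.cos t))
  have hXm : ∀ i n, Measurable (Xt i n) := fun i n =>
    ((mk1_meas _).comp (continuous_posn_cos _ _).measurable).sub
      ((mk1_meas _).comp (continuous_posn_cos _ _).measurable)
  have hX1 : ∀ i n t, |Xt i n t| ≤ 1 := by
    intro i n t
    have a1 := mk1_nonneg (μ i) (posn (An n i) (Bn n i) (Real.cos t))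
    have a2 := mk1_le (μ i) (posn (An n i) (Bn n i) (Real.cos t))
    have a3 := mk1_nonneg (μ i) (posn (A i) (B i) (Real.cos t))
    have a4 := mk1_le (μ i) (posn (A i) (B i) (Real.cos t))
    rw [abs_le]
    constructor <;> simp only [Xt] <;> linarith
  have hXL : ∀ i, Tendsto (fun n => ∫ t, |Xt i n t| * |Lam i t| ∂cm) atTop (𝓝 0) := fun i =>
    weight_L1 (hXm i) (hX1 i) (hθ i) (hLam i)
  have hlg := fun i => lgd_conv (hAB i) (hUSz i) (fun n => hABn n i) (fun n => hsubn n i)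
    (hconvA i) (hconvB i)
  -- the bound
  let η : ℕ → Fin d → ℝ := fun n i =>
    |Real.log ((Bn n i - An n i) / 2) - Real.log ((B i - A i) / 2)|
    + ∫ t, |Xt i n t| * |Lam i t| ∂cm + ∫ t, |lgd (μ i) (An n i) (Bn n i) t - lgd (μ i) (A i) (B i) t| ∂cm
    + (‖kc d (pn n) - kc d p‖ * U + (∫ t, |Xt i n t| ∂cm) * (‖kc d p‖ * U))
  have hη : ∀ i, Tendsto (fun n => η n i) atTop (𝓝 0) := by
    intro i
    have t1 : Tendsto (fun n => |Real.log ((Bn n i - An n i) / 2) - Real.log ((B i - A i) / 2)|)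
        atTop (𝓝 0) := by
      have hne : (B i - A i) / 2 ≠ 0 := by have := hAB i; linarith
      have := (((((hconvB i).sub (hconvA i)).div_const 2).log hne).sub_const
        (Real.log ((B i - A i) / 2))).abs
      simpa using this
    have t2 : Tendsto (fun n => ‖kc d (pn n) - kc d p‖ * U) atTop (𝓝 0) := by
      have := ((tendsto_iff_norm_sub_tendsto_zero (E := C(XX d, C(XX d, ℝ)))).mp hκ).mul_const U
      simpa using this
    have t3 : Tendsto (fun n => (∫ t, |Xt i n t| ∂cm) * (‖kc d p‖ * U)) atTop (𝓝 0) := by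
      have := (hθ i).mul_const (‖kc d p‖ * U)
      simpa using this
    have := ((t1.add (hXL i)).add (hlg i).2).add (t2.add t3)
    simpa using this
  refine ⟨fun n => C * ∑ j, η n j, ?_, ?_⟩
  · have := (tendsto_finsetSum Finset.univ fun j _ => hη j).const_mul C
    simpa using this
  filter_upwards [hst, eventually_all.mpr fun i => (hlg i).1] with n hn hli φ
  let r : Fin d → ℝ → ℝ := fun j t => uf (gn n j) (An n j) (Bn n j) t - uf (g j) (A j) (B j) t
  have hr : ∀ j, Integrable (r j) cm := fun j => (hun n j).sub (hu j)
  let w : Fin d → ℝ → ℝ := fun i t => mk1 (μ i) (posn (An n i) (Bn n i) (Real.cos t))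
  have hwm : ∀ i, Measurable (w i) := fun i => (mk1_meas _).comp (continuous_posn_cos _ _).measurable
  have hw1 : ∀ i t, |w i t| ≤ 1 := fun i t => mk1_abs _ _
  have hw : ∀ i, Integrable (w i) cm := fun i => bdd_int (hwm i) (hw1 i)
  let ε : Fin d → ℝ → ℝ := fun i t => r i t + w i t * ∑ j, ∫ τ, kc d (pn n) (pt j τ) (pt i t) * r j τ ∂cm
  have hε : ∀ i, Integrable (ε i) cm := fun i =>
    (hr i).add ((kernel_fubini (kc d (pn n)) w hw hwm hw1 0 r hr).2 i)
  have h1 := hn r ε hr hε (fun i => Eventually.of_forall fun t => by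
    simp only [ε]
    rw [kc_sum (pn n) r i t]
    simp only [w, pn]
    ring) φ
  refine h1.trans ?_
  have h2 : ∀ j, ∫ t, |ε j t| ∂cm ≤ η n j := by
    intro i
    have hb := eps_bound ⟨hAB, hdisj⟩ ⟨hABn n, hdisjn n⟩ p (pn n) rfl rfl hS (hSn n) i
    have i1 : Integrable (fun t => |Xt i n t| * |Lam i t|) cm := by
      refine (hLam i).abs.bdd_mul (c := 1) (hXm i n).norm.aestronglyMeasurable
        (Eventually.of_forall fun t => ?_)
      rw [Real.norm_eq_abs, abs_abs]; exact hX1 i n t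
    have i2 : Integrable (fun t => |lgd (μ i) (An n i) (Bn n i) t - lgd (μ i) (A i) (B i) t|) cm :=
      ((hli i).sub (lgd_int (hAB i) (hUSz i).1)).abs
    have i3 : Integrable (fun t => |Xt i n t| * (‖kc d p‖ * U)) cm :=
      (bdd_int (hXm i n) (hX1 i n)).abs.mul_const _
    have c0 : ∀ c : ℝ, Integrable (fun _ : ℝ => c) cm := fun c => integrable_const c
    have j1 : Integrable (fun t => |Real.log ((Bn n i - An n i) / 2) - Real.log ((B i - A i) / 2)| +
      |Xt i n t| * |Lam i t|) cm := (c0 _).add i1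
    have j2 : Integrable (fun t => |Real.log ((Bn n i - An n i) / 2) - Real.log ((B i - A i) / 2)| +
      |Xt i n t| * |Lam i t| + |lgd (μ i) (An n i) (Bn n i) t - lgd (μ i) (A i) (B i) t|) cm := j1.add i2
    have j3 : Integrable (fun t => ‖kc d (pn n) - kc d p‖ * U + |Xt i n t| * (‖kc d p‖ * U)) cm :=
      (c0 _).add i3
    have j4 : Integrable (fun t => |Real.log ((Bn n i - An n i) / 2) - Real.log ((B i - A i) / 2)| +
      |Xt i n t| * |Lam i t| + |lgd (μ i) (An n i) (Bn n i) t - lgd (μ i) (A i) (B i) t| +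
      (‖kc d (pn n) - kc d p‖ * U + |Xt i n t| * (‖kc d p‖ * U))) cm := j2.add j3
    have := integral_mono_ae (hε i).abs j4 hb
    have e3 : ∫ t, |Xt i n t| * (‖kc d p‖ * U) ∂cm = (∫ t, |Xt i n t| ∂cm) * (‖kc d p‖ * U) :=
      integral_mul_const _ _
    rw [integral_add j2 j3, integral_add j1 i2, integral_add (c0 _) i1, integral_add (c0 _) i3,
      e3, integral_const, integral_const] at this
    simpa [η] using this
  calc C * ‖φ‖ * ∑ j, ∫ t, |ε j t| ∂cm ≤ C * ‖φ‖ * ∑ j, η n j := by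
        gcongr with j
        exact h2 j
    _ = _ := by ring

/-- weak continuity of the pairing -/
lemma pair_tendsto {d : ℕ} {ι : Type*} {l : Filter ι} {W : ι → Fin d → ℝ → ℝ} {w : Fin d → ℝ → ℝ}
    (hW : ∀ k j, Integrable (W k j) cm) (hw : ∀ j, Integrable (w j) cm)
    {δ : ι → ℝ} (hδ : Tendsto δ l (𝓝 0))
    (hb : ∀ᶠ k in l, ∀ φ : C(XX d, ℝ),
      |∑ j, ∫ t, φ (pt j t) * (W k j t - w j t) ∂cm| ≤ ‖φ‖ * δ k)
    {Φ : ι → C(XX d, ℝ)} {Φ0 : C(XX d, ℝ)} (hΦ : Tendsto Φ l (𝓝 Φ0)) :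
    Tendsto (fun k => ∑ j, ∫ t, Φ k (pt j t) * W k j t ∂cm) l
      (𝓝 (∑ j, ∫ t, Φ0 (pt j t) * w j t ∂cm)) := by
  have hn : Tendsto (fun k => ‖Φ k - Φ0‖) l (𝓝 0) :=
    (tendsto_iff_norm_sub_tendsto_zero (E := C(XX d, ℝ))).mp hΦ
  have hn2 : Tendsto (fun k => ‖Φ k‖) l (𝓝 ‖Φ0‖) := (continuous_norm.tendsto Φ0).comp hΦ
  rw [tendsto_iff_norm_sub_tendsto_zero]
  have hz : Tendsto (fun k => ‖Φ k‖ * δ k + (∑ j, ∫ t, |w j t| ∂cm) * ‖Φ k - Φ0‖) l (𝓝 0) := by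
    have := (hn2.mul hδ).add (hn.const_mul (∑ j, ∫ t, |w j t| ∂cm))
    simpa using this
  refine squeeze_zero' (Eventually.of_forall fun k => norm_nonneg _) ?_ hz
  filter_upwards [hb] with k hk
  have h1 := hk (Φ k)
  have h2 := cont_int_le (Φ k - Φ0) w hw
  have e : ∑ j, ∫ t, Φ k (pt j t) * W k j t ∂cm - ∑ j, ∫ t, Φ0 (pt j t) * w j t ∂cm
      = ∑ j, ∫ t, Φ k (pt j t) * (W k j t - w j t) ∂cm
        + ∑ j, ∫ t, (Φ k - Φ0) (pt j t) * w j t ∂cm := by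
    rw [← Finset.sum_sub_distrib, ← Finset.sum_add_distrib]
    refine Finset.sum_congr rfl fun j _ => ?_
    have hi : Integrable (fun t => Φ k (pt j t) * (W k j t - w j t)) cm :=
      cont_int (Φ k) j ((hW k j).sub (hw j))
    rw [← integral_sub (cont_int _ j (hW k j)) (cont_int _ j (hw j)),
      ← integral_add hi (cont_int (Φ k - Φ0) j (hw j))]
    refine integral_congr_ae (Eventually.of_forall fun t => ?_)
    simp only [ContinuousMap.sub_apply]
    ring
  rw [e]
  refine (norm_add_le _ _).trans (add_le_add ?_ h2)
  exact h1

/-- parameters of the Cauchy-type kernel -/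
def QP := {q : (ℝ × ℝ) × ℂ // q.1.1 < q.1.2 ∧ q.2 ∉ Complex.ofReal '' Icc q.1.1 q.1.2}

instance : TopologicalSpace QP := instTopologicalSpaceSubtype

lemma slit_of_notMem {a b : ℝ} {z : ℂ} (hab : a < b) (hz : z ∉ Complex.ofReal '' Icc a b) :
    z - a ≠ 0 ∧ (z - b) / (z - a) ∈ Complex.slitPlane := by
  have hza : z - a ≠ 0 := fun h => hz ⟨a, ⟨le_rfl, hab.le⟩, (sub_eq_zero.mp h).symm⟩
  refine ⟨hza, ?_⟩
  by_contra hc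
  rw [Complex.mem_slitPlane_iff_not_le_zero, not_not] at hc
  obtain ⟨r, hr⟩ : ∃ r : ℝ, (z - b) / (z - a) = (r : ℂ) := by
    refine ⟨((z - b) / (z - a)).re, ?_⟩
    apply Complex.ext
    · simp
    · rw [Complex.ofReal_im]; exact (Complex.le_def.mp hc).2
  rw [hr] at hc
  have hr0 : r ≤ 0 := by exact_mod_cast hc
  have h1r : (1 - r : ℝ) ≠ 0 := by linarith
  have e1 : z - b = r * (z - a) := by rw [← hr]; field_simp
  have e2 : z = (((b - r * a) / (1 - r) : ℝ) : ℂ) := by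
    have : (1 - (r : ℂ)) ≠ 0 := by exact_mod_cast h1r
    push_cast
    rw [eq_div_iff this]
    linear_combination e1
  apply hz
  refine ⟨_, ⟨?_, ?_⟩, e2.symm⟩
  · rw [le_div_iff₀ (by linarith)]; nlinarith
  · rw [div_le_iff₀ (by linarith)]; nlinarith

/-- kernel -/
def qf {d : ℕ} (i : Fin d) (x : QP × XX d) : ℂ :=
  (if x.2.1 = i then (1 : ℂ) else 0) *
    (wBranch x.1.1.1.1 x.1.1.1.2 x.1.1.2 / (x.1.1.2 - (posn x.1.1.1.1 x.1.1.1.2 x.2.2 : ℂ)))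

lemma continuous_qf {d : ℕ} (i : Fin d) : Continuous (qf i) := by
  unfold qf
  have ca : Continuous fun x : QP × XX d => (x.1.1.1.1 : ℝ) :=
    continuous_fst.comp (continuous_fst.comp (continuous_subtype_val.comp continuous_fst))
  have cb : Continuous fun x : QP × XX d => (x.1.1.1.2 : ℝ) :=
    continuous_snd.comp (continuous_fst.comp (continuous_subtype_val.comp continuous_fst))
  have cz : Continuous fun x : QP × XX d => (x.1.1.2 : ℂ) :=
    continuous_snd.comp (continuous_subtype_val.comp continuous_fst)
  have cs : Continuous fun x : QP × XX d => (x.2.2 : ℝ) :=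
    continuous_subtype_val.comp (continuous_snd.comp continuous_snd)
  have cp : Continuous fun x : QP × XX d => ((posn x.1.1.1.1 x.1.1.1.2 x.2.2 : ℝ) : ℂ) := by
    refine Complex.continuous_ofReal.comp ?_
    unfold posn
    fun_prop
  have ca' : Continuous fun x : QP × XX d => ((x.1.1.1.1 : ℝ) : ℂ) := Complex.continuous_ofReal.comp ca
  have cb' : Continuous fun x : QP × XX d => ((x.1.1.1.2 : ℝ) : ℂ) := Complex.continuous_ofReal.comp cb
  refine Continuous.mul ?_ (Continuous.div ?_ (cz.sub cp) ?_)
  · have : Continuous fun j : Fin d => (if j = i then (1 : ℂ) else 0) := continuous_of_discreteTopology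
    exact this.comp (continuous_fst.comp continuous_snd)
  · unfold wBranch
    refine (cz.sub ca').mul (Complex.continuous_exp.comp (continuous_const.mul ?_))
    exact ((cz.sub cb').div (cz.sub ca') fun x => (slit_of_notMem x.1.2.1 x.1.2.2).1).clog
      fun x => (slit_of_notMem x.1.2.1 x.1.2.2).2
  · intro x h
    exact x.1.2.2 ⟨_, posn_mem x.1.2.1 x.2.2.2, (sub_eq_zero.mp h).symm⟩

def qre {d : ℕ} (i : Fin d) : C(QP, C(XX d, ℝ)) :=
  ContinuousMap.curry ⟨fun x => (qf i x).re, Complex.continuous_re.comp (continuous_qf i)⟩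
def qim {d : ℕ} (i : Fin d) : C(QP, C(XX d, ℝ)) :=
  ContinuousMap.curry ⟨fun x => (qf i x).im, Complex.continuous_im.comp (continuous_qf i)⟩

lemma q_int {d : ℕ} (i : Fin d) (q : QP) {w : Fin d → ℝ → ℝ} (hw : ∀ j, Integrable (w j) cm) :
    ∫ t, wBranch q.1.1.1 q.1.1.2 q.1.2 / (q.1.2 - (posn q.1.1.1 q.1.1.2 (Real.cos t) : ℂ)) *
      (w i t : ℂ) ∂cm = ((∑ j, ∫ t, qre i q (pt j t) * w j t ∂cm : ℝ) : ℂ)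
        + ((∑ j, ∫ t, qim i q (pt j t) * w j t ∂cm : ℝ) : ℂ) * Complex.I := by
  have key : ∀ j t, qf i (q, pt j t) = (if j = i then (1 : ℂ) else 0) *
      (wBranch q.1.1.1 q.1.1.2 q.1.2 / (q.1.2 - (posn q.1.1.1 q.1.1.2 (Real.cos t) : ℂ))) :=
    fun j t => rfl
  have r : ∑ j, ∫ t, qre i q (pt j t) * w j t ∂cm = ∫ t, qre i q (pt i t) * w i t ∂cm := by
    refine Finset.sum_eq_single i (fun j _ hj => ?_) (by simp)
    have : ∀ t, qre i q (pt j t) = 0 := fun t => by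
      change (qf i (q, pt j t)).re = 0
      rw [key, if_neg hj]; simp
    simp [this]
  have m : ∑ j, ∫ t, qim i q (pt j t) * w j t ∂cm = ∫ t, qim i q (pt i t) * w i t ∂cm := by
    refine Finset.sum_eq_single i (fun j _ hj => ?_) (by simp)
    have : ∀ t, qim i q (pt j t) = 0 := fun t => by
      change (qf i (q, pt j t)).im = 0
      rw [key, if_neg hj]; simp
    simp [this]
  rw [r, m, ← integral_complex_ofReal, ← integral_complex_ofReal, ← integral_mul_const,
    ← integral_add]
  · refine integral_congr_ae (Eventually.of_forall fun t => ?_)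
    have h := key i t
    rw [if_pos rfl, one_mul] at h
    change _ = (((qf i (q, pt i t)).re * w i t : ℝ) : ℂ) +
      (((qf i (q, pt i t)).im * w i t : ℝ) : ℂ) * Complex.I
    simp only []
    rw [← h]
    conv_lhs => rw [← Complex.re_add_im (qf i (q, pt i t))]
    push_cast
    ring
  · exact (cont_int (qre i q) i (hw i)).ofReal
  · exact ((cont_int (qim i q) i (hw i)).ofReal).mul_const _

lemma isOpen_QP : IsOpen {q : (ℝ × ℝ) × ℂ | q.1.1 < q.1.2 ∧ q.2 ∉ Complex.ofReal '' Icc q.1.1 q.1.2} := by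
  have e : {q : (ℝ × ℝ) × ℂ | q.1.1 < q.1.2 ∧ q.2 ∉ Complex.ofReal '' Icc q.1.1 q.1.2}
      = {q | q.1.1 < q.1.2} ∩ ({q | q.2.im ≠ 0} ∪ {q | q.2.re < q.1.1} ∪ {q | q.1.2 < q.2.re}) := by
    ext ⟨⟨a, b⟩, z⟩
    simp only [mem_ofPred_eq, mem_inter_iff, mem_union, and_congr_right_iff]
    intro _
    constructor
    · intro h
      by_contra hc
      push Not at hc
      obtain ⟨⟨h1, h2⟩, h3⟩ := hc
      exact h ⟨z.re, ⟨h2, h3⟩, Complex.ext (by simp) (by simp [h1])⟩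
    · rintro h ⟨x, hx, rfl⟩
      simp at h
      rcases h with h | h
      · linarith [hx.1]
      · linarith [hx.2]
  rw [e]
  have ca : Continuous fun q : (ℝ × ℝ) × ℂ => q.1.1 := by fun_prop
  have cb : Continuous fun q : (ℝ × ℝ) × ℂ => q.1.2 := by fun_prop
  have cr : Continuous fun q : (ℝ × ℝ) × ℂ => q.2.re := by fun_prop
  have ci : Continuous fun q : (ℝ × ℝ) × ℂ => q.2.im := by fun_prop
  exact (isOpen_lt ca cb).inter (((isOpen_ne_fun ci continuous_const).union
    (isOpen_lt cr ca)).union (isOpen_lt cb cr))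

/-- convergence of the outer functions along a filter -/
lemma omega_tendsto {d : ℕ} (i : Fin d) {ι : Type*} {l : Filter ι}
    {a b : Fin d → ℝ} {G : Fin d → ℝ → ℝ}
    {ak bk : ι → Fin d → ℝ} {Gk : ι → Fin d → ℝ → ℝ}
    (hab : ∀ j, a j < b j) (habk : ∀ k j, ak k j < bk k j)
    (hG : ∀ j, Integrable (fun x => Real.log (G j x)) (arcsineMeasure (a j) (b j)))
    (hGk : ∀ k j, Integrable (fun x => Real.log (Gk k j x)) (arcsineMeasure (ak k j) (bk k j)))
    {δ : ι → ℝ} (hδ : Tendsto δ l (𝓝 0))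
    (hb : ∀ᶠ k in l, ∀ φ : C(XX d, ℝ),
      |∑ j, ∫ t, φ (pt j t) * (uf (Gk k j) (ak k j) (bk k j) t - uf (G j) (a j) (b j) t) ∂cm|
        ≤ ‖φ‖ * δ k)
    (hak : Tendsto (fun k => ak k i) l (𝓝 (a i))) (hbk : Tendsto (fun k => bk k i) l (𝓝 (b i)))
    {z : ι → ℂ} {z0 : ℂ} (hz0 : z0 ∉ Complex.ofReal '' Icc (a i) (b i)) (hz : Tendsto z l (𝓝 z0)) :
    Tendsto (fun k => OmegaFun (ak k i) (bk k i) (Gk k i) (z k)) l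
      (𝓝 (OmegaFun (a i) (b i) (G i) z0)) := by
  classical
  have hu : ∀ j, Integrable (uf (G j) (a j) (b j)) cm := fun j => uf_int (hab j) (hG j)
  have huk : ∀ k j, Integrable (uf (Gk k j) (ak k j) (bk k j)) cm := fun k j =>
    uf_int (habk k j) (hGk k j)
  let q0 : QP := ⟨((a i, b i), z0), hab i, hz0⟩
  let v : ι → (ℝ × ℝ) × ℂ := fun k => ((ak k i, bk k i), z k)
  have hv : Tendsto v l (𝓝 ((a i, b i), z0)) := (hak.prodMk_nhds hbk).prodMk_nhds hz
  have hev : ∀ᶠ k in l, (v k).1.1 < (v k).1.2 ∧ (v k).2 ∉ Complex.ofReal '' Icc (v k).1.1 (v k).1.2 :=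
    hv.eventually (isOpen_QP.mem_nhds q0.2)
  let q : ι → QP := fun k =>
    if h : (v k).1.1 < (v k).1.2 ∧ (v k).2 ∉ Complex.ofReal '' Icc (v k).1.1 (v k).1.2
      then ⟨v k, h⟩ else q0
  have hqv : ∀ᶠ k in l, (q k).1 = v k := by
    filter_upwards [hev] with k hk
    have hqk : q k = ⟨v k, hk⟩ := dif_pos hk
    rw [hqk]
  have hq : Tendsto q l (𝓝 q0) := by
    refine tendsto_subtype_rng.mpr ?_
    refine hv.congr' ?_
    filter_upwards [hqv] with k hk using hk.symm
  have t1 := pair_tendsto huk hu hδ hb (((qre i).continuous.tendsto q0).comp hq)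
  have t2 := pair_tendsto huk hu hδ hb (((qim i).continuous.tendsto q0).comp hq)
  have t3 := (((Complex.continuous_ofReal.tendsto _).comp t1).add
    (((Complex.continuous_ofReal.tendsto _).comp t2).mul_const Complex.I))
  have t4 := (Complex.continuous_exp.tendsto _).comp t3
  have e0 := q_int i q0 hu
  rw [omega_exp (hab i) (hG i)]
  change ∫ t, wBranch (a i) (b i) z0 / (z0 - (posn (a i) (b i) (Real.cos t) : ℂ)) *
      (uf (G i) (a i) (b i) t : ℂ) ∂cm = _ at e0
  rw [e0]
  refine t4.congr' ?_
  filter_upwards [hqv] with k hk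
  rw [omega_exp (habk k i) (hGk k i)]
  have e := q_int i (q k) (huk k)
  rw [hk] at e
  change ∫ t, wBranch (ak k i) (bk k i) (z k) / (z k - (posn (ak k i) (bk k i) (Real.cos t) : ℂ)) *
      (uf (Gk k i) (ak k i) (bk k i) t : ℂ) ∂cm = _ at e
  rw [e]
  rfl

/-- Proposition 3.2: locally uniform convergence of Szegő-vector functions
under convergence of the intervals, for uniformly Szegő measures. -/
theorem szego_vector_locally_uniform_convergence
    (d : ℕ) (hd : 1 ≤ d) (A B : Fin d → ℝ) (hAB : ∀ i, A i < B i)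
    (hdisj : ∀ i j, i ≠ j → Disjoint (Set.Icc (A i) (B i)) (Set.Icc (A j) (B j)))
    (μ : Fin d → Measure ℝ)
    (hfin : ∀ i, IsFiniteMeasure (μ i))
    (hbdd : ∀ i, Bornology.IsBounded (msupp (μ i)))
    (hsub : ∀ i, Set.Icc (A i) (B i) ⊆ convHullSupp (μ i))
    -- `μ_i ∈ USz(Δ_i)`
    (hUSz : ∀ i, USzCond (μ i) (A i) (B i))
    -- intervals `Δ_{n,i} ⊆ Δ(μ_i)`, pairwise disjoint, converging to `Δ_i`
    (An Bn : ℕ → Fin d → ℝ)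
    (hABn : ∀ n i, An n i < Bn n i)
    (hdisjn : ∀ n, ∀ i j, i ≠ j →
      Disjoint (Set.Icc (An n i) (Bn n i)) (Set.Icc (An n j) (Bn n j)))
    (hsubn : ∀ n i, Set.Icc (An n i) (Bn n i) ⊆ convHullSupp (μ i))
    (hconvA : ∀ i, Tendsto (fun n => An n i) atTop (𝓝 (A i)))
    (hconvB : ∀ i, Tendsto (fun n => Bn n i) atTop (𝓝 (B i)))
    -- the Szegő vectors for `Δ⃗` and for each `Δ⃗_n`
    (g : Fin d → ℝ → ℝ) (S : Fin d → ℂ → ℂ)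
    (hS : IsSzegoVector d A B (fun i => vDens (μ i) (A i) (B i)) g S)
    (gn : ℕ → Fin d → ℝ → ℝ) (Sn : ℕ → Fin d → ℂ → ℂ)
    (hSn : ∀ n, IsSzegoVector d (An n) (Bn n)
      (fun i => vDens (μ i) (An n i) (Bn n i)) (gn n) (Sn n)) :
    ∀ i, TendstoLocallyUniformlyOn (fun n z => Sn n i z) (S i) atTop
      (Complex.ofReal '' Set.Icc (A i) (B i))ᶜ := by
  obtain ⟨δ, hδ, hb⟩ := weak_conv d A B hAB hdisj μ hUSz An Bn hABn hdisjn hsubn hconvA hconvB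
    g S hS gn Sn hSn
  intro i
  rw [tendstoLocallyUniformlyOn_iff_filter]
  intro z0 hz0
  rw [tendstoUniformlyOnFilter_iff_tendsto]
  have hz : Tendsto (fun x : ℕ × ℂ => x.2) (atTop ×ˢ 𝓝[(Complex.ofReal '' Set.Icc (A i) (B i))ᶜ] z0)
      (𝓝 z0) := tendsto_snd.mono_right nhdsWithin_le_nhds
  have hn : Tendsto (fun x : ℕ × ℂ => x.1)
      (atTop ×ˢ 𝓝[(Complex.ofReal '' Set.Icc (A i) (B i))ᶜ] z0) atTop := tendsto_fst
  have h1 := omega_tendsto i (ak := fun x : ℕ × ℂ => An x.1) (bk := fun x => Bn x.1)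
    (Gk := fun x => gn x.1) hAB (fun x => hABn x.1) hS.2.1 (fun x => (hSn x.1).2.1)
    (hδ.comp hn) (hn.eventually hb) ((hconvA i).comp hn) ((hconvB i).comp hn) hz0 hz
  have h2 := omega_tendsto i (ak := fun _ : ℕ × ℂ => A) (bk := fun _ => B)
    (Gk := fun _ => g) hAB (fun _ => hAB) hS.2.1 (fun _ => hS.2.1)
    (δ := fun _ => 0) tendsto_const_nhds (Eventually.of_forall fun x φ => by simp)
    tendsto_const_nhds tendsto_const_nhds hz0 hz
  refine ((h2.prodMk_nhds h1).mono_right (nhds_le_uniformity _)).congr fun x => ?_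
  rw [hS.2.2.1 i, (hSn x.1).2.2.1 i]

end
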